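/- arXiv:math/0012217 — 7 statements merged into one kernel-verified Lean document; each statement's English description precedes it below -/
import Mathlib

section
/- Let G be a finite non-abelian simple group, let H be a non-abelian simple subgroup of G, and suppose there is a group homomorphism j : Aut(H) → Aut(G) such that j(c_h) = c_{h} for every h ∈ H, where c_h denotes conjugation by h (as an automorphism of H on the left side and as an automorphism of G on the right side, h being regarded as an element of G). Then every automorphism α of H extends to an automorphism of G; precisely, for every α ∈ Aut(H) and every h ∈ H one has j(α)(h) = α(h) (where on the left h and on the right α(h) are regarded as elements of G). -/
/-- If `G` is a finite non-abelian simple group, `H` a non-abelian simple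
subgroup, and `j : Aut(H) →* Aut(G)` satisfies `j(c_h) = c_h` for all `h ∈ H`, then
every automorphism `α` of `H` extends to `G`: `j(α)(h) = α(h)` for all `h ∈ H`. -/
theorem statement0 (G : Type*) [Group G] [Finite G] [IsSimpleGroup G]
    (hG : ¬ ∀ a b : G, a * b = b * a)
    (H : Subgroup G) [IsSimpleGroup H]
    (hH : ¬ ∀ a b : H, a * b = b * a)
    (j : MulAut H →* MulAut G)
    (hj : ∀ h : H, j (MulAut.conj h) = MulAut.conj (h : G)) :
    ∀ (α : MulAut H) (h : H), j α (h : G) = ((α h : H) : G) := by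
  intro α h
  have hc : Subgroup.center G = ⊥ := by
    rcases (inferInstance : (Subgroup.center G).Normal).eq_bot_or_eq_top with h1 | h1
    · exact h1
    · exfalso
      apply hG
      intro a b
      have hb : a ∈ Subgroup.center G := by rw [h1]; trivial
      exact (Subgroup.mem_center_iff.mp hb b).symm
  have e1 : MulAut.conj (α h) = α * MulAut.conj h * α⁻¹ := by
    ext x
    simp [MulAut.mul_apply]
  have e2 : MulAut.conj (j α (h : G)) = j α * MulAut.conj (h : G) * (j α)⁻¹ := by
    ext x
    simp [MulAut.mul_apply]
  have e3 : MulAut.conj (j α (h : G)) = MulAut.conj ((α h : H) : G) := by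
    rw [e2, ← hj, ← hj, e1, map_mul, map_mul, map_inv]
  have hm : (((α h : H) : G))⁻¹ * j α (h : G) ∈ Subgroup.center G := by
    rw [Subgroup.mem_center_iff]
    intro g
    have h4 : MulAut.conj ((((α h : H) : G))⁻¹ * j α (h : G)) = 1 := by
      rw [map_mul, e3, map_inv, inv_mul_cancel]
    have h5 := DFunLike.congr_fun h4 g
    rw [MulAut.conj_apply, MulAut.one_apply, mul_inv_eq_iff_eq_mul] at h5
    exact h5.symm
  rw [hc, Subgroup.mem_bot, inv_mul_eq_one] at hm
  exact hm.symm
end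

section
/- Let H be a non-abelian simple subgroup of a finite non-abelian simple group G and let i : H ↪ G be the inclusion. Then i is a localization if and only if the following three conditions hold: (1) there exists an injective group homomorphism j : Aut(H) → Aut(G) such that j(c_h) = c_h for every h ∈ H; (2) for every subgroup H' of G that is isomorphic (as a group) to H, there exists an automorphism α of G with α(H) = H'; (3) the only automorphism of G fixing every element of H is the identity. -/
/-- A group homomorphism `φ : H →* G` is a localization if precomposition with `φ`
induces a bijection `Hom(G,G) ≃ Hom(H,G)`. -/
def IsLocalizationHom {H G : Type*} [Group H] [Group G] (φ : H →* G) : Prop :=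
  Function.Bijective fun ψ : G →* G => ψ.comp φ

theorem hom_triv_or_inj {A B : Type*} [Group A] [Group B] [IsSimpleGroup A] (f : A →* B) :
    f = 1 ∨ Function.Injective f := by
  rcases (inferInstance : f.ker.Normal).eq_bot_or_eq_top with h | h
  · right; exact (MonoidHom.ker_eq_bot_iff f).1 h
  · left; ext x
    have : x ∈ f.ker := h ▸ Subgroup.mem_top x
    simpa using this

theorem conj_inj_of_simple {G : Type*} [Group G] [IsSimpleGroup G]
    (hG : ¬ ∀ a b : G, a * b = b * a) :
    Function.Injective (MulAut.conj : G →* MulAut G) := by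
  rcases hom_triv_or_inj (MulAut.conj : G →* MulAut G) with h | h
  · exfalso; apply hG
    intro a b
    have := DFunLike.congr_fun (DFunLike.congr_fun h a) b
    simp only [MulAut.conj_apply, MonoidHom.one_apply, MulAut.one_apply] at this
    exact mul_inv_eq_iff_eq_mul.1 this
  · exact h

/-- Extension of an injective hom to an automorphism. -/
theorem extend_aut {G : Type*} [Group G] [Finite G] [IsSimpleGroup G]
    (H : Subgroup G) [IsSimpleGroup H] (hl : IsLocalizationHom H.subtype)
    (f : H →* G) (hf : Function.Injective f) : ∃ α : MulAut G, ∀ h : H, α h = f h := by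
  obtain ⟨ψ, hψ⟩ := hl.2 f
  have hψ' : ∀ h : H, ψ h = f h := fun h => DFunLike.congr_fun hψ h
  rcases hom_triv_or_inj ψ with h | h
  · exfalso
    obtain ⟨x, hx⟩ := exists_ne (1 : H)
    apply hx; apply hf
    rw [← hψ', h]; simp
  · exact ⟨MulEquiv.ofBijective ψ (Finite.injective_iff_bijective.1 h), fun h => hψ' h⟩

theorem aut_unique {G : Type*} [Group G] (H : Subgroup G) (hl : IsLocalizationHom H.subtype)
    (α β : MulAut G) (h : ∀ x : H, α x = β x) : α = β := by
  have : α.toMonoidHom = β.toMonoidHom := by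
    apply hl.1
    ext x
    exact h x
  ext x
  exact DFunLike.congr_fun this x

/-- For a non-abelian simple subgroup `H` of a finite non-abelian simple
group `G`, the inclusion `H ↪ G` is a localization iff (1) there is an injective
homomorphism `j : Aut(H) →* Aut(G)` with `j(c_h) = c_h` for all `h ∈ H`; (2) every
subgroup of `G` isomorphic to `H` is the image of `H` under some automorphism of `G`;
(3) the only automorphism of `G` fixing `H` pointwise is the identity. -/
theorem statement2 (G : Type*) [Group G] [Finite G] [IsSimpleGroup G]
    (hG : ¬ ∀ a b : G, a * b = b * a)
    (H : Subgroup G) [IsSimpleGroup H]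
    (hH : ¬ ∀ a b : H, a * b = b * a) :
    IsLocalizationHom H.subtype ↔
      ((∃ j : MulAut H →* MulAut G, Function.Injective j ∧
          ∀ h : H, j (MulAut.conj h) = MulAut.conj (h : G)) ∧
       (∀ H' : Subgroup G, Nonempty (H' ≃* H) →
          ∃ α : MulAut G, H.map α.toMonoidHom = H') ∧
       (∀ β : MulAut G, (∀ h ∈ H, β h = h) → β = 1)) := by
  constructor
  · intro hl
    refine ⟨?_, ?_, ?_⟩
    · have key : ∀ a : MulAut H, ∃ α : MulAut G, ∀ h : H, α h = (a h : H) := fun a =>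
        extend_aut H hl (H.subtype.comp a.toMonoidHom)
          (H.subtype_injective.comp a.injective)
      choose j hj using key
      refine ⟨MonoidHom.mk' j ?_, ?_, ?_⟩
      · intro a b
        apply aut_unique H hl
        intro x
        rw [hj, MulAut.mul_apply, MulAut.mul_apply, hj, hj]
      · intro a b hab
        have hab' : j a = j b := hab
        ext x
        rw [← hj, ← hj, hab']
      · intro h
        apply aut_unique H hl
        intro x
        change j _ _ = _
        rw [hj]
        simp
    · rintro H' ⟨e⟩
      obtain ⟨α, hα⟩ := extend_aut H hl (H'.subtype.comp e.symm.toMonoidHom)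
        (H'.subtype_injective.comp e.symm.injective)
      refine ⟨α, ?_⟩
      ext y
      constructor
      · rintro ⟨x, hx, rfl⟩
        have := hα ⟨x, hx⟩
        change α x ∈ H'
        rw [show α x = _ from this]
        exact (e.symm ⟨x, hx⟩).2
      · intro hy
        refine ⟨(e ⟨y, hy⟩ : H), (e ⟨y, hy⟩).2, ?_⟩
        refine (hα (e ⟨y, hy⟩)).trans ?_
        simp
    · intro β hβ
      apply aut_unique H hl
      intro x
      exact hβ x x.2
  · rintro ⟨⟨j, -, hj⟩, h2, h3⟩
    constructor
    · intro f g hfg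
      have hfg' : ∀ h : H, f h = g h := fun h => DFunLike.congr_fun hfg h
      obtain ⟨x, hx⟩ := exists_ne (1 : H)
      have hx' : (x : G) ≠ 1 := fun h => hx (Subtype.ext h)
      rcases hom_triv_or_inj f with hf | hf <;> rcases hom_triv_or_inj g with hg | hg
      · rw [hf, hg]
      · exact absurd (hg (by rw [← hfg', hf]; simp)) hx'
      · exact absurd (hf (by rw [hfg', hg]; simp)) hx'
      · let F : MulAut G := MulEquiv.ofBijective f (Finite.injective_iff_bijective.1 hf)
        let K : MulAut G := MulEquiv.ofBijective g (Finite.injective_iff_bijective.1 hg)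
        have hFK : K⁻¹ * F = 1 := by
          apply h3
          intro h hh
          change K.symm (F h) = h
          rw [MulEquiv.symm_apply_eq]
          exact hfg' ⟨h, hh⟩
        have hFK' : K = F := inv_mul_eq_one.1 hFK
        ext y
        exact (DFunLike.congr_fun hFK' y).symm
    · intro f
      rcases hom_triv_or_inj f with hf | hf
      · exact ⟨1, by rw [hf]; rfl⟩
      · obtain ⟨α, hα⟩ := h2 f.range ⟨(MonoidHom.ofInjective hf).symm⟩
        have hmem : ∀ h : H, α.symm (f h) ∈ H := by
          intro h
          have : f h ∈ H.map α.toMonoidHom := hα ▸ ⟨h, rfl⟩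
          obtain ⟨y, hy, hy'⟩ := this
          rw [← hy']
          change α.symm (α y) ∈ H
          simpa using hy
        let b0 : H →* H := (α.symm.toMonoidHom.comp f).codRestrict H hmem
        have hb0 : Function.Injective b0 := by
          intro x y hxy
          apply hf
          apply α.symm.injective
          exact congrArg Subtype.val hxy
        let b : MulAut H := MulEquiv.ofBijective b0 (Finite.injective_iff_bijective.1 hb0)
        have hb : ∀ h : H, ((b h : H) : G) = α.symm (f h) := fun h => rfl
        have hjb : ∀ h : H, j b h = (b h : H) := by
          intro h
          apply conj_inj_of_simple hG
          rw [← hj]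
          have e1 : (MulAut.conj (b h) : MulAut H) = b * MulAut.conj h * b⁻¹ := by
            ext x
            simp
          rw [e1, map_mul, map_mul, hj, map_inv]
          ext x
          simp
        refine ⟨(α * j b).toMonoidHom, ?_⟩
        ext h
        change α (j b h) = f h
        rw [hjb, hb]
        simp
end

section
/- Let H be a non-abelian simple subgroup of a finite non-abelian simple group G, and assume that both H and G are complete groups (trivial center and every automorphism inner). Then the inclusion i : H ↪ G is a localization if and only if: (1) every subgroup of G isomorphic to H is conjugate to H by an element of G; and (2) the centralizer C_G(H) is trivial. -/
theorem hom_cases {K G : Type*} [Group K] [Group G] [IsSimpleGroup K] (f : K →* G) :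
    f = 1 ∨ Function.Injective f := by
  rcases (inferInstance : f.ker.Normal).eq_bot_or_eq_top with h | h
  · exact Or.inr ((MonoidHom.ker_eq_bot_iff f).1 h)
  · left
    ext x
    have : x ∈ f.ker := by rw [h]; trivial
    exact this

theorem endo_cases {G : Type*} [Group G] [Finite G] [IsSimpleGroup G]
    (hc : ∀ α : MulAut G, ∃ g : G, α = MulAut.conj g) (f : G →* G) :
    f = 1 ∨ ∃ g : G, ∀ x, f x = g * x * g⁻¹ := by
  rcases hom_cases f with h | h
  · exact Or.inl h
  · right
    obtain ⟨g, hg⟩ := hc (MulEquiv.ofBijective f (Finite.injective_iff_bijective.1 h))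
    refine ⟨g, fun x => ?_⟩
    have := DFunLike.congr_fun hg x
    simpa using this

/-- If `H` is a non-abelian simple subgroup of a finite non-abelian simple
group `G` and both `H` and `G` are complete (trivial centre, all automorphisms inner),
then the inclusion is a localization iff every subgroup of `G` isomorphic to `H` is
conjugate to `H` in `G` and `C_G(H) = 1`. -/
theorem statement4 (G : Type*) [Group G] [Finite G] [IsSimpleGroup G]
    (hG : ¬ ∀ a b : G, a * b = b * a)
    (H : Subgroup G) [IsSimpleGroup H]
    (hH : ¬ ∀ a b : H, a * b = b * a)
    (hHcomplete : Subgroup.center H = ⊥ ∧ ∀ α : MulAut H, ∃ h : H, α = MulAut.conj h)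
    (hGcomplete : Subgroup.center G = ⊥ ∧ ∀ α : MulAut G, ∃ g : G, α = MulAut.conj g) :
    IsLocalizationHom H.subtype ↔
      ((∀ H' : Subgroup G, Nonempty (H' ≃* H) →
          ∃ g : G, H.map (MulAut.conj g).toMonoidHom = H') ∧
       Subgroup.centralizer (H : Set G) = ⊥) := by
  obtain ⟨x0, hx0⟩ := exists_ne (1 : H)
  have hx0' : (x0 : G) ≠ 1 := fun h => hx0 (Subtype.ext h)
  constructor
  · intro hloc
    constructor
    · rintro H' ⟨e⟩
      obtain ⟨ψ, hψ⟩ := hloc.2 (H'.subtype.comp e.symm.toMonoidHom)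
      have hψ' : ∀ x : H, ψ x = (e.symm x : G) := fun x => DFunLike.congr_fun hψ x
      rcases endo_cases hGcomplete.2 ψ with h | ⟨g, hg⟩
      · exfalso
        have h1 := hψ' x0
        rw [h] at h1
        have h2 : e.symm x0 = 1 := Subtype.ext h1.symm
        exact hx0 (by simpa using h2)
      · refine ⟨g, ?_⟩
        ext y
        constructor
        · rintro ⟨x, hx, rfl⟩
          have h1 := hψ' ⟨x, hx⟩
          rw [hg] at h1
          have : g * x * g⁻¹ ∈ H' := by
            rw [h1]; exact (e.symm ⟨x, hx⟩).2
          simpa using this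
        · intro hy
          refine ⟨(e ⟨y, hy⟩ : H), (e ⟨y, hy⟩).2, ?_⟩
          have h1 := hψ' (e ⟨y, hy⟩)
          rw [hg] at h1
          simpa using h1
    · rw [eq_bot_iff]
      intro c hc
      have h1 : (MulAut.conj c).toMonoidHom = MonoidHom.id G := by
        apply hloc.1
        ext x
        have := Subgroup.mem_centralizer_iff.1 hc x x.2
        simp [← this]
      rw [← hGcomplete.1, Subgroup.mem_center_iff]
      intro y
      have h2 : c * y * c⁻¹ = y := by simpa using DFunLike.congr_fun h1 y
      exact (mul_inv_eq_iff_eq_mul.1 h2).symm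
  · rintro ⟨hconj, hcent⟩
    constructor
    · intro ψ₁ ψ₂ h
      have h' : ∀ x : H, ψ₁ x = ψ₂ x := fun x => DFunLike.congr_fun h x
      rcases endo_cases hGcomplete.2 ψ₁ with h1 | ⟨a, ha⟩ <;>
      rcases endo_cases hGcomplete.2 ψ₂ with h2 | ⟨b, hb⟩
      · rw [h1, h2]
      · have := h' x0
        rw [hb, h1] at this
        exact absurd (conj_eq_one_iff.1 this.symm) hx0'
      · have := h' x0
        rw [ha, h2] at this
        exact absurd (conj_eq_one_iff.1 this) hx0'
      · have hm : b⁻¹ * a ∈ Subgroup.centralizer (H : Set G) := by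
          rw [Subgroup.mem_centralizer_iff]
          intro x hx
          have h3 := h' ⟨x, hx⟩
          rw [ha, hb] at h3
          simp only at h3
          have h4 : a * x = b * x * b⁻¹ * a := mul_inv_eq_iff_eq_mul.1 h3
          rw [mul_assoc b⁻¹, h4]
          group
        rw [hcent, Subgroup.mem_bot, inv_mul_eq_one] at hm
        ext x
        rw [ha, hb, hm]
    · intro f
      rcases hom_cases f with h | h
      · exact ⟨1, by rw [h]; rfl⟩
      · obtain ⟨g, hg⟩ := hconj f.range ⟨(MonoidHom.ofInjective h).symm⟩
        have hmem : ∀ x : H, g⁻¹ * f x * g ∈ H := by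
          intro x
          have : f x ∈ f.range := ⟨x, rfl⟩
          rw [← hg] at this
          obtain ⟨y, hy, hyx⟩ := this
          have h5 : g * y * g⁻¹ = f x := by simpa using hyx
          rw [← h5]
          simpa [mul_assoc] using hy
        let α : H →* H := 
          { toFun := fun x => ⟨g⁻¹ * f x * g, hmem x⟩
            map_one' := by ext; simp
            map_mul' := fun x y => by ext; simp [mul_assoc] }
        have hα : Function.Injective α := by
          intro x y hxy
          have h6 : g⁻¹ * f x * g = g⁻¹ * f y * g := congrArg Subtype.val hxy
          exact h (mul_left_cancel (mul_right_cancel h6))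
        obtain ⟨k, hk⟩ := hHcomplete.2
          (MulEquiv.ofBijective α (Finite.injective_iff_bijective.1 hα))
        refine ⟨(MulAut.conj (g * k)).toMonoidHom, ?_⟩
        ext x
        have h7 : g⁻¹ * f x * g = k * x * (k : G)⁻¹ := 
          congrArg Subtype.val (DFunLike.congr_fun hk x)
        have h8 : f x = g * (g⁻¹ * f x * g) * g⁻¹ := by group
        rw [h8, h7]
        simp [mul_assoc]
end

section
/- Let H be a non-abelian simple subgroup of a finite non-abelian simple group G, and assume H is a maximal subgroup of G. Then the inclusion i : H ↪ G is a localization if and only if the following three conditions hold: (1) there exists an injective group homomorphism j : Aut(H) → Aut(G) such that j(c_h) = c_h for every h ∈ H; (2) for every subgroup H' of G isomorphic to H, there exists an automorphism α of G with α(H) = H'; (3) the number n of conjugacy classes of subgroups of G isomorphic to H satisfies n · |Aut(H)| · |G| = |Aut(G)| · |H| (that is, n = |Out(G)|/|Out(H)|, since for a group X with trivial center |Out(X)| = |Aut(X)|/|X|). -/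
open scoped Pointwise

namespace S6

variable {G : Type*} [Group G]

abbrev X (H : Subgroup G) := {K : Subgroup G // Nonempty (K ≃* H)}

abbrev Inj (H : Subgroup G) := {f : H →* G // Function.Injective f}

abbrev R (H : Subgroup G) : Setoid (X H) :=
  Setoid.comap (Subtype.val : X H → Subgroup G) (MulAction.orbitRel (ConjAct G) (Subgroup G))

lemma card_inj (H : Subgroup G) : Nat.card (Inj H) = Nat.card (X H) * Nat.card (MulAut H) := by
  rw [← Nat.card_prod]
  refine (Nat.card_congr (Equiv.ofBijective
    (fun p : X H × MulAut H => (⟨(p.1.1.subtype).comp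
      (p.2.trans (Classical.choice p.1.2).symm).toMonoidHom, ?_⟩ : Inj H)) ⟨?_, ?_⟩)).symm
  · intro a b hab
    exact (p.2.trans (Classical.choice p.1.2).symm).injective (Subtype.ext hab)
  · rintro ⟨K, a⟩ ⟨K', a'⟩ h
    have h1 : ∀ x, (((Classical.choice K.2).symm (a x) : K.1) : G)
        = ((Classical.choice K'.2).symm (a' x) : K'.1) := fun x =>
      DFunLike.congr_fun (congrArg Subtype.val h) x
    have hK : K = K' := by
      apply Subtype.ext
      apply le_antisymm
      · intro y hy
        have := h1 (a.symm (Classical.choice K.2 ⟨y, hy⟩))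
        simp only [MulEquiv.apply_symm_apply, MulEquiv.symm_apply_apply] at this
        rw [this]; exact Subtype.prop _
      · intro y hy
        have := h1 (a'.symm (Classical.choice K'.2 ⟨y, hy⟩))
        simp only [MulEquiv.apply_symm_apply, MulEquiv.symm_apply_apply] at this
        rw [← this]; exact Subtype.prop _
    subst hK
    congr 1
    ext x
    have := (Classical.choice K.2).symm.injective (Subtype.ext (h1 x))
    rw [this]
  · rintro ⟨f, hf⟩
    let e := MonoidHom.ofInjective hf
    refine ⟨(⟨f.range, ⟨e.symm⟩⟩, e.trans (Classical.choice (⟨e.symm⟩ : Nonempty (f.range ≃* H)))), ?_⟩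
    apply Subtype.ext
    ext x
    simp [e]
    rfl

lemma normalizer_eq [IsSimpleGroup G] (K : Subgroup G) (hK : IsCoatom K) (hb : K ≠ ⊥) :
    Subgroup.normalizer (K : Set G) = K := by
  rcases hK.le_iff.1 (Subgroup.le_normalizer (H := K)) with h | h
  · have : K.Normal := Subgroup.normalizer_eq_top_iff.1 h
    rcases this.eq_bot_or_eq_top with h | h
    · exact absurd h hb
    · exact absurd h hK.1
  · exact h

lemma card_stab (K : Subgroup G) :
    Nat.card (MulAction.stabilizer (ConjAct G) K) = Nat.card (Subgroup.normalizer (K : Set G)) := by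
  refine Nat.card_congr (ConjAct.ofConjAct.toEquiv.subtypeEquiv fun g => ?_)
  rw [MulAction.mem_stabilizer_iff, Subgroup.mem_normalizer_iff]
  constructor
  · intro h x
    have : g • x ∈ g • K ↔ x ∈ K := Subgroup.smul_mem_pointwise_smul_iff
    rw [h, ConjAct.smul_def] at this
    exact this.symm
  · intro h
    ext x
    rw [Subgroup.mem_pointwise_smul_iff_inv_smul_mem]
    have := h (g⁻¹ • x)
    rw [this]
    simp [ConjAct.smul_def, mul_assoc]

lemma card_orbit [Finite G] (K : Subgroup G) (hK : Subgroup.normalizer (K : Set G) = K) :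
    Nat.card (MulAction.orbit (ConjAct G) K) * Nat.card K = Nat.card G := by
  have h := card_stab K
  rw [hK] at h
  rw [← h, ← Nat.card_prod]
  exact Nat.card_congr (MulAction.orbitProdStabilizerEquivGroup (ConjAct G) K)

lemma card_X [Finite G] [IsSimpleGroup G] (H : Subgroup G) [IsSimpleGroup H]
    (hmax : IsCoatom H)
    (h2 : ∀ H' : Subgroup G, Nonempty (H' ≃* H) →
          ∃ α : MulAut G, H.map α.toMonoidHom = H') :
    Nat.card (X H) * Nat.card H = Nat.card (Quotient (R H)) * Nat.card G := by
  have key : ∀ q : Quotient (R H), Nat.card ({x : X H // Quotient.mk (R H) x = q} × H) = Nat.card G := by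
    intro q
    induction q using Quotient.inductionOn with | _ K
    have hb : K.1 ≠ ⊥ := by
      obtain ⟨e⟩ := K.2
      rw [← Subgroup.nontrivial_iff_ne_bot]
      exact e.toEquiv.nontrivial
    have hc : IsCoatom K.1 := by
      obtain ⟨α, hα⟩ := h2 K.1 K.2
      rw [← hα]
      exact (OrderIso.isCoatom_iff (MulEquiv.mapSubgroup α) H).2 hmax
    rw [Nat.card_prod, ← card_orbit K.1 (normalizer_eq K.1 hc hb),
      ← Nat.card_congr (Classical.choice K.2).toEquiv]
    congr 1
    refine Nat.card_congr ⟨fun x => ⟨x.1.1, ?_⟩, fun y => ⟨⟨y.1, ?_⟩, ?_⟩, fun _ => rfl, fun _ => rfl⟩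
    · exact Quotient.exact x.2
    · obtain ⟨y, g, rfl⟩ := y
      exact ⟨(Subgroup.equivSMul g K.1).symm.trans (Classical.choice K.2)⟩
    · exact Quotient.sound y.2
  rw [← Nat.card_prod, ← Nat.card_prod]
  refine Nat.card_congr ?_
  refine (Equiv.prodCongr (Equiv.sigmaFiberEquiv (Quotient.mk (R H))).symm (Equiv.refl H)).trans ?_
  refine (Equiv.sigmaProdDistrib _ _).trans ?_
  refine (Equiv.sigmaCongrRight fun q => ?_).trans (Equiv.sigmaEquivProd _ _)
  exact (Finite.equivFin _).trans ((finCongr (key q)).trans (Finite.equivFin _).symm)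

def res (H : Subgroup G) (α : MulAut G) : Inj H :=
  ⟨α.toMonoidHom.comp H.subtype, fun _ _ h => Subtype.ext (α.injective h)⟩

lemma simple_inj {A B : Type*} [Group A] [Group B] [IsSimpleGroup A] (f : A →* B) :
    f = 1 ∨ Function.Injective f := by
  rcases (inferInstance : f.ker.Normal).eq_bot_or_eq_top with h | h
  · exact .inr ((MonoidHom.ker_eq_bot_iff f).1 h)
  · left; ext x
    have : x ∈ f.ker := h ▸ Subgroup.mem_top x
    exact this

lemma exists_aut [Finite G] (f : G →* G) (hf : Function.Injective f) :
    ∃ α : MulAut G, α.toMonoidHom = f :=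
  ⟨MulEquiv.ofBijective f ⟨hf, Finite.surjective_of_injective hf⟩, rfl⟩

lemma ne_one (H : Subgroup G) [Nontrivial H] (f : H →* G) (hf : Function.Injective f) : f ≠ 1 := by
  rintro rfl
  obtain ⟨x, hx⟩ := exists_ne (1 : H)
  exact hx (hf (by simp))

lemma loc_iff [Finite G] [IsSimpleGroup G] (H : Subgroup G) [IsSimpleGroup H] :
    IsLocalizationHom H.subtype ↔ Function.Bijective (res H) := by
  constructor
  · rintro ⟨hi, hs⟩
    constructor
    · intro α β h
      have := hi (congrArg Subtype.val h : α.toMonoidHom.comp H.subtype = β.toMonoidHom.comp H.subtype)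
      ext x
      exact DFunLike.congr_fun this x
    · rintro ⟨f, hf⟩
      obtain ⟨ψ, rfl⟩ := hs f
      rcases simple_inj ψ with rfl | h
      · exact absurd (by ext; simp) (ne_one H _ hf)
      · obtain ⟨α, rfl⟩ := exists_aut ψ h
        exact ⟨α, rfl⟩
  · rintro ⟨hi, hs⟩
    constructor
    · intro ψ ψ' h
      simp only at h
      have aux : ∀ a : G →* G, Function.Injective a → (1 : G →* G).comp H.subtype = a.comp H.subtype → False := by
        intro a ha h
        refine ne_one H (a.comp H.subtype) (ha.comp Subtype.val_injective) ?_
        rw [← h]; ext; simp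
      rcases simple_inj ψ with rfl | h1 <;> rcases simple_inj ψ' with rfl | h2
      · rfl
      · exact (aux _ h2 h).elim
      · exact (aux _ h1 h.symm).elim
      · obtain ⟨α, rfl⟩ := exists_aut ψ h1
        obtain ⟨β, rfl⟩ := exists_aut ψ' h2
        rw [hi (Subtype.ext h : res H α = res H β)]
    · intro f
      rcases simple_inj f with rfl | h
      · exact ⟨1, by ext; simp⟩
      · obtain ⟨α, hα⟩ := hs ⟨f, h⟩
        exact ⟨α.toMonoidHom, congrArg Subtype.val hα⟩

lemma conj_inj [IsSimpleGroup G] (hG : ¬ ∀ a b : G, a * b = b * a) :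
    Function.Injective (MulAut.conj : G →* MulAut G) := by
  rcases simple_inj (MulAut.conj : G →* MulAut G) with h | h
  · refine absurd (fun a b => ?_) hG
    have := DFunLike.congr_fun (DFunLike.congr_fun h a) b
    simpa [mul_inv_eq_iff_eq_mul] using this
  · exact h

end S6

open S6 in
/-- For a non-abelian simple *maximal* subgroup `H` of a finite
non-abelian simple group `G`, the inclusion is a localization iff (1) there is an
injective homomorphism `j : Aut(H) →* Aut(G)` with `j(c_h) = c_h`; (2) every subgroup
of `G` isomorphic to `H` is the image of `H` under an automorphism of `G`; (3) the
number `n` of conjugacy classes of subgroups of `G` isomorphic to `H` satisfies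
`n · |Aut H| · |G| = |Aut G| · |H|`. -/
theorem statement6 (G : Type*) [Group G] [Finite G] [IsSimpleGroup G]
    (hG : ¬ ∀ a b : G, a * b = b * a)
    (H : Subgroup G) [IsSimpleGroup H]
    (hH : ¬ ∀ a b : H, a * b = b * a)
    (hmax : IsCoatom H) :
    IsLocalizationHom H.subtype ↔
      ((∃ j : MulAut H →* MulAut G, Function.Injective j ∧
          ∀ h : H, j (MulAut.conj h) = MulAut.conj (h : G)) ∧
       (∀ H' : Subgroup G, Nonempty (H' ≃* H) →
          ∃ α : MulAut G, H.map α.toMonoidHom = H') ∧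
       Nat.card (Quotient (Setoid.comap
            (Subtype.val : {K : Subgroup G // Nonempty (K ≃* H)} → Subgroup G)
            (MulAction.orbitRel (ConjAct G) (Subgroup G)))) *
          Nat.card (MulAut H) * Nat.card G
        = Nat.card (MulAut G) * Nat.card H) := by
  have fX : Finite (Inj H) := Finite.of_injective
    (fun f : Inj H => (f.1 : H → G)) (fun f g h => Subtype.ext (DFunLike.coe_injective h))
  have eq3 : (∀ H' : Subgroup G, Nonempty (H' ≃* H) →
          ∃ α : MulAut G, H.map α.toMonoidHom = H') →
      (Nat.card (Quotient (R H)) * Nat.card (MulAut H) * Nat.card G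
        = Nat.card (MulAut G) * Nat.card H ↔ Nat.card (MulAut G) = Nat.card (Inj H)) := by
    intro h2
    have hX := card_X H hmax h2
    have hpos : 0 < Nat.card H := Nat.card_pos
    rw [card_inj, mul_right_comm, ← hX, mul_right_comm, Nat.mul_left_inj hpos.ne']
    exact eq_comm
  rw [loc_iff]
  constructor
  · intro hb
    have h2 : ∀ H' : Subgroup G, Nonempty (H' ≃* H) →
          ∃ α : MulAut G, H.map α.toMonoidHom = H' := by
      rintro H' ⟨e⟩
      obtain ⟨α, hα⟩ := hb.2 ⟨H'.subtype.comp e.symm.toMonoidHom,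
        fun a b h => e.symm.injective (Subtype.ext h)⟩
      refine ⟨α, ?_⟩
      have hα' : α.toMonoidHom.comp H.subtype = H'.subtype.comp e.symm.toMonoidHom :=
        congrArg Subtype.val hα
      have := congrArg MonoidHom.range hα'
      rw [MonoidHom.range_comp, MonoidHom.range_comp, Subgroup.range_subtype] at this
      rw [this, MonoidHom.range_eq_top.2 e.symm.surjective, ← MonoidHom.range_eq_map,
        Subgroup.range_subtype]
    refine ⟨?_, h2, (eq3 h2).2 (Nat.card_congr (Equiv.ofBijective _ hb))⟩
    have hex : ∀ β : MulAut H, ∃ α : MulAut G, ∀ h : H, α h = (β h : G) := by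
      intro β
      obtain ⟨α, hα⟩ := hb.2 ⟨H.subtype.comp β.toMonoidHom,
        fun a b h => β.injective (Subtype.ext h)⟩
      exact ⟨α, fun h => DFunLike.congr_fun (congrArg Subtype.val hα) h⟩
    have huniq : ∀ α α' : MulAut G, (∀ h : H, α h = α' h) → α = α' := by
      intro α α' h
      exact hb.1 (Subtype.ext (MonoidHom.ext h))
    choose j hj using hex
    refine ⟨MonoidHom.mk' j ?_, ?_, ?_⟩
    · intro a b
      apply huniq
      intro h
      rw [hj, MulAut.mul_apply, MulAut.mul_apply, hj, hj]
    · intro a b hab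
      ext h
      have hab' : j a = j b := hab
      rw [← hj, ← hj, hab']
    · intro h
      apply huniq
      intro x
      exact hj _ x
  · rintro ⟨⟨j, -, hj⟩, h2, h3⟩
    have hcard := (eq3 h2).1 h3
    have hs : Function.Surjective (res H) := by
      rintro ⟨f, hf⟩
      obtain ⟨α, hα⟩ := h2 f.range ⟨(MonoidHom.ofInjective hf).symm⟩
      have hm : ∀ x, α.symm (f x) ∈ H := by
        intro x
        have : f x ∈ H.map α.toMonoidHom := hα ▸ ⟨x, rfl⟩
        obtain ⟨y, hy, hyx⟩ := this
        rw [← hyx]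
        change α.symm (α y) ∈ H
        rwa [MulEquiv.symm_apply_apply]
      let b : H →* H := (α.symm.toMonoidHom.comp f).codRestrict H hm
      have hbi : Function.Injective b := by
        intro x y hxy
        exact hf (α.symm.injective (congrArg Subtype.val hxy))
      let β : MulAut H := MulEquiv.ofBijective b ⟨hbi, Finite.surjective_of_injective hbi⟩
      have hβ : ∀ h : H, j β h = (β h : G) := by
        intro h
        apply conj_inj hG
        rw [← hj]
        have e1 : MulAut.conj (β h) = β * MulAut.conj h * β⁻¹ := by
          ext x
          simp [MulAut.mul_apply]
        rw [e1, map_mul, map_mul, hj, map_inv]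
        ext x
        simp [MulAut.mul_apply]
      refine ⟨α * j β, Subtype.ext (MonoidHom.ext fun x => ?_)⟩
      change α (j β x) = f x
      rw [hβ]
      change α (α.symm (f x)) = f x
      simp
    exact (Nat.bijective_iff_surjective_and_card _).2 ⟨hs, hcard⟩
end

section
/- Let H be a non-abelian finite simple group and K a maximal subgroup of H of index n ≥ 7. Suppose that: (1) every proper subgroup of H has order at most |K|; and (2) every subgroup of H of index n is conjugate to K. Then the permutation representation of H on the left cosets H/K, which is injective and takes values in the alternating group on the n-element set H/K, is a localization H ↪ A_n. -/
section Helpers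
open Equiv

def Cyc {α : Type*} (u : Perm α) (a b c : α) : Prop :=
  a ≠ b ∧ b ≠ c ∧ c ≠ a ∧ u a = b ∧ u b = c ∧ u c = a ∧ ∀ x, x = a ∨ x = b ∨ x = c ∨ u x = x

variable {α : Type*} 

lemma Cyc.rot {u : Perm α} {a b c : α} (h : Cyc u a b c) : Cyc u b c a := by
  unfold Cyc at *; grind

lemma Cyc.of_ne {u : Perm α} {a b c : α} (h : Cyc u a b c) {p : α} (hp : u p ≠ p) :
    Cyc u p (u p) (u (u p)) := by
  have h' := h
  obtain ⟨h1, h2, h3, h4, h5, h6, h7⟩ := h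
  rcases h7 p with rfl | rfl | rfl | h8
  · rwa [h4, h5]
  · rw [h5, h6]; exact h'.rot
  · rw [h6, h4]; exact h'.rot.rot
  · exact absurd h8 hp

lemma Cyc.cube {u : Perm α} {a b c : α} (h : Cyc u a b c) : u ^ 3 = 1 := by
  ext x
  simp only [pow_succ, pow_zero, one_mul, Perm.mul_apply, Perm.one_apply]
  unfold Cyc at *; grind

lemma Cyc.ext {u v : Perm α} {a b c : α} (h : Cyc u a b c) (h' : Cyc v a b c) : u = v := by
  ext x; unfold Cyc at *; grind

lemma Cyc.conj {u : Perm α} {a b c : α} (h : Cyc u a b c) (t : Perm α) :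
    Cyc (t * u * t⁻¹) (t a) (t b) (t c) := by
  obtain ⟨h1, h2, h3, h4, h5, h6, h7⟩ := h
  refine ⟨by simpa, by simpa, by simpa, by simp [h4], by simp [h5], by simp [h6], ?_⟩
  intro x
  have := h7 (t⁻¹ x)
  simp only [Perm.inv_eq_iff_eq, Perm.mul_apply] at this ⊢
  rcases this with h | h | h | h
  · simp [h]
  · simp [h]
  · simp [h]
  · right; right; right; rw [h]; simp

lemma Cyc.inv {u : Perm α} {a b c : α} (h : Cyc u a b c) : Cyc (u⁻¹) c b a := by
  obtain ⟨h1, h2, h3, h4, h5, h6, h7⟩ := h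
  refine ⟨h2.symm, h1.symm, h3.symm, ?_, ?_, ?_, ?_⟩
  all_goals intros; rw [Perm.inv_eq_iff_eq]; grind

lemma cyc_mk [DecidableEq α] {a b c : α} (h1 : a ≠ b) (h2 : b ≠ c) (h3 : c ≠ a) :
    Cyc (swap a b * swap b c) a b c := by
  refine ⟨h1, h2, h3, ?_, ?_, ?_, ?_⟩
  all_goals simp only [Perm.mul_apply]; grind

lemma share {u v : Perm α} {a b c d e f : α} (hu : Cyc u a b c) (hv : Cyc v d e f)
    (h2 : (u * v) ^ 2 = 1) (h1 : u * v ≠ 1) : ∃ p, u p = v p ∧ u p ≠ p := by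
  have H : ∀ x, u (v (u (v x))) = x := fun x => by
    simpa [pow_two] using congrArg (fun g : Perm α => g x) h2
  have h1' : ∃ x, u (v x) ≠ x := by
    by_contra hh; push Not at hh; exact h1 (by ext x; simp [hh])
  clear h1 h2
  by_cases hd : ∃ p, u p ≠ p ∧ v p ≠ p
  · obtain ⟨p, hp, hq⟩ := hd
    have hu := hu.of_ne hp
    have hv := hv.of_ne hq
    by_contra hh; push Not at hh
    obtain ⟨x, hx⟩ := h1'
    generalize u p = b at *
    have Hp := H p
    have Hd := H (v p)
    have hh1 := hh p
    generalize hc : u b = c at *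
    generalize hvp : v p = d at *
    generalize hvd : v d = e at *
    obtain ⟨k1, k2, k3, k4, k5, k6, k7⟩ := hu
    obtain ⟨l1, l2, l3, l4, l5, l6, l7⟩ := hv
    rcases k7 d with h | h | h | h
    · exact hq h
    · grind
    · subst h
      rcases k7 e with h | h | h | h
      · grind
      · subst h
        have := k7 x
        have := l7 x
        grind
      · grind
      · grind
    · have : e = c := u.injective (by grind)
      have := hh c
      grind
  · push Not at hd
    have := H a
    unfold Cyc at *
    grind

lemma common {u v w : Perm α} {a b c d a'' b'' c'' : α}
    (hu : Cyc u a b c) (hv : Cyc v a b d) (hw : Cyc w a'' b'' c'') (hcd : c ≠ d)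
    (h1 : ∃ p, u p = w p ∧ u p ≠ p) (h2 : ∃ p, v p = w p ∧ v p ≠ p) : w a = b := by
  obtain ⟨p, hp, hp'⟩ := h1
  obtain ⟨q, hq, hq'⟩ := h2
  have hw := hw.of_ne (p := p) (by rwa [← hp])
  unfold Cyc at *
  grind

lemma P_not {g : Perm α} {a b : α} {z : α} [DecidableEq α] (h3 : ∀ x, g (g (g x)) = x) (ha : g a ≠ a) (hb : g b ≠ b)
   (h : b ≠ a ∧ b ≠ g a ∧ b ≠ g (g a)) (hz : z ≠ a ∧ z ≠ g a ∧ z ≠ g (g a) ∧ z ≠ b ∧ z ≠ g b ∧ z ≠ g (g b)) :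
   ∃ t : Perm α, (∃ x y u v, x ≠ y ∧ u ≠ v ∧ t = swap x y * swap u v) ∧ ∀ x, x = t * (g * t⁻¹ * g⁻¹) → x ^ 2 ≠ 1 ∧ x ^ 3 ≠ 1 ∧ x ^ 5 ≠ 1 := by
  refine ⟨swap a b * swap (g a) z, ⟨a, b, g a, z, h.1.symm, hz.2.1.symm, rfl⟩, ?_⟩
  intro x hx
  have e : x = swap a b * swap (g a) z * (swap (g (g a)) (g z) * swap (g a) (g b)) := by
    rw [hx, mul_inv_rev, swap_inv, swap_inv, swap_apply_apply g (g a) z, swap_apply_apply g a b]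
    group
  have i := g.injective
  have x1 : x a = b := by rw [e]; simp only [Perm.mul_apply]; grind
  have x2 : x b = a := by rw [e]; simp only [Perm.mul_apply]; grind
  have x3 : x (g a) = g b := by rw [e]; simp only [Perm.mul_apply]; grind
  have x4 : x (g b) = z := by rw [e]; simp only [Perm.mul_apply]; grind
  refine ⟨fun h' => ?_, fun h' => ?_, fun h' => ?_⟩
  · have := congrArg (fun f : Perm α => f (g a)) h'
    simp [pow_succ, x3, x4] at this; grind
  · have := congrArg (fun f : Perm α => f a) h'
    simp [pow_succ, x1, x2] at this; grind
  · have := congrArg (fun f : Perm α => f a) h'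
    simp [pow_succ, x1, x2] at this; grind

set_option maxRecDepth 100000 in
lemma small_aux : ∀ k ≤ 5, ∀ x : Perm (Fin k), Perm.sign x = 1 → x ^ 2 = 1 ∨ x ^ 3 = 1 ∨ x ^ 5 = 1 := by
  intro k hk
  interval_cases k <;> decide

lemma small_ord [Fintype α] [DecidableEq α] (x : Perm α) (hs : Perm.sign x = 1)
    (hc : x.support.card ≤ 5) : x ^ 2 = 1 ∨ x ^ 3 = 1 ∨ x ^ 5 = 1 := by
  have hx : ∀ a, x a ∈ x.support ↔ a ∈ x.support := fun a => Perm.apply_mem_support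
  let y : Perm {a // a ∈ x.support} := x.subtypePerm (p := fun a => a ∈ x.support) hx
  have hy : Perm.ofSubtype y = x := Perm.ofSubtype_subtypePerm hx (fun a ha => by simpa using ha)
  have e : {a // a ∈ x.support} ≃ Fin x.support.card := x.support.equivFin
  have key := small_aux _ hc (e.permCongrHom y) (by
    have := Perm.sign_permCongr e y
    rw [show e.permCongrHom y = e.permCongr y from rfl, this, ← Perm.sign_ofSubtype, hy, hs])
  have tr : ∀ k : ℕ, (e.permCongrHom y) ^ k = 1 → x ^ k = 1 := by
    intro k hk
    rw [← map_pow] at hk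
    have : y ^ k = 1 := e.permCongrHom.injective (by rw [hk, map_one])
    rw [← hy, ← map_pow, this, map_one]
  rcases key with h | h | h
  · exact Or.inl (tr _ h)
  · exact Or.inr (Or.inl (tr _ h))
  · exact Or.inr (Or.inr (tr _ h))

lemma Cyc.support [Fintype α] [DecidableEq α] {u : Perm α} {a b c : α} (h : Cyc u a b c) :
    u.support = {a, b, c} := by
  ext x
  simp only [Perm.mem_support, Finset.mem_insert, Finset.mem_singleton]
  unfold Cyc at h; grind

lemma Cyc.three [Fintype α] [DecidableEq α] {u : Perm α} {a b c : α} (h : Cyc u a b c) :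
    u.IsThreeCycle := by
  rw [← card_support_eq_three_iff, h.support, Finset.card_eq_three]
  exact ⟨a, b, c, h.1, h.2.2.1.symm, h.2.1, rfl⟩

lemma cyc_of_cube {u : Perm α} {a : α} (h3 : ∀ x, u (u (u x)) = x) (ha : u a ≠ a)
    (h : ∀ x, x = a ∨ x = u a ∨ x = u (u a) ∨ u x = x) : Cyc u a (u a) (u (u a)) := by
  have i := u.injective
  refine ⟨ha.symm, fun h => ha (i h.symm), fun h => ?_, rfl, rfl, h3 a, h⟩
  have := h3 a
  rw [h] at this
  exact ha this

lemma cube_apply {u : Perm α} (h : u ^ 3 = 1) (x : α) : u (u (u x)) = x := by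
  simpa [pow_succ] using congrArg (fun f : Perm α => f x) h

lemma cyc_of_three [Fintype α] [DecidableEq α] {u : Perm α} (h : u.IsThreeCycle) :
    ∃ a b c, Cyc u a b c := by
  have h3 := cube_apply (show u ^ 3 = 1 by rw [← h.orderOf]; exact pow_orderOf_eq_one u)
  obtain ⟨a, ha⟩ : ∃ a, u a ≠ a := by
    by_contra hh; push Not at hh; exact h.ne_one (by ext x; simp [hh])
  have i := u.injective
  refine ⟨a, u a, u (u a), cyc_of_cube h3 ha ?_⟩
  have hs : ({a, u a, u (u a)} : Finset α) = u.support := by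
    apply Finset.eq_of_subset_of_card_le
    · intro x; simp only [Perm.mem_support, Finset.mem_insert, Finset.mem_singleton]
      grind
    · rw [h.card_support, Finset.card_eq_three.2 ⟨a, u a, u (u a), ha.symm, ?_, ?_, rfl⟩]
      · intro h; have := h3 a; rw [← h] at this; exact ha this
      · intro h; exact ha (i h.symm)
  intro x
  by_cases hx : x ∈ u.support
  · rw [← hs] at hx
    simp only [Finset.mem_insert, Finset.mem_singleton] at hx; tauto
  · simp at hx; tauto

lemma prod_ord [Fintype α] [DecidableEq α] {u v : Perm α} {a b c d e f : α} (hu : Cyc u a b c)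
    (hv : Cyc v d e f) : (u * v) ^ 2 = 1 ∨ (u * v) ^ 3 = 1 ∨ (u * v) ^ 5 = 1 := by
  by_cases hd : ∃ p, u p ≠ p ∧ v p ≠ p
  · obtain ⟨p, hp, hq⟩ := hd
    have hu := hu.of_ne hp
    have hv := hv.of_ne hq
    apply small_ord
    · rw [map_mul, hu.three.sign, hv.three.sign, one_mul]
    · have h1 : (u * v).support ⊆ u.support ∪ v.support := Perm.support_mul_le u v
      rw [hu.support, hv.support] at h1
      have h2 : ({p, u p, u (u p)} ∪ {p, v p, v (v p)} : Finset α)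
          ⊆ {p, u p, u (u p), v p, v (v p)} := by
        intro x; simp only [Finset.mem_union, Finset.mem_insert, Finset.mem_singleton]; tauto
      exact (Finset.card_le_card (h1.trans h2)).trans Finset.card_le_five
  · push Not at hd
    have : Perm.Disjoint u v := fun x => by
      by_cases h : u x = x
      · exact Or.inl h
      · exact Or.inr (hd x h)
    right; left
    rw [this.commute.mul_pow, hu.cube, hv.cube, one_mul]

lemma image_three [Fintype α] [DecidableEq α] (hα : 7 ≤ Fintype.card α)
    (ψ : alternatingGroup α →* alternatingGroup α) (hψ : Function.Injective ψ)
    (g : alternatingGroup α) (hg : (g : Perm α).IsThreeCycle) :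
    ((ψ g : alternatingGroup α) : Perm α).IsThreeCycle := by
  have hsur : Function.Surjective ψ := Finite.surjective_of_injective hψ
  obtain ⟨a, b, c, hc⟩ := cyc_of_three hg
  set u : Perm α := (ψ g).1 with hu
  have g3 : g ^ 3 = 1 := Subtype.ext (by simpa using hc.cube)
  have u3 : u ^ 3 = 1 := by
    have : ψ g ^ 3 = 1 := by rw [← map_pow, g3, map_one]
    rw [hu, ← Subgroup.coe_pow, this, Subgroup.coe_one]
  have u3' := cube_apply u3
  have u1 : u ≠ 1 := by
    intro h
    have : ψ g = ψ 1 := by rw [map_one]; exact Subtype.ext h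
    have := hψ this
    rw [this] at hg
    exact hg.ne_one rfl
  obtain ⟨p, hp⟩ : ∃ p, u p ≠ p := by
    by_contra hh; push Not at hh; exact u1 (by ext x; simp [hh])
  by_contra hno
  obtain ⟨q, hq1, hq2, hq3, hq4⟩ : ∃ q, q ≠ p ∧ q ≠ u p ∧ q ≠ u (u p) ∧ u q ≠ q := by
    by_contra hh
    apply hno
    refine (cyc_of_cube u3' hp ?_).three
    intro x; by_contra h; push Not at h; exact hh ⟨x, h⟩
  obtain ⟨z, hz⟩ : ∃ z, z ∉ ({p, u p, u (u p), q, u q, u (u q)} : Finset α) := by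
    by_contra hh
    push Not at hh
    have : (Finset.univ : Finset α) ⊆ {p, u p, u (u p), q, u q, u (u q)} := fun x _ => hh x
    have := (Finset.card_le_card this).trans Finset.card_le_six
    rw [Finset.card_univ] at this
    omega
  simp only [Finset.mem_insert, Finset.mem_singleton, not_or] at hz
  obtain ⟨t, ⟨x, y, x', y', h1, h2, ht⟩, h⟩ := P_not u3' hp hq4 ⟨hq1, hq2, hq3⟩ hz
  have htm : t ∈ alternatingGroup α := by
    rw [Perm.mem_alternatingGroup, ht, map_mul, Perm.sign_swap h1, Perm.sign_swap h2]; simp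
  obtain ⟨s, hs⟩ := hsur ⟨t, htm⟩
  have hs' : ((ψ s : alternatingGroup α) : Perm α) = t := by rw [hs]
  have key := prod_ord (hc.conj (s : Perm α)) hc.inv
  have tr : ∀ k : ℕ, ((s : Perm α) * g * (s : Perm α)⁻¹ * (g : Perm α)⁻¹) ^ k = 1 →
      (t * (u * t⁻¹ * u⁻¹)) ^ k = 1 := by
    intro k hk
    have e : (s * g * s⁻¹ * g⁻¹) ^ k = 1 := Subtype.ext (by simpa using hk)
    have e2 := congrArg ψ e
    simp only [map_pow, map_mul, map_inv, map_one] at e2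
    have e3 := congrArg (Subtype.val) e2
    simp only [Subgroup.coe_pow, Subgroup.coe_mul, Subgroup.coe_inv, Subgroup.coe_one] at e3
    rw [hs', ← hu] at e3
    rw [← e3]; simp only [mul_assoc]
  obtain ⟨k1, k2, k3⟩ := h _ rfl
  rcases key with h | h | h
  · exact k1 (tr _ h)
  · exact k2 (tr _ h)
  · exact k3 (tr _ h)

lemma prod_two {u v : Perm α} {a b c d : α} (hu : Cyc u a b c) (hv : Cyc v a b d) (hcd : c ≠ d) :
    (u * v) ^ 2 = 1 ∧ u * v ≠ 1 := by
  obtain ⟨k1, k2, k3, k4, k5, k6, k7⟩ := hu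
  obtain ⟨l1, l2, l3, l4, l5, l6, l7⟩ := hv
  constructor
  · ext x
    simp only [pow_two, Perm.mul_apply, Perm.one_apply]
    have := k7 x
    have := l7 x
    have := k7 d
    have := l7 c
    grind
  · intro h
    have := congrArg (fun f : Perm α => f a) h
    simp only [Perm.mul_apply, Perm.one_apply] at this
    grind

lemma star_mul {u v w : Perm α} {p q x y : α} (hu : Cyc u p q y) (hv : Cyc v p q x)
    (hw : Cyc w p x y) : w = u * v⁻¹ := by
  rw [eq_mul_inv_iff_mul_eq]
  obtain ⟨k1, k2, k3, k4, k5, k6, k7⟩ := hu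
  obtain ⟨l1, l2, l3, l4, l5, l6, l7⟩ := hv
  obtain ⟨m1, m2, m3, m4, m5, m6, m7⟩ := hw
  ext z
  simp only [Perm.mul_apply]
  have := k7 z
  have := l7 z
  have := m7 z
  have := k7 x
  have := l7 y
  have := m7 q
  grind

lemma tri_mul {u v w : Perm α} {p x y z : α} (hu : Cyc u p x y) (hv : Cyc v p y z)
    (hw : Cyc w x y z) : w = u * v := by
  obtain ⟨k1, k2, k3, k4, k5, k6, k7⟩ := hu
  obtain ⟨l1, l2, l3, l4, l5, l6, l7⟩ := hv
  obtain ⟨m1, m2, m3, m4, m5, m6, m7⟩ := hw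
  ext t
  simp only [Perm.mul_apply]
  have := k7 t
  have := l7 t
  have := m7 t
  have := k7 z
  have := l7 x
  have := m7 p
  grind

lemma exists_cyc [Fintype α] [DecidableEq α] {a b c : α} (h1 : a ≠ b) (h2 : b ≠ c) (h3 : c ≠ a) :
    ∃ g : alternatingGroup α, Cyc (g : Perm α) a b c :=
  ⟨⟨_, (cyc_mk h1 h2 h3).three.mem_alternatingGroup⟩, cyc_mk h1 h2 h3⟩

lemma star_gen [Fintype α] [DecidableEq α] {p q : α} (hpq : p ≠ q)
    (S : Subgroup (alternatingGroup α))
    (hS : ∀ (g : alternatingGroup α) (i : α), Cyc (g : Perm α) p q i → g ∈ S) : S = ⊤ := by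
  have s1 : ∀ (g : alternatingGroup α) (x y : α), Cyc (g : Perm α) p x y → g ∈ S := by
    intro g x y h
    by_cases hx : x = q
    · subst hx; exact hS _ _ h
    by_cases hy : y = q
    · subst hy
      rw [← inv_mem_iff]
      exact hS _ x h.inv.rot.rot
    obtain ⟨u, hu⟩ := exists_cyc hpq (Ne.symm hy) h.2.2.1
    obtain ⟨v, hv⟩ := exists_cyc hpq (Ne.symm hx) h.1.symm
    have : g = u * v⁻¹ := Subtype.ext (star_mul hu hv h)
    rw [this]
    exact mul_mem (hS _ _ hu) (inv_mem (hS _ _ hv))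
  have s2 : ∀ (g : alternatingGroup α) (x y z : α), Cyc (g : Perm α) x y z → g ∈ S := by
    intro g x y z h
    by_cases hx : x = p
    · subst hx; exact s1 _ _ _ h
    by_cases hy : y = p
    · subst hy; exact s1 _ _ _ h.rot
    by_cases hz : z = p
    · subst hz; exact s1 _ _ _ h.rot.rot
    obtain ⟨u, hu⟩ := exists_cyc (Ne.symm hx) h.1 hy
    obtain ⟨v, hv⟩ := exists_cyc (Ne.symm hy) h.2.1 hz
    have : g = u * v := Subtype.ext (tri_mul hu hv h)
    rw [this]
    exact mul_mem (s1 _ _ _ hu) (s1 _ _ _ hv)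
  have s3 : alternatingGroup α ≤ S.map (alternatingGroup α).subtype := by
    refine Perm.closure_three_cycles_eq_alternating.ge.trans ?_
    rw [Subgroup.closure_le]
    intro g hg
    obtain ⟨a, b, c, h⟩ := cyc_of_three hg
    exact ⟨⟨g, Perm.IsThreeCycle.mem_alternatingGroup hg⟩, s2 _ _ _ _ h, rfl⟩
  rw [eq_top_iff]
  rintro g -
  obtain ⟨g', h1, h2⟩ := s3 g.2
  have : g' = g := Subtype.ext h2
  rwa [← this]

theorem aut_alt [Fintype α] [DecidableEq α] (hα : 7 ≤ Fintype.card α)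
    (ψ : alternatingGroup α →* alternatingGroup α) (hψ : Function.Injective ψ) :
    ∃ τ : Perm α, ∀ g, ((ψ g : alternatingGroup α) : Perm α) = τ * g * τ⁻¹ := by
  obtain ⟨s, -, hs⟩ := Finset.exists_subset_card_eq (s := (Finset.univ : Finset α)) (n := 4)
    (by rw [Finset.card_univ]; omega)
  obtain ⟨p, q, i, j, hpq, hpi, hpj, hqi, hqj, hij, -⟩ := Finset.card_eq_four.1 hs
  have hex : ∀ k, ∃ g : alternatingGroup α, k ≠ p → k ≠ q → Cyc (g : Perm α) p q k := by
    intro k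
    by_cases h1 : k = p
    · exact ⟨1, fun h => absurd h1 h⟩
    by_cases h2 : k = q
    · exact ⟨1, fun _ h => absurd h2 h⟩
    obtain ⟨g, hg⟩ := exists_cyc hpq (Ne.symm h2) h1
    exact ⟨g, fun _ _ => hg⟩
  choose g hg using hex
  let U : α → Perm α := fun k => (ψ (g k)).1
  have hU : ∀ k, k ≠ p → k ≠ q → ∃ a b c, Cyc (U k) a b c := fun k h1 h2 =>
    cyc_of_three (image_three hα ψ hψ (g k) (hg k h1 h2).three)
  have hinj : ∀ k l, k ≠ p → k ≠ q → l ≠ p → l ≠ q → U k = U l → k = l := by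
    intro k l h1 h2 h3 h4 h
    have h5 : g k = g l := hψ (Subtype.ext h)
    have e1 := (hg k h1 h2).2.2.2.2.1
    have e2 := (hg l h3 h4).2.2.2.2.1
    rw [h5] at e1
    exact e1.symm.trans e2
  have hshare : ∀ k l, k ≠ p → k ≠ q → l ≠ p → l ≠ q → k ≠ l → ∃ x, U k x = U l x ∧ U k x ≠ x := by
    intro k l h1 h2 h3 h4 h
    obtain ⟨a, b, c, hk⟩ := hU k h1 h2
    obtain ⟨d, e, f, hl⟩ := hU l h3 h4
    obtain ⟨m1, m2⟩ := prod_two (hg k h1 h2) (hg l h3 h4) h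
    refine share hk hl ?_ ?_
    · have : (g k * g l) ^ 2 = 1 := Subtype.ext (by simpa using m1)
      have := congrArg (fun x => (ψ x).1) this
      simpa using this
    · intro hh
      apply m2
      have : ψ (g k * g l) = ψ 1 := by
        rw [map_mul, map_one]; exact Subtype.ext hh
      have := congrArg Subtype.val (hψ this)
      simpa using this
  obtain ⟨a, ha1, ha2⟩ := hshare i j hpi.symm hqi.symm hpj.symm hqj.symm hij
  obtain ⟨b, hb⟩ : ∃ b, b = U i a := ⟨_, rfl⟩
  have ci : Cyc (U i) a b (U i b) := by
    obtain ⟨_, _, _, h⟩ := hU i hpi.symm hqi.symm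
    have := h.of_ne ha2
    rwa [← hb] at this
  have cj : Cyc (U j) a b (U j b) := by
    obtain ⟨_, _, _, h⟩ := hU j hpj.symm hqj.symm
    have := h.of_ne (by rwa [← ha1])
    rwa [← ha1, ← hb] at this
  have hne : U i b ≠ U j b := by
    intro h
    rw [h] at ci
    exact hij (hinj _ _ hpi.symm hqi.symm hpj.symm hqj.symm (ci.ext cj))
  have hab : a ≠ b := ci.1
  have hedge : ∀ k, k ≠ p → k ≠ q → U k a = b := by
    intro k h1 h2
    by_cases hk : k = i
    · rw [hk]; exact hb.symm
    by_cases hk' : k = j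
    · rw [hk', ← ha1]; exact hb.symm
    obtain ⟨_, _, _, h⟩ := hU k h1 h2
    exact common ci cj h hne (hshare i k hpi.symm hqi.symm h1 h2 (Ne.symm hk))
      (hshare j k hpj.symm hqj.symm h1 h2 (Ne.symm hk'))
  have hcyc : ∀ k, k ≠ p → k ≠ q → Cyc (U k) a b (U k b) := by
    intro k h1 h2
    obtain ⟨_, _, _, h⟩ := hU k h1 h2
    have e := hedge k h1 h2
    have := h.of_ne (p := a) (by rw [e]; exact hab.symm)
    rwa [e] at this
  let f : α → α := fun k => if k = p then a else if k = q then b else U k b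
  have fp : f p = a := if_pos rfl
  have fq : f q = b := by simp [f, hpq.symm]
  have fk : ∀ k, k ≠ p → k ≠ q → f k = U k b := fun k h1 h2 => by simp [f, h1, h2]
  have finj : Function.Injective f := by
    intro k l h
    by_cases k1 : k = p <;> by_cases k2 : k = q <;> by_cases l1 : l = p <;> by_cases l2 : l = q
    all_goals try (have ck := hcyc k k1 k2; have ek := fk k k1 k2)
    all_goals try (have cl := hcyc l l1 l2; have el := fk l l1 l2)
    all_goals try (have := ck.2.1; have := ck.2.2.1)
    all_goals try (have := cl.2.1; have := cl.2.2.1)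
    all_goals try (exact hinj k l k1 k2 l1 l2 (by rw [ek, el] at h; rw [h] at ck; exact ck.ext cl))
    all_goals clear fk hcyc hedge hinj hshare
    all_goals grind
  let τ : Perm α := Equiv.ofBijective f (Finite.injective_iff_bijective.1 finj)
  have hτ : ∀ x, τ x = f x := fun x => rfl
  refine ⟨τ, ?_⟩
  let φ1 : alternatingGroup α →* Perm α := (alternatingGroup α).subtype.comp ψ
  let φ2 : alternatingGroup α →* Perm α :=
    (MulAut.conj τ).toMonoidHom.comp (alternatingGroup α).subtype
  have htop : φ1.eqLocus φ2 = ⊤ := by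
    apply star_gen hpq
    intro x k hx
    have k1 := hx.2.2.1
    have k2 := hx.2.1.symm
    have e : x = g k := Subtype.ext (hx.ext (hg k k1 k2))
    have := (hg k k1 k2).conj τ
    rw [hτ, hτ, hτ, fp, fq, fk k k1 k2] at this
    change (ψ x).1 = τ * x * τ⁻¹
    rw [e]
    exact (hcyc k k1 k2).ext this
  intro x
  have : x ∈ φ1.eqLocus φ2 := by rw [htop]; trivial
  exact this

lemma coatom_normalizer {H : Type*} [Group H] [Finite H] [IsSimpleGroup H]
    (hH : ¬ ∀ a b : H, a * b = b * a)
    (K : Subgroup H) (hmax : IsCoatom K)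
    (h1 : ∀ L : Subgroup H, L ≠ ⊤ → Nat.card L ≤ Nat.card K) (a : H)
    (ha : ∀ k ∈ K, a⁻¹ * k * a ∈ K) : a ∈ K := by
  have hnn : ¬ K.Normal := by
    intro hn
    rcases hn.eq_bot_or_eq_top with h | h
    · apply hH
      intro x y
      by_cases hx : x = 1
      · simp [hx]
      have ht : Subgroup.zpowers x = ⊤ := by
        by_contra hne
        have := h1 _ hne
        rw [h, Subgroup.card_bot] at this
        have := (Subgroup.zpowers x).eq_bot_of_card_le this
        exact hx (Subgroup.zpowers_eq_bot.1 this)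
      have hy : y ∈ Subgroup.zpowers x := by rw [ht]; trivial
      obtain ⟨n, rfl⟩ := hy
      exact (Commute.refl x).zpow_right n
    · exact hmax.1 h
  have hmem : a⁻¹ ∈ Subgroup.normalizer (K : Set H) := by
    have hle : K.map (MulAut.conj a⁻¹).toMonoidHom ≤ K := by
      rintro _ ⟨k, hk, rfl⟩
      simpa using ha k hk
    have heq : K.map (MulAut.conj a⁻¹).toMonoidHom = K :=
      Subgroup.eq_of_le_of_card_ge hle
        (by rw [Subgroup.card_map_of_injective (MulAut.conj a⁻¹).injective])
    rw [Subgroup.mem_normalizer_iff]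
    intro h
    constructor
    · intro hk; simpa using ha h hk
    · intro hk
      have hk : a⁻¹ * h * a⁻¹⁻¹ ∈ K := hk
      rw [← heq] at hk
      obtain ⟨k, hk, e⟩ := hk
      have : k = h := by simpa using e
      rwa [← this]
  have hle : K ≤ Subgroup.normalizer (K : Set H) := Subgroup.le_normalizer
  rcases hle.eq_or_lt with h | h
  · rw [← h] at hmem; simpa using hmem
  · exact absurd (Subgroup.normalizer_eq_top_iff.1 (hmax.2 _ h)) hnn

lemma hom_inj {A B : Type*} [Group A] [Group B] [IsSimpleGroup A] (f : A →* B)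
    (h : ∃ a, f a ≠ 1) : Function.Injective f := by
  rw [← MonoidHom.ker_eq_bot_iff]
  rcases (inferInstance : f.ker.Normal).eq_bot_or_eq_top with h' | h'
  · exact h'
  · obtain ⟨a, ha⟩ := h
    exact absurd (show a ∈ f.ker by rw [h']; trivial) ha

lemma exists_conj {H : Type*} [Group H] [Finite H]
    (K : Subgroup H)
    (h1 : ∀ L : Subgroup H, L ≠ ⊤ → Nat.card L ≤ Nat.card K)
    (h2 : ∀ L : Subgroup H, L.index = K.index →
        ∃ h : H, L = K.map (MulAut.conj h).toMonoidHom)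
    (φ : H →* Perm (H ⧸ K)) (hφ : ∃ h, φ h ≠ 1) :
    ∃ σ : Perm (H ⧸ K), ∀ h, φ h = σ * MulAction.toPermHom H (H ⧸ K) h * σ⁻¹ := by
  obtain ⟨h0, hh0⟩ := hφ
  obtain ⟨x, hx⟩ : ∃ x, φ h0 x ≠ x := by
    by_contra hh; push Not at hh; exact hh0 (by ext x; simp [hh])
  let L : Subgroup H := (MulAction.stabilizer (Perm (H ⧸ K)) x).comap φ
  have memL : ∀ h, h ∈ L ↔ φ h x = x := fun h => Iff.rfl
  have hL : L ≠ ⊤ := by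
    intro h
    exact hx ((memL h0).1 (by rw [h]; trivial))
  have hc := h1 L hL
  have e1 := L.card_mul_index
  have e2 := K.card_mul_index
  have hi1 : K.index ≤ L.index := by
    by_contra hlt
    push Not at hlt
    have : Nat.card L * L.index < Nat.card K * K.index :=
      Nat.mul_lt_mul_of_le_of_lt hc hlt Nat.card_pos
    omega
  have hi2 : L.index ≤ K.index := by
    rw [Subgroup.index, Subgroup.index]
    let F : H ⧸ L → H ⧸ K := Quotient.lift (fun h => φ h x) (by
      intro a b hab
      have := QuotientGroup.leftRel_apply.1 hab
      rw [memL, map_mul, map_inv, Perm.mul_apply, Perm.inv_eq_iff_eq] at this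
      exact this.symm)
    refine Nat.card_le_card_of_injective F ?_
    rintro ⟨a⟩ ⟨b⟩ hab
    apply Quotient.sound
    refine QuotientGroup.leftRel_apply.2 ?_
    rw [memL, map_mul, map_inv, Perm.mul_apply, Perm.inv_eq_iff_eq]
    exact Eq.symm hab
  obtain ⟨h, hh⟩ := h2 L (le_antisymm hi2 hi1)
  obtain ⟨y, hy⟩ : ∃ y, y = φ h⁻¹ x := ⟨_, rfl⟩
  have memK : ∀ k, k ∈ K ↔ φ k y = y := by
    intro k
    have : k ∈ K ↔ h * k * h⁻¹ ∈ L := by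
      rw [hh]
      constructor
      · intro hk; exact ⟨k, hk, rfl⟩
      · rintro ⟨k', hk', e⟩
        have : k' = k := by simpa using e
        rwa [← this]
    rw [this, memL, hy]
    simp only [map_mul, map_inv, Perm.mul_apply]
    rw [← Perm.eq_inv_iff_eq]
  let F : H ⧸ K → H ⧸ K := Quotient.lift (fun h => φ h y) (by
      intro a b hab
      have := QuotientGroup.leftRel_apply.1 hab
      rw [memK, map_mul, map_inv, Perm.mul_apply, Perm.inv_eq_iff_eq] at this
      exact this.symm)
  have Finj : Function.Injective F := by
    rintro ⟨a⟩ ⟨b⟩ hab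
    apply Quotient.sound
    refine QuotientGroup.leftRel_apply.2 ?_
    rw [memK, map_mul, map_inv, Perm.mul_apply, Perm.inv_eq_iff_eq]
    exact Eq.symm hab
  let σ : Perm (H ⧸ K) := Equiv.ofBijective F (Finite.injective_iff_bijective.1 Finj)
  refine ⟨σ, fun g => ?_⟩
  rw [eq_mul_inv_iff_mul_eq]
  ext z
  obtain ⟨a, rfl⟩ := QuotientGroup.mk_surjective z
  change φ g (φ a y) = φ (g * a) y
  rw [map_mul, Perm.mul_apply]

lemma centr {H : Type*} [Group H] [Finite H] [IsSimpleGroup H]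
    (hH : ¬ ∀ a b : H, a * b = b * a)
    (K : Subgroup H) (hmax : IsCoatom K)
    (h1 : ∀ L : Subgroup H, L ≠ ⊤ → Nat.card L ≤ Nat.card K) (c : Perm (H ⧸ K))
    (hc : ∀ h : H, ∀ x, c (h • x) = h • c x) : c = 1 := by
  obtain ⟨a, ha⟩ := QuotientGroup.mk_surjective (c ((1 : H) : H ⧸ K))
  have haK : a ∈ K := by
    apply coatom_normalizer hH K hmax h1
    intro k hk
    have := hc k ((1 : H) : H ⧸ K)
    rw [← ha] at this
    have e : k • ((1 : H) : H ⧸ K) = ((1 : H) : H ⧸ K) := by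
      change ((k * 1 : H) : H ⧸ K) = _
      rw [QuotientGroup.eq]; simpa using hk
    rw [e, ← ha] at this
    have this : (a : H ⧸ K) = ((k * a : H) : H ⧸ K) := this
    rw [QuotientGroup.eq] at this
    simpa [mul_assoc] using this
  have h1' : c ((1 : H) : H ⧸ K) = ((1 : H) : H ⧸ K) := by
    rw [← ha, QuotientGroup.eq]; simpa using haK
  ext z
  obtain ⟨b, rfl⟩ := QuotientGroup.mk_surjective z
  have := hc b ((1 : H) : H ⧸ K)
  rw [h1'] at this
  have e : b • ((1 : H) : H ⧸ K) = (b : H ⧸ K) := by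
    change ((b * 1 : H) : H ⧸ K) = _
    rw [mul_one]
  rw [e] at this
  simpa using this

end Helpers

/-- Let `H` be a non-abelian finite simple group and `K` a maximal
subgroup of index `n ≥ 7` such that (1) every proper subgroup of `H` has order at most
`|K|`, and (2) every subgroup of index `n` is conjugate to `K`.  Then the permutation
representation of `H` on the cosets `H ⧸ K` is injective, lands in the alternating
group, and the resulting embedding `H ↪ Alt(H ⧸ K)` is a localization. -/
theorem statement7 (H : Type*) [Group H] [Finite H] [IsSimpleGroup H]
    (hH : ¬ ∀ a b : H, a * b = b * a)
    (K : Subgroup H) (hmax : IsCoatom K) (hn : 7 ≤ K.index)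
    (h1 : ∀ L : Subgroup H, L ≠ ⊤ → Nat.card L ≤ Nat.card K)
    (h2 : ∀ L : Subgroup H, L.index = K.index →
        ∃ h : H, L = K.map (MulAut.conj h).toMonoidHom) :
    ∀ [Fintype (H ⧸ K)] [DecidableEq (H ⧸ K)],
      Function.Injective (MulAction.toPermHom H (H ⧸ K)) ∧
      (∀ h : H, MulAction.toPermHom H (H ⧸ K) h ∈ alternatingGroup (H ⧸ K)) ∧
      (∀ f : H →* alternatingGroup (H ⧸ K),
        (∀ h : H, (f h : Equiv.Perm (H ⧸ K)) = MulAction.toPermHom H (H ⧸ K) h) →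
        IsLocalizationHom f) := by
  intro _ _
  have hinj : Function.Injective (MulAction.toPermHom H (H ⧸ K)) := by
    apply hom_inj
    by_contra hh
    push Not at hh
    apply hmax.1
    rw [eq_top_iff]
    rintro x -
    have := congrArg (fun f : Equiv.Perm (H ⧸ K) => f ((1 : H) : H ⧸ K)) (hh x)
    have this : ((x * 1 : H) : H ⧸ K) = ((1 : H) : H ⧸ K) := this
    rw [QuotientGroup.eq] at this
    simpa using this
  refine ⟨hinj, ?_, ?_⟩
  · intro h
    rw [Equiv.Perm.mem_alternatingGroup]
    by_contra hh
    have hs := hom_inj ((Equiv.Perm.sign (α := H ⧸ K)).comp (MulAction.toPermHom H (H ⧸ K))) ⟨h, hh⟩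
    exact hH fun a b => hs (by rw [map_mul, map_mul, mul_comm])
  intro f hf
  have hcard : 7 ≤ Fintype.card (H ⧸ K) := by
    rw [← Nat.card_eq_fintype_card]; exact hn
  have : IsSimpleGroup (alternatingGroup (H ⧸ K)) :=
    alternatingGroup.isSimpleGroup (by rw [Nat.card_eq_fintype_card]; omega)
  have hfinj : Function.Injective f := fun a b hab => hinj (by rw [← hf, ← hf, hab])
  constructor
  · intro ψ1 ψ2 h12
    have h12 : ∀ h, ψ1 (f h) = ψ2 (f h) := fun h => DFunLike.congr_fun h12 h
    obtain ⟨x, hx⟩ := exists_ne (1 : H)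
    have hfx : f x ≠ 1 := fun h => hx (hfinj (by rw [h, map_one]))
    by_cases hψ : ∃ a, ψ1 (f a) ≠ 1
    · obtain ⟨a, ha⟩ := hψ
      obtain ⟨τ1, ht1⟩ := aut_alt hcard ψ1 (hom_inj ψ1 ⟨_, ha⟩)
      obtain ⟨τ2, ht2⟩ := aut_alt hcard ψ2 (hom_inj ψ2 ⟨_, by rw [← h12]; exact ha⟩)
      have hc : τ2⁻¹ * τ1 = 1 := by
        apply centr hH K hmax h1
        intro h z
        have e := congrArg Subtype.val (h12 h)
        rw [ht1, ht2, hf] at e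
        have e2 : τ2⁻¹ * τ1 * MulAction.toPermHom H (H ⧸ K) h
            = MulAction.toPermHom H (H ⧸ K) h * (τ2⁻¹ * τ1) := by
          rw [mul_inv_eq_iff_eq_mul] at e
          rw [mul_assoc, e]; group
        exact congrArg (fun f : Equiv.Perm (H ⧸ K) => f z) e2
      have : τ1 = τ2 := (inv_mul_eq_one.1 hc).symm
      ext1 g
      apply Subtype.ext
      rw [ht1, ht2, this]
    · push Not at hψ
      have tr : ∀ ψ : alternatingGroup (H ⧸ K) →* alternatingGroup (H ⧸ K),
          ψ (f x) = 1 → ∀ g, ψ g = 1 := by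
        intro ψ h
        by_contra hh
        push Not at hh
        exact hfx (hom_inj ψ hh (by rw [h, map_one]))
      ext1 g
      rw [tr ψ1 (hψ x), tr ψ2 (by rw [← h12]; exact hψ x)]
  · intro φ
    by_cases hφ : ∃ h, φ h ≠ 1
    · obtain ⟨h0, hh0⟩ := hφ
      obtain ⟨σ, hσ⟩ := exists_conj K h1 h2 ((alternatingGroup (H ⧸ K)).subtype.comp φ)
        ⟨h0, fun h => hh0 (Subtype.ext h)⟩
      refine ⟨(MulAut.conjNormal σ).toMonoidHom, ?_⟩
      ext1 h
      apply Subtype.ext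
      change ((MulAut.conjNormal σ (f h) : alternatingGroup (H ⧸ K)) : Equiv.Perm (H ⧸ K)) = _
      rw [MulAut.conjNormal_apply, hf]
      exact (hσ h).symm
    · push Not at hφ
      refine ⟨1, ?_⟩
      ext1 h
      rw [hφ h]; rfl
end

section
/- Let p be a prime, k ≥ 1, and q = p^k a prime power with q ≥ 13 or q = 8 (i.e. q ≥ 4 and q ∉ {4, 5, 7, 9, 11}). Then every injective group homomorphism from PSL(2, F_q) (the quotient of SL(2, F_q) by its center, where F_q is the field with q elements) into the alternating group A_{q+1} on q+1 letters is a localization. -/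
section partA
open Equiv Equiv.Perm

theorem threeCycle_of_index {n : ℕ} (hn : 9 ≤ n) (K : Subgroup (alternatingGroup (Fin n)))
    (hK : K.index ≤ n)
    (h2 : ∀ a b c d : Fin n, a ≠ b → c ≠ d →
      ∃ k ∈ K, (k : Perm (Fin n)) a = c ∧ (k : Perm (Fin n)) b = d) :
    ∃ g ∈ K, IsThreeCycle (g : Perm (Fin n)) := by
  classical
  set L : Subgroup (Perm (Fin n)) := K.map (alternatingGroup (Fin n)).subtype with hL
  have hLmem : ∀ (g : alternatingGroup (Fin n)), (g : Perm (Fin n)) ∈ L ↔ g ∈ K := by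
    intro g
    simp [hL]
  suffices h : ∃ g ∈ L, IsThreeCycle g by
    obtain ⟨g, hg, h3⟩ := h
    obtain ⟨k, hk, rfl⟩ := hg
    exact ⟨k, hk, h3⟩
  by_contra hno
  push Not at hno
  -- distinctness
  have hno' : ∀ a b c : Fin n, a ≠ b → a ≠ c → b ≠ c → swap a b * swap a c ∉ L := by
    intro a b c hab hac hbc h
    exact hno _ h (isThreeCycle_swap_mul_swap_same hab hac hbc)
  let Φ : Fin n → Fin n → Finset (Fin n × Fin n) := fun a x =>
    (Finset.univ.offDiag).filter (fun z => swap a x * swap z.1 z.2 ∈ L)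
  have hΦm : ∀ a x z, z ∈ Φ a x ↔ z.1 ≠ z.2 ∧ swap a x * swap z.1 z.2 ∈ L := by
    intro a x z; simp [Φ, Finset.mem_offDiag]
  have hsw : ∀ a x : Fin n, (swap a x)⁻¹ = swap a x := fun a x => swap_inv a x
  -- same class composition
  have htr : ∀ a x : Fin n, ∀ y z : Fin n × Fin n, swap a x * swap y.1 y.2 ∈ L →
      swap a x * swap z.1 z.2 ∈ L → swap y.1 y.2 * swap z.1 z.2 ∈ L := by
    intro a x y z h1 h2
    have := L.mul_mem (L.inv_mem h1) h2
    rw [mul_inv_rev, hsw, hsw] at this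
    have e : swap y.1 y.2 * swap a x * (swap a x * swap z.1 z.2) = swap y.1 y.2 * swap z.1 z.2 := by
      rw [mul_assoc, ← mul_assoc (swap a x), swap_mul_self, one_mul]
    rwa [e] at this
  have hinj : ∀ a x, ∀ y ∈ Φ a x, ∀ z ∈ Φ a x, y.1 = z.1 → y = z := by
    intro a x y hy z hz h
    rw [hΦm] at hy hz
    by_contra hne
    have h' := htr a x y z hy.2 hz.2
    rw [← h] at h'
    refine hno' _ _ _ hy.1 (h ▸ hz.1) ?_ h'
    intro h2
    exact hne (Prod.ext h h2)
  have hinj2 : ∀ a x, ∀ y ∈ Φ a x, ∀ z ∈ Φ a x, y.2 = z.2 → y = z := by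
    intro a x y hy z hz h
    have hy' : y.swap ∈ Φ a x := by
      rw [hΦm] at hy ⊢; exact ⟨hy.1.symm, by simpa [swap_comm] using hy.2⟩
    have hz' : z.swap ∈ Φ a x := by
      rw [hΦm] at hz ⊢; exact ⟨hz.1.symm, by simpa [swap_comm] using hz.2⟩
    have := hinj a x _ hy' _ hz' h
    exact Prod.swap_injective this
  -- size by pigeonhole
  have hsize0 : ∃ a x : Fin n, a ≠ x ∧ n - 1 ≤ (Φ a x).card := by
    let i0 : Fin n := ⟨0, by omega⟩
    let i1 : Fin n := ⟨1, by omega⟩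
    have hi : i0 ≠ i1 := by simp [i0, i1]
    let F : Fin n × Fin n → alternatingGroup (Fin n) := fun z =>
      if h : z.1 ≠ z.2 then ⟨swap i0 i1 * swap z.1 z.2, by
        rw [mem_alternatingGroup, Equiv.Perm.sign_mul, sign_swap hi, sign_swap h]; rfl⟩ else 1
    have : Finite (alternatingGroup (Fin n) ⧸ K) := inferInstance
    have := Fintype.ofFinite (alternatingGroup (Fin n) ⧸ K)
    have hcard : Fintype.card (alternatingGroup (Fin n) ⧸ K) ≤ n := by
      rw [← Nat.card_eq_fintype_card]; exact hK
    obtain ⟨y, -, hy⟩ := Finset.exists_lt_card_fiber_of_mul_lt_card_of_maps_to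
      (s := (Finset.univ : Finset (Fin n)).offDiag)
      (t := (Finset.univ : Finset (alternatingGroup (Fin n) ⧸ K)))
      (f := fun z => (QuotientGroup.mk (F z))) (n := n - 2) (by simp) (by
        rw [Finset.offDiag_card, Finset.card_univ, Finset.card_univ, Fintype.card_fin]
        calc _ ≤ n * (n - 2) := Nat.mul_le_mul_right _ hcard
          _ < n * (n - 1) := Nat.mul_lt_mul_of_pos_left (by omega) (by omega)
          _ = n * n - n := by rw [Nat.mul_sub, mul_one])
    have hne : 0 < (Finset.filter (fun z => (QuotientGroup.mk (F z) : alternatingGroup (Fin n) ⧸ K) = y)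
      (Finset.univ : Finset (Fin n)).offDiag).card := by omega
    obtain ⟨w, hw⟩ := Finset.card_pos.1 hne
    simp only [Finset.mem_filter, Finset.mem_offDiag, Finset.mem_univ, true_and] at hw
    refine ⟨w.1, w.2, hw.1, ?_⟩
    have : (Finset.filter (fun z => (QuotientGroup.mk (F z) : alternatingGroup (Fin n) ⧸ K) = y)
      (Finset.univ : Finset (Fin n)).offDiag) ⊆ Φ w.1 w.2 := by
      intro z hz
      simp only [Finset.mem_filter, Finset.mem_offDiag, Finset.mem_univ, true_and] at hz
      rw [hΦm]
      refine ⟨hz.1, ?_⟩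
      have h1 := QuotientGroup.eq.1 (hw.2.trans hz.2.symm)
      rw [← hLmem] at h1
      simp only [F, hw.1, hz.1, ne_eq, not_false_eq_true, dif_pos, Subgroup.coe_mul,
        Subgroup.coe_inv, mul_inv_rev, hsw] at h1
      have e : swap w.1 w.2 * swap i0 i1 * (swap i0 i1 * swap z.1 z.2)
        = swap w.1 w.2 * swap z.1 z.2 := by
        rw [mul_assoc, ← mul_assoc (swap i0 i1), swap_mul_self, one_mul]
      rwa [e] at h1
    have := Finset.card_le_card this
    omega
  have hconj : ∀ g ∈ L, ∀ a x c d, swap a x * swap c d ∈ L →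
      swap (g a) (g x) * swap (g c) (g d) ∈ L := by
    intro g hg a x c d h
    have := L.mul_mem (L.mul_mem hg h) (L.inv_mem hg)
    have e : g * (swap a x * swap c d) * g⁻¹ = swap (g a) (g x) * swap (g c) (g d) := by
      rw [swap_apply_apply, swap_apply_apply]; group
    rwa [e] at this
  have hsize : ∀ a x : Fin n, a ≠ x → n - 1 ≤ (Φ a x).card := by
    intro a x hax
    obtain ⟨a', x', hax', h'⟩ := hsize0
    obtain ⟨k, hk, rfl, rfl⟩ := h2 a' x' a x hax' hax
    refine h'.trans ?_
    refine Finset.card_le_card_of_injOn (fun z => ((k : Perm (Fin n)) z.1, (k : Perm (Fin n)) z.2)) ?_ ?_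
    · intro z hz
      have hz := (hΦm _ _ _).1 hz
      refine (hΦm _ _ _).2 ⟨fun h => hz.1 ((k : Perm (Fin n)).injective h), ?_⟩
      exact hconj _ ((hLmem k).2 hk) _ _ _ _ hz.2
    · intro y _ z _ h
      simp only [Prod.mk.injEq, EmbeddingLike.apply_eq_iff_eq] at h
      exact Prod.ext h.1 h.2
  -- avoid
  have havoid : ∀ a x (S T : Finset (Fin n)), S.card + T.card < (Φ a x).card →
      ∃ z ∈ Φ a x, z.1 ∉ S ∧ z.2 ∉ T := by
    intro a x S T hST
    by_contra hcon
    push Not at hcon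
    have h1 : ((Φ a x).filter (fun z => z.1 ∈ S)).card ≤ S.card :=
      Finset.card_le_card_of_injOn Prod.fst (fun z hz => (Finset.mem_filter.1 hz).2)
        (fun y hy z hz h => hinj a x y (Finset.mem_filter.1 hy).1 z (Finset.mem_filter.1 hz).1 h)
    have h2 : ((Φ a x).filter (fun z => z.2 ∈ T)).card ≤ T.card :=
      Finset.card_le_card_of_injOn Prod.snd (fun z hz => (Finset.mem_filter.1 hz).2)
        (fun y hy z hz h => hinj2 a x y (Finset.mem_filter.1 hy).1 z (Finset.mem_filter.1 hz).1 h)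
    have h3 : Φ a x ⊆ ((Φ a x).filter (fun z => z.1 ∈ S)) ∪ ((Φ a x).filter (fun z => z.2 ∈ T)) := by
      intro z hz
      by_cases hzS : z.1 ∈ S
      · exact Finset.mem_union_left _ (Finset.mem_filter.2 ⟨hz, hzS⟩)
      · exact Finset.mem_union_right _ (Finset.mem_filter.2 ⟨hz, hcon z hz hzS⟩)
    have h4 := Finset.card_le_card h3
    have h5 := Finset.card_union_le ((Φ a x).filter (fun z => z.1 ∈ S)) ((Φ a x).filter (fun z => z.2 ∈ T))
    omega
  let a : Fin n := ⟨0, by omega⟩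
  let x : Fin n := ⟨1, by omega⟩
  have hax : a ≠ x := by simp [a, x]
  have h1mem : (1 : Perm (Fin n)) ∈ L := L.one_mem
  have hself : (a, x) ∈ Φ a x := by rw [hΦm]; exact ⟨hax, by simp⟩
  have hself' : (x, a) ∈ Φ a x := by rw [hΦm]; exact ⟨hax.symm, by simp [swap_comm x a]⟩
  -- choose b
  obtain ⟨b, hba, hbx, hb⟩ : ∃ b, b ≠ a ∧ b ≠ x ∧
      (9 ≤ (Φ a x).card ∨ ∀ z ∈ Φ a x, z.1 ≠ b ∧ z.2 ≠ b) := by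
    by_cases h9 : 9 ≤ (Φ a x).card
    · exact ⟨⟨2, by omega⟩, by simp [a], by simp [x], Or.inl h9⟩
    · have : ((Φ a x).image Prod.fst).card < n := by
        have := Finset.card_image_le (s := Φ a x) (f := Prod.fst)
        omega
      obtain ⟨b, hb⟩ : ∃ b, b ∉ (Φ a x).image Prod.fst := by
        by_contra hc
        push Not at hc
        have e := Finset.eq_univ_iff_forall.2 hc
        rw [e, Finset.card_univ, Fintype.card_fin] at this
        exact lt_irrefl _ this
      have hb' : ∀ z ∈ Φ a x, z.1 ≠ b := fun z hz h => hb (Finset.mem_image.2 ⟨z, hz, h⟩)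
      refine ⟨b, ?_, ?_, Or.inr fun z hz => ⟨hb' z hz, ?_⟩⟩
      · exact (hb' _ hself).symm
      · exact (hb' _ hself').symm
      · have hz' : z.swap ∈ Φ a x := by
          rw [hΦm] at hz ⊢; exact ⟨hz.1.symm, by simpa [swap_comm] using hz.2⟩
        exact hb' _ hz'
  -- choose (c,d)
  obtain ⟨⟨c, d⟩, hcd, hc, hd⟩ := havoid a b {a, b, x} {a, b, x} (by
    have := hsize a b hba.symm
    have h3 : ({a, b, x} : Finset (Fin n)).card ≤ 3 := Finset.card_le_three
    omega)
  simp only [Finset.mem_insert, Finset.mem_singleton, not_or] at hc hd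
  obtain ⟨hcd, hg⟩ := (hΦm _ _ _).1 hcd
  simp only at hcd hg
  obtain ⟨⟨e, f⟩, hef, he, hf⟩ : ∃ z ∈ Φ a x, z.1 ∉ ({a, b, c, d} : Finset (Fin n)) ∧
      z.2 ∉ ({a, b, c, d} : Finset (Fin n)) := by
    rcases hb with hb | hb
    · refine havoid a x _ _ ?_
      have : ({a, b, c, d} : Finset (Fin n)).card ≤ 4 := Finset.card_le_four
      omega
    · obtain ⟨z, hz, h1, h2⟩ := havoid a x {a, c, d} {a, c, d} (by
        have := hsize a x hax
        have h3 : ({a, c, d} : Finset (Fin n)).card ≤ 3 := Finset.card_le_three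
        omega)
      refine ⟨z, hz, ?_, ?_⟩
      · have := (hb z hz).1
        simp only [Finset.mem_insert, Finset.mem_singleton, not_or] at h1 ⊢
        tauto
      · have := (hb z hz).2
        simp only [Finset.mem_insert, Finset.mem_singleton, not_or] at h2 ⊢
        tauto
  simp only [Finset.mem_insert, Finset.mem_singleton, not_or] at he hf
  obtain ⟨hef, hk⟩ := (hΦm _ _ _).1 hef
  simp only at hef hk
  have h5 := hconj _ hg _ _ _ _ hk
  have ea : (swap a b * swap c d) a = b := by
    rw [Perm.mul_apply, swap_apply_of_ne_of_ne (Ne.symm hc.1) (Ne.symm hd.1), swap_apply_left]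
  have ex : (swap a b * swap c d) x = x := by
    rw [Perm.mul_apply, swap_apply_of_ne_of_ne (Ne.symm hc.2.2) (Ne.symm hd.2.2),
      swap_apply_of_ne_of_ne hax.symm hbx.symm]
  have ee : (swap a b * swap c d) e = e := by
    rw [Perm.mul_apply, swap_apply_of_ne_of_ne he.2.2.1 he.2.2.2,
      swap_apply_of_ne_of_ne he.1 he.2.1]
  have ef : (swap a b * swap c d) f = f := by
    rw [Perm.mul_apply, swap_apply_of_ne_of_ne hf.2.2.1 hf.2.2.2,
      swap_apply_of_ne_of_ne hf.1 hf.2.1]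
  rw [ea, ex, ee, ef] at h5
  have h6 := L.mul_mem hk (L.inv_mem h5)
  have e7 : swap a x * swap e f * (swap b x * swap e f)⁻¹ = swap x a * swap x b := by
    rw [mul_inv_rev, hsw, hsw, mul_assoc, ← mul_assoc (swap e f), swap_mul_self, one_mul,
      swap_comm a x, swap_comm b x]
  rw [e7] at h6
  exact hno' _ _ _ hax.symm hbx.symm hba.symm h6

theorem index_top_of_two_trans {n : ℕ} (hn : 9 ≤ n) (K : Subgroup (alternatingGroup (Fin n)))
    (hK : K.index ≤ n)
    (h2 : ∀ a b c d : Fin n, a ≠ b → c ≠ d →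
      ∃ k ∈ K, (k : Perm (Fin n)) a = c ∧ (k : Perm (Fin n)) b = d) : K = ⊤ := by
  obtain ⟨g, hg, h3⟩ := threeCycle_of_index hn K hK h2
  set L : Subgroup (Perm (Fin n)) := K.map (alternatingGroup (Fin n)).subtype with hL
  have h2' : MulAction.IsMultiplyPretransitive L (Fin n) 2 := by
    rw [MulAction.is_two_pretransitive_iff]
    intro a b c d hab hcd
    obtain ⟨k, hk, h⟩ := h2 a b c d hab hcd
    exact ⟨⟨k, Subgroup.mem_map_of_mem _ hk⟩, h⟩
  have hp : MulAction.IsPreprimitive L (Fin n) := MulAction.isPreprimitive_of_is_two_pretransitive h2'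
  have := Equiv.Perm.alternatingGroup_le_of_isPreprimitive_of_isThreeCycle_mem hp h3
    (Subgroup.mem_map_of_mem _ hg)
  rw [eq_top_iff]
  intro k _
  obtain ⟨k', hk', h⟩ := this k.2
  rwa [← Subtype.ext h]

/-- An automorphism of `A_n` fixing pointwise a 2-transitive subgroup is trivial. -/
theorem auto_eq_id {n : ℕ} (hn : 9 ≤ n) (θ : alternatingGroup (Fin n) ≃* alternatingGroup (Fin n))
    (H : Subgroup (alternatingGroup (Fin n)))
    (h2 : ∀ a b c d : Fin n, a ≠ b → c ≠ d →
      ∃ k ∈ H, (k : Perm (Fin n)) a = c ∧ (k : Perm (Fin n)) b = d)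
    (hθ : ∀ h ∈ H, θ h = h) : ∀ g, θ g = g := by
  classical
  have hone : ∀ a : Fin n, ∃ b, b ≠ a := by
    intro a
    have : Nontrivial (Fin n) := Fin.nontrivial_iff_two_le.2 (by omega)
    exact exists_ne a
  have h1 : ∀ a c : Fin n, ∃ k ∈ H, (k : Perm (Fin n)) a = c := by
    intro a c
    obtain ⟨b, hb⟩ := hone a
    obtain ⟨d, hd⟩ := hone c
    obtain ⟨k, hk, h, -⟩ := h2 a b c d hb.symm hd.symm
    exact ⟨k, hk, h⟩
  -- each stabilizer is preserved
  have key : ∀ x : Fin n, ∀ g : alternatingGroup (Fin n), (g : Perm (Fin n)) x = x →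
      (θ g : Perm (Fin n)) x = x := by
    intro x
    by_contra hcon
    push Not at hcon
    obtain ⟨g, hg, hgx⟩ := hcon
    let S := MulAction.stabilizer (alternatingGroup (Fin n)) x
    have hS : ∀ k : alternatingGroup (Fin n), k ∈ S ↔ (k : Perm (Fin n)) x = x := fun k => Iff.rfl
    let K := S.map θ.toMonoidHom
    have hidx : K.index = S.index := by
      have := Subgroup.index_map_equiv S θ
      exact this
    have hSi : S.index ≤ n := by
      rw [MulAction.index_stabilizer]
      calc _ ≤ (Set.univ : Set (Fin n)).ncard := Set.ncard_le_ncard (Set.subset_univ _)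
        _ = n := by simp [Set.ncard_univ]
    have hfix : ∀ b d, b ≠ x → d ≠ x → ∃ k ∈ K, (k : Perm (Fin n)) x = x ∧ (k : Perm (Fin n)) b = d := by
      intro b d hb hd
      obtain ⟨k, hk, h, h'⟩ := h2 x b x d hb.symm hd.symm
      exact ⟨k, ⟨k, (hS k).2 h, hθ k hk⟩, h, h'⟩
    have hgK : θ g ∈ K := ⟨g, (hS g).2 hg, rfl⟩
    have htr : ∀ a, ∃ k ∈ K, (k : Perm (Fin n)) a = x := by
      intro a
      by_cases hax : a = x
      · exact ⟨1, K.one_mem, by simp [hax]⟩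
      · obtain ⟨k, hk, -, h⟩ := hfix a _ hax hgx
        refine ⟨(θ g)⁻¹ * k, K.mul_mem (K.inv_mem hgK) hk, ?_⟩
        simp [h]
    have htop := index_top_of_two_trans hn K (hidx ▸ hSi) (by
      intro a b c d hab hcd
      obtain ⟨k1, hk1, e1⟩ := htr a
      obtain ⟨k2, hk2, e2⟩ := htr c
      obtain ⟨k, hk, ex, eb⟩ := hfix ((k1 : Perm (Fin n)) b) ((k2 : Perm (Fin n)) d)
        (fun h => hab ((k1 : Perm (Fin n)).injective (e1.trans h.symm)))
        (fun h => hcd ((k2 : Perm (Fin n)).injective (e2.trans h.symm)))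
      refine ⟨k2⁻¹ * k * k1, K.mul_mem (K.mul_mem (K.inv_mem hk2) hk) hk1, ?_, ?_⟩
      · simp only [Subgroup.coe_mul, Subgroup.coe_inv, Perm.mul_apply]
        rw [Equiv.Perm.inv_eq_iff_eq, e1, ex, e2]
      · simp [eb])
    have hStop : S = ⊤ := by
      rw [← Subgroup.index_eq_one, ← hidx, htop, Subgroup.index_top]
    obtain ⟨b, hb⟩ := hone x
    obtain ⟨k, hk, e⟩ := h1 x b
    have : k ∈ S := hStop ▸ Subgroup.mem_top k
    exact hb (e.symm.trans ((hS k).1 this))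
  -- points are determined by stabilizers
  have hdet : ∀ x y : Fin n, (∀ g : alternatingGroup (Fin n), (g : Perm (Fin n)) x = x →
      (g : Perm (Fin n)) y = y) → y = x := by
    intro x y h
    by_contra hne
    have : ∃ z, z ∉ ({x, y} : Finset (Fin n)) := by
      by_contra hc
      push Not at hc
      have h1 := Finset.eq_univ_iff_forall.2 hc
      have h2 : ({x, y} : Finset (Fin n)).card ≤ 2 := Finset.card_le_two
      rw [h1] at h2
      simp at h2
      omega
    obtain ⟨z, hz⟩ := this
    simp only [Finset.mem_insert, Finset.mem_singleton, not_or] at hz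
    obtain ⟨k, hk, e, e'⟩ := h2 x y x z (Ne.symm hne) (Ne.symm hz.1)
    exact hz.2 (e'.symm.trans (h k e))
  intro g
  apply Subtype.ext
  apply Equiv.ext
  intro x
  apply hdet
  intro s hs
  have h3 := key x (g⁻¹ * (θ.symm s) * g)
  have key' : ∀ x : Fin n, ∀ s : alternatingGroup (Fin n), (s : Perm (Fin n)) x = x →
      (θ.symm s : Perm (Fin n)) x = x := by
    intro x s hs
    let S := MulAction.stabilizer (alternatingGroup (Fin n)) x
    have hle : S.map θ.toMonoidHom ≤ S := by
      rintro _ ⟨k, hk, rfl⟩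
      exact key x k hk
    have heq : S.map θ.toMonoidHom = S := by
      apply Subgroup.eq_of_le_of_card_ge hle
      rw [Subgroup.card_map_of_injective θ.injective]
    have : s ∈ S.map θ.toMonoidHom := by rw [heq]; exact hs
    obtain ⟨k, hk, rfl⟩ := this
    rw [show θ.symm (θ.toMonoidHom k) = k from θ.symm_apply_apply k]
    exact hk
  have h4 := h3 (by simp [key' _ s hs])
  simp only [map_mul, map_inv, MulEquiv.apply_symm_apply, Subgroup.coe_mul, Subgroup.coe_inv,
    Perm.mul_apply] at h4
  rw [Equiv.Perm.inv_eq_iff_eq] at h4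
  exact h4
end partA


lemma num_one {q g a b : ℕ} (hq : 6 ≤ q) (hg : g + 1 = q ^ 2) (ha : a ∣ g) (hb : b ∣ g)
    (hs : a + b + q = q ^ 2) : False := by
  obtain ⟨c, hc⟩ := ha
  obtain ⟨e, he⟩ := hb
  have c0 : c ≠ 0 := by rintro rfl; nlinarith
  have e0 : e ≠ 0 := by rintro rfl; nlinarith
  have c1 : c ≠ 1 := by rintro rfl; omega
  have e1 : e ≠ 1 := by rintro rfl; omega
  have c2 : 2 ≤ c := by omega
  have e2 : 2 ≤ e := by omega
  have h1 : a * 2 ≤ g := by rw [hc]; exact Nat.mul_le_mul_left _ c2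
  have h2 : b * 2 ≤ g := by rw [he]; exact Nat.mul_le_mul_left _ e2
  rcases Nat.lt_or_ge 2 c with h | h
  · have : a * 3 ≤ g := by rw [hc]; exact Nat.mul_le_mul_left _ h
    nlinarith
  rcases Nat.lt_or_ge 2 e with h' | h'
  · have : b * 3 ≤ g := by rw [he]; exact Nat.mul_le_mul_left _ h'
    nlinarith
  have : c = 2 := by omega
  have : e = 2 := by omega
  subst_vars
  omega

lemma num_two_aux {q g b c : ℕ} (hq : 13 ≤ q ∨ q = 8) (hg : 2 * g + 1 = q ^ 2)
    (hc : c ∣ g) (hb : b * 2 = g)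
    (hs : g + b + c + q = q ^ 2) : False := by
  obtain ⟨e, he⟩ := hc
  rcases hq with hq | rfl
  · obtain ⟨t, rfl⟩ : ∃ t, q = t + 13 := ⟨q - 13, by omega⟩
    have h4 : 4 * c = (t + 12) * (t + 10) := by nlinarith
    have h2 : 2 * g = (t + 12) * (t + 14) := by nlinarith
    have h5 : (t + 12) * ((t + 10) * e) = (t + 12) * (2 * (t + 14)) := by
      calc (t + 12) * ((t + 10) * e) = 4 * c * e := by rw [h4]; ring
        _ = 2 * (2 * g) := by rw [he]; ring
        _ = _ := by rw [h2]; ring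
    have h6 := Nat.eq_of_mul_eq_mul_left (by omega) h5
    have : e ≤ 2 ∨ 3 ≤ e := by omega
    rcases this with h | h
    · nlinarith
    · nlinarith
  · omega

lemma num_two {q g a b c : ℕ} (hq : 13 ≤ q ∨ q = 8) (hg : 2 * g + 1 = q ^ 2) (ha : a ∣ g)
    (hb : b ∣ g) (hc : c ∣ g) (hs : a + b + c + q = q ^ 2) : False := by
  have hq6 : 6 ≤ q := by omega
  -- trichotomy for divisors
  have tri : ∀ x, x ∣ g → x = g ∨ x * 2 = g ∨ x * 3 ≤ g := by
    rintro x ⟨e, he⟩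
    have e0 : e ≠ 0 := by rintro rfl; nlinarith
    rcases (by omega : e = 1 ∨ e = 2 ∨ 3 ≤ e) with rfl | rfl | h
    · left; omega
    · right; left; omega
    · right; right; rw [he]; exact Nat.mul_le_mul_left _ h
  have aux := @num_two_aux q g
  rcases tri a ha with h1 | h1 | h1 <;> rcases tri b hb with h2 | h2 | h2 <;>
    rcases tri c hc with h3 | h3 | h3 <;>
  first
  | nlinarith
  | exact aux hq hg hc h2 (by omega)
  | exact aux hq hg hb h3 (by omega)
  | exact aux hq hg ha h3 (by omega)
  | exact aux hq hg hc h1 (by omega)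
  | exact aux hq hg ha h2 (by omega)
  | exact aux hq hg hb h1 (by omega)

lemma num_three_a {q u f τ m A d : ℕ} (hqu : q = u * f) (hu : 1 < u) (hf : 1 < f)
    (hd : d = 1 ∨ d = 2) (hτ : τ ∣ q - 1) (hm : m ≤ q + 1)
    (hmt : m * τ = f * (q - 1)) (hA : A * τ = d * (f - 1)) :
    A = 1 ∧ d = 2 ∧ f - 1 ∣ u - 1 := by
  have hq0 : 1 < q := by nlinarith
  have hfq : f ∣ q := ⟨u, by rw [hqu]; ring⟩
  have cop : Nat.Coprime f τ := by
    refine Nat.Coprime.coprime_dvd_left hfq (Nat.Coprime.coprime_dvd_right hτ ?_)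
    have : Nat.Coprime (q - 1 + 1) (q - 1) := by simp
    rwa [Nat.sub_add_cancel (by omega)] at this
  have hfm : f ∣ m := cop.dvd_of_dvd_mul_right ⟨q - 1, hmt⟩
  have hm1 : m ≠ q + 1 := by
    rintro rfl
    have := (Nat.dvd_add_right hfq).1 hfm
    have := Nat.dvd_one.1 this
    omega
  have hm2 : m ≠ q := by
    intro h
    have h1 : f * (u * τ) = f * (q - 1) := by rw [← hmt, h, hqu]; ring
    have h2 : u * τ = q - 1 := Nat.eq_of_mul_eq_mul_left (by omega) h1
    have h3 : u ∣ q - 1 := ⟨τ, h2.symm⟩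
    have h4 : u ∣ q := ⟨f, hqu⟩
    have h5 : u ∣ q - 1 + 1 := by rwa [Nat.sub_add_cancel (by omega)]
    have h6 := Nat.dvd_one.1 ((Nat.dvd_add_right h3).1 h5)
    omega
  have hm3 : m ≤ q - 1 := by omega
  have hτf : f ≤ τ := by
    by_contra h
    push Not at h
    have : m * τ < f * (q - 1) := by
      calc m * τ ≤ (q - 1) * τ := Nat.mul_le_mul_right _ hm3
        _ < (q - 1) * f := Nat.mul_lt_mul_of_pos_left h (by omega)
        _ = _ := by ring
    omega
  have hA0 : A ≠ 0 := by
    rintro rfl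
    have : 0 < d * (f - 1) := Nat.mul_pos (by omega) (by omega)
    omega
  have hAd : A < d := by
    by_contra h
    push Not at h
    have : d * (f - 1) < A * τ := by
      calc d * (f - 1) < d * f := Nat.mul_lt_mul_of_pos_left (by omega) (by omega)
        _ ≤ A * τ := Nat.mul_le_mul h hτf
    omega
  have hd2 : d = 2 := by omega
  have hA1 : A = 1 := by omega
  refine ⟨hA1, hd2, ?_⟩
  subst hA1 hd2
  have h1 : f - 1 ∣ q - 1 := Dvd.dvd.trans ⟨2, by omega⟩ hτ
  obtain ⟨e, rfl⟩ : ∃ e, f = e + 1 := ⟨f - 1, by omega⟩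
  obtain ⟨v, rfl⟩ : ∃ v, u = v + 1 := ⟨u - 1, by omega⟩
  have h2 : q - 1 = e * (v + 1) + v := by rw [hqu]; have : (v+1)*(e+1) = e*(v+1) + v + 1 := by ring
                                          omega
  simp only [Nat.add_sub_cancel] at h1 ⊢
  rw [h2] at h1
  exact (Nat.dvd_add_right (Dvd.intro _ rfl)).1 h1

lemma num_three_b {q u f g a b : ℕ} (hqu : q = u * f) (hu : 1 < u) (hf : 1 < f)
    (hq : 13 ≤ q ∨ q = 8) (hfu : f - 1 ∣ u - 1) (hg : g = (q + 1) * (u * (f - 1)))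
    (hag : a = g) (hb : b ∣ g) (hs : a + b + q = q ^ 2) : False := by
  obtain ⟨e, rfl⟩ : ∃ e, f = e + 1 := ⟨f - 1, by omega⟩
  obtain ⟨v, rfl⟩ : ∃ v, u = v + 1 := ⟨u - 1, by omega⟩
  simp only [Nat.add_sub_cancel] at *
  obtain ⟨s, hs'⟩ := hfu
  have hs0 : s ≠ 0 := by rintro rfl; omega
  have hb' : b = (v + 1) * (e * v + v - e) := by
    have : e * v + v - e + e = e * v + v := by
      apply Nat.sub_add_cancel; nlinarith
    zify at *
    have h3 : ((e * v + v - e : ℕ) : ℤ) = e * v + v - e := by linarith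
    rw [h3]
    have : (b : ℤ) = q ^ 2 - q - (q + 1) * ((v + 1) * e) := by linarith
    rw [this, hqu]; ring
  have hwe : e * v + v - e + e = e * v + v := by
      apply Nat.sub_add_cancel; nlinarith
  set w := e * v + v - e with hw
  have hdv : w ∣ (q + 1) * e := by
    have : (v + 1) * w ∣ (v + 1) * ((q + 1) * e) := by
      rw [← hb']; convert hb using 1; rw [hg]; ring
    exact Nat.dvd_of_mul_dvd_mul_left (by omega) this
  have hdv2 : w ∣ 2 * (e + 1) * e := by
    have h1 : (q + 1) * e = w * e + 2 * (e + 1) * e := by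
      rw [hqu]; nlinarith
    rw [h1] at hdv
    exact (Nat.dvd_add_right (Dvd.intro _ rfl)).1 hdv
  -- v = e * s
  rw [hs'] at hwe
  have hw2 : w = e * (e * s + s - 1) := by
    obtain ⟨r, rfl⟩ : ∃ r, s = r + 1 := ⟨s - 1, by omega⟩
    have h9 : e * (r + 1) + (r + 1) - 1 = e * (r + 1) + r := by omega
    rw [h9]
    nlinarith
  rw [hw2] at hdv2
  have hdv3 : e * s + s - 1 ∣ 2 * (e + 1) := by
    have : e * (e * s + s - 1) ∣ e * (2 * (e + 1)) := by
      convert hdv2 using 1; ring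
    exact Nat.dvd_of_mul_dvd_mul_left (by omega) this
  obtain ⟨t, ht⟩ := hdv3
  rcases (by omega : s = 1 ∨ s = 2 ∨ 3 ≤ s) with rfl | rfl | h
  · have h1 : e ∣ 2 := by
      have : e ∣ 2 * e + 2 := ⟨t, by rw [show e * 1 + 1 - 1 = e by omega] at ht; omega⟩
      exact (Nat.dvd_add_right (Dvd.intro_left _ rfl)).1 this
    have := Nat.le_of_dvd (by norm_num) h1
    have : e = 1 ∨ e = 2 := by omega
    rcases this with rfl | rfl <;> simp at hs' <;> subst hs' <;> omega
  · have h1 : 2 * e + 1 ∣ 1 := by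
      have : 2 * e + 1 ∣ (2 * e + 1) + 1 := ⟨t, by rw [show e * 2 + 2 - 1 = 2 * e + 1 by omega] at ht; omega⟩
      exact (Nat.dvd_add_right (dvd_refl _)).1 this
    have := Nat.dvd_one.1 h1
    omega
  · have ht0 : 1 ≤ t := by
      rcases Nat.eq_zero_or_pos t with rfl | h'
      · omega
      · exact h'
    have : e * s + s - 1 ≤ 2 * (e + 1) := by rw [ht]; exact Nat.le_mul_of_pos_right _ ht0
    have : e * 3 ≤ e * s := Nat.mul_le_mul_left _ h
    omega

lemma num_three_c {q u f g a b : ℕ} (hqu : q = u * f) (hu : 1 < u) (hf : 1 < f)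
    (hq : 13 ≤ q ∨ q = 8) (hfu : f - 1 ∣ u - 1) (hg : g = (q + 1) * (u * (f - 1)))
    (ha : a ∣ g) (hb : b ∣ g) (hs : a + b + q = q ^ 2) : False := by
  have tri : ∀ x, x ∣ g → x = g ∨ x * 2 ≤ g := by
    rintro x ⟨e, he⟩
    have e0 : e ≠ 0 := by
      rintro rfl
      have : 0 < g := by rw [hg]; exact Nat.mul_pos (by omega) (Nat.mul_pos (by omega) (by omega))
      omega
    rcases (by omega : e = 1 ∨ 2 ≤ e) with rfl | h
    · left; omega
    · right; rw [he]; exact Nat.mul_le_mul_left _ h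
  rcases tri a ha with h | h
  · exact num_three_b hqu hu hf hq hfu hg h hb hs
  rcases tri b hb with h' | h'
  · exact num_three_b hqu hu hf hq hfu hg h' ha (by omega)
  have : q ^ 2 ≤ g + q := by omega
  obtain ⟨e, rfl⟩ : ∃ e, f = e + 1 := ⟨f - 1, by omega⟩
  simp only [Nat.add_sub_cancel] at hg
  have : u * e + u = q := by rw [hqu]; ring
  nlinarith

section core
open MulAction

lemma core_mod {M P : Type*} [Group M] [MulAction M P] [Finite M] [Finite P] {p k : ℕ}
    [Fact p.Prime] (Q : Subgroup M) (x : P) (hQc : Nat.card Q ∣ p ^ k) (hQ1 : Nat.card Q ≠ 1)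
    (hQ : ∀ g ∈ Q, g ≠ 1 → ∀ y : P, g • y = y ↔ y = x) (z : P) :
    (x ∈ orbit M z → Nat.card (orbit M z) ≡ 1 [MOD p]) ∧
    (x ∉ orbit M z → Nat.card (orbit M z) ≡ 0 [MOD p]) := by
  obtain ⟨j, -, hj⟩ := (Nat.dvd_prime_pow (Fact.out : p.Prime)).1 hQc
  have hp : IsPGroup p Q := IsPGroup.of_card hj
  have h := hp.card_modEq_card_fixedPoints (orbit M z)
  obtain ⟨g, hg⟩ : ∃ g : Q, g ≠ 1 := by
    by_contra hc
    push Not at hc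
    apply hQ1
    have : Subsingleton Q := ⟨fun a b => by rw [hc a, hc b]⟩
    exact Nat.card_of_subsingleton 1
  have hfix : ∀ y : orbit M z, y ∈ fixedPoints Q (orbit M z) ↔ (y : P) = x := by
    intro y
    constructor
    · intro hy
      have h1 := hy g
      exact (hQ g g.2 (fun h => hg (Subtype.ext h)) y).1 (congrArg Subtype.val h1)
    · intro hy g
      by_cases h1 : (g : M) = 1
      · have : g = 1 := Subtype.ext h1
        rw [this, one_smul]
      · apply Subtype.ext
        exact (hQ g g.2 h1 y).2 hy
  constructor
  · intro hx
    have : Nat.card (fixedPoints Q (orbit M z)) = 1 := by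
      have : fixedPoints Q (orbit M z) = {⟨x, hx⟩} := by
        ext y; rw [hfix]; simp [Subtype.ext_iff]
      rw [this]; simp
    rwa [this] at h
  · intro hx
    have : Nat.card (fixedPoints Q (orbit M z)) = 0 := by
      have : fixedPoints Q (orbit M z) = ∅ := by
        ext y; rw [hfix]
        simp only [Set.mem_empty_iff_false, iff_false]
        intro h; exact hx (h ▸ y.2)
      rw [this]; simp
    rwa [this] at h

lemma core_orbit {M P : Type*} [Group M] [MulAction M P] [Finite M] [Finite P] (x : P) :
    Nat.card (orbit M x) * Nat.card (stabilizer M x) = Nat.card M := by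
  have := Fintype.ofFinite M
  have := Fintype.ofFinite (orbit M x)
  have := Fintype.ofFinite (stabilizer M x)
  simp only [Nat.card_eq_fintype_card]
  exact card_orbit_mul_card_stabilizer_eq_card_group M x

lemma core_disj {M P : Type*} [Group M] [MulAction M P] [Finite P] (x y : P)
    (h : x ∉ orbit M y) :
    Nat.card (orbit M x) + Nat.card (orbit M y) ≤ Nat.card P := by
  classical
  have hd : Disjoint (orbit M x) (orbit M y) := by
    rw [Set.disjoint_left]
    intro z hz hz'
    exact h (by rw [← orbit_eq_iff] at *; rw [← hz, hz'])
  rw [Nat.card_coe_set_eq, Nat.card_coe_set_eq, ← Set.ncard_union_eq hd]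
  exact Set.ncard_le_card _

/-- orbit sizes on `Y` -/
lemma core_sizes {M Y : Type*} [Group M] [MulAction M Y] [Finite M] [Finite Y] (s d : ℕ)
    (Z : Subgroup M) (hZ : Nat.card Z = d) (hZY : ∀ z ∈ Z, ∀ y : Y, z • y = y) (y0 : Y)
    (hs : Nat.card (orbit M y0) = s) :
    ∃ (Ω : Type) (_ : Fintype Ω) (_ : DecidableEq Ω) (a : Ω → ℕ) (S : Finset Ω),
      S.card + 1 = Nat.card (Quotient (orbitRel M Y)) ∧ (∀ ω, d * a ω ∣ Nat.card M) ∧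
      (∑ ω ∈ S, a ω) + s = Nat.card Y := by
  classical
  let n := Nat.card (Quotient (orbitRel M Y))
  let e : Quotient (orbitRel M Y) ≃ Fin n := Finite.equivFin _
  let r : Fin n → Y := fun i => Quotient.out (e.symm i)
  refine ⟨Fin n, inferInstance, inferInstance, fun i => Nat.card (orbit M (r i)),
    Finset.univ.erase (e ⟦y0⟧), ?_, ?_, ?_⟩
  · rw [Finset.card_erase_add_one (Finset.mem_univ _)]; simp [n]
  · intro i
    rw [← core_orbit (M := M) (r i), mul_comm]
    apply Nat.mul_dvd_mul_left
    rw [← hZ]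
    apply Subgroup.card_dvd_of_le
    intro z hz
    exact hZY z hz _
  · have h1 : Nat.card (orbit M (r (e ⟦y0⟧))) = s := by
      have : orbit M (r (e ⟦y0⟧)) = orbit M y0 := by
        rw [orbit_eq_iff]
        have : (⟦r (e ⟦y0⟧)⟧ : Quotient (orbitRel M Y)) = ⟦y0⟧ := by simp [r]
        exact Quotient.exact this
      rw [this, hs]
    have := Finset.sum_erase_add Finset.univ (fun i => Nat.card (orbit M (r i)))
      (Finset.mem_univ (e ⟦y0⟧))
    simp only [h1] at this
    rw [this]
    have := Fintype.ofFinite (orbitRel.Quotient M Y)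
    rw [Nat.card_congr (selfEquivSigmaOrbits M Y), Nat.card_sigma]
    symm
    exact Fintype.sum_equiv e _ _ (fun ω => by simp [r])

lemma core_master {M P Y : Type*} [Group M] [Finite M] [MulAction M P] [MulAction M Y]
    [Finite P] [Finite Y] [Fintype P] (q d : ℕ)
    (Z : Subgroup M) (hZ : Nat.card Z = d) (T : M → Prop) [DecidablePred T]
    [DecidablePred (· ∈ Z)]
    (hW : ∀ g : M, Nat.card {y : Y // g • y = y} +
      (if T g then Nat.card {x : P // g • x = x} else 0) = if g ∈ Z then q ^ 2 + q + 2 else 2)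
    (u : P → ℕ) (hT : ∀ x, Nat.card {g : M // g • x = x ∧ T g} = d * u x) :
    Nat.card (Quotient (orbitRel M Y)) * Nat.card M + d * ∑ x, u x
      = d * (q ^ 2 + q) + 2 * Nat.card M := by
  classical
  have := Fintype.ofFinite M
  have := Fintype.ofFinite Y
  have := Fintype.ofFinite (Quotient (orbitRel M Y))
  have hB := sum_card_fixedBy_eq_card_orbits_mul_card_group M Y
  have h1 : ∑ g : M, (Nat.card {y : Y // g • y = y} +
      (if T g then Nat.card {x : P // g • x = x} else 0))
      = ∑ g : M, (if g ∈ Z then q ^ 2 + q + 2 else 2) := Finset.sum_congr rfl (fun g _ => hW g)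
  rw [Finset.sum_add_distrib] at h1
  have h2 : ∑ g : M, Nat.card {y : Y // g • y = y}
      = Nat.card (Quotient (orbitRel M Y)) * Nat.card M := by
    rw [Nat.card_eq_fintype_card, Nat.card_eq_fintype_card, ← hB]
    refine Finset.sum_congr rfl (fun g _ => ?_)
    rw [← Nat.card_eq_fintype_card]
    rfl
  have h3 : ∑ g : M, (if T g then Nat.card {x : P // g • x = x} else 0) = d * ∑ x, u x := by
    rw [Finset.mul_sum]
    simp_rw [← hT]
    have : ∀ g : M, (if T g then Nat.card {x : P // g • x = x} else 0)
        = ∑ x : P, if g • x = x ∧ T g then 1 else 0 := by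
      intro g
      split_ifs with h
      · rw [Nat.card_eq_fintype_card, Fintype.card_subtype]; simp [h]
      · simp [h]
    simp_rw [this]
    rw [Finset.sum_comm]
    refine Finset.sum_congr rfl (fun x _ => ?_)
    rw [Nat.card_eq_fintype_card, Fintype.card_subtype]; simp
  have h4 : ∑ g : M, (if g ∈ Z then q ^ 2 + q + 2 else 2) = d * (q ^ 2 + q) + 2 * Nat.card M := by
    have : ∀ g : M, (if g ∈ Z then q ^ 2 + q + 2 else 2) = (if g ∈ Z then q ^ 2 + q else 0) + 2 := by
      intro g; split_ifs <;> rfl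
    simp_rw [this]
    rw [Finset.sum_add_distrib, ← Finset.sum_filter]
    simp only [Finset.sum_const, smul_eq_mul, Finset.card_univ]
    rw [← Fintype.card_subtype, ← Nat.card_eq_fintype_card, ← Nat.card_eq_fintype_card]
    rw [show Nat.card {x // x ∈ Z} = d from hZ]; ring
  rw [← h2, ← h3, h1, h4]

theorem core {M P Y : Type*} [Group M] [Finite M] [MulAction M P] [MulAction M Y]
    [Finite P] [Finite Y] (p k q d m : ℕ) [Fact p.Prime] (hq : q = p ^ k)
    (hq' : 13 ≤ q ∨ q = 8) (ι : P → Y) (hι : Function.Injective ι)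
    (hιe : ∀ (g : M) x, ι (g • x) = g • ι x) (hP : Nat.card P = q + 1)
    (hY : Nat.card Y = q ^ 2 + 1) (Z : Subgroup M) (hZ : Nat.card Z = d) (hd : d = 1 ∨ d = 2)
    (hZY : ∀ z ∈ Z, ∀ y : Y, z • y = y) (T : M → Prop) [DecidablePred T]
    [DecidablePred (· ∈ Z)]
    (hW : ∀ g : M, Nat.card {y : Y // g • y = y} +
      (if T g then Nat.card {x : P // g • x = x} else 0) = if g ∈ Z then q ^ 2 + q + 2 else 2)
    (Q : P → Subgroup M) (τ : P → ℕ)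
    (hQ : ∀ x, ∀ g ∈ Q x, g ≠ 1 → ∀ y : P, g • y = y ↔ y = x)
    (hQq : ∀ x, Nat.card (Q x) ∣ q) (hτ : ∀ x, τ x ∣ q - 1)
    (hn : ∀ x, Nat.card (stabilizer M x) = Nat.card (Q x) * τ x)
    (hT : ∀ x, Nat.card {g : M // g • x = x ∧ T g} = d * Nat.card (Q x))
    (hm : Nat.card M * m = q * (q ^ 2 - 1)) (hm' : m ≤ q + 1) :
    (∃ x : P, ∀ g : M, g • x = x) ∨ ∀ x, Nat.card (Q x) = q := by
  classical
  have := Fintype.ofFinite P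
  set h := Nat.card M with hh
  have hq8 : 8 ≤ q := by omega
  have hq2 : q ^ 2 - 1 = (q + 1) * (q - 1) := by
    obtain ⟨t, rfl⟩ : ∃ t, q = t + 1 := ⟨q - 1, by omega⟩
    simp only [Nat.add_sub_cancel]
    rw [show (t + 1) ^ 2 = (t + 1 + 1) * t + 1 by ring]; simp
  have hqq : q ^ 2 = (q + 1) * (q - 1) + 1 := by
    have : 0 < q ^ 2 := by positivity
    omega
  have hge : q * (q - 1) ≤ h := by
    by_contra hc
    push Not at hc
    have : h * m < (q * (q - 1)) * (q + 1) :=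
      calc h * m ≤ h * (q + 1) := Nat.mul_le_mul_left _ hm'
        _ < _ := Nat.mul_lt_mul_of_pos_right hc (by omega)
    rw [hm, hq2] at this
    have e : q * ((q + 1) * (q - 1)) = (q * (q - 1)) * (q + 1) := by ring
    omega
  have horb : ∀ x, Nat.card (orbit M x) * (Nat.card (Q x) * τ x) = h := fun x => by
    rw [← hn]; exact core_orbit x
  have hole : ∀ x : P, Nat.card (orbit M x) ≤ q + 1 := fun x => by
    rw [← hP]; exact Nat.card_le_card_of_injective _ Subtype.val_injective
  have hcop : Nat.Coprime q (q - 1) := by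
    have : Nat.Coprime (q - 1 + 1) (q - 1) := by simp
    rwa [Nat.sub_add_cancel (by omega)] at this
  have hgcd : ∀ x, Nat.card (Q x) = Nat.gcd (Nat.card (stabilizer M x)) q := by
    intro x
    obtain ⟨f, hf⟩ := hQq x
    have : Nat.Coprime (τ x) f :=
      ((hcop.coprime_dvd_left ⟨_, hf.trans (mul_comm _ _)⟩).coprime_dvd_right (hτ x)).symm
    conv_rhs => rw [hn, hf, Nat.gcd_mul_left]
    rw [this.gcd_eq_one, mul_one]
  have hst : ∀ x y : P, x ∈ orbit M y → Nat.card (stabilizer M x) = Nat.card (stabilizer M y) := by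
    intro x y hxy
    have h1 := core_orbit (M := M) x
    have h2 := core_orbit (M := M) y
    rw [orbit_eq_iff.2 hxy, ← h2] at h1
    refine Nat.eq_of_mul_eq_mul_left ?_ h1
    have : Nonempty (orbit M y) := ⟨⟨y, mem_orbit_self y⟩⟩
    exact Nat.card_pos
  -- points with trivial unipotent part
  have hone : ∀ x, Nat.card (Q x) = 1 → τ x = q - 1 ∧ q ≤ Nat.card (orbit M x) := by
    intro x hx
    have h1 := horb x
    rw [hx, one_mul] at h1
    obtain ⟨c, hc⟩ := hτ x
    have ho := hole x
    have hτq : τ x = q - 1 := by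
      have c0 : c ≠ 0 := by rintro rfl; omega
      rcases (by omega : c = 1 ∨ 2 ≤ c) with rfl | h2
      · omega
      · exfalso
        have h3 : τ x * 2 ≤ q - 1 := by rw [hc]; exact Nat.mul_le_mul_left _ h2
        have h4 : q * (τ x * 2) ≤ (q + 1) * τ x := by
          calc q * (τ x * 2) ≤ q * (q - 1) := Nat.mul_le_mul_left _ h3
            _ ≤ _ := hge
            _ = _ := h1.symm
            _ ≤ _ := Nat.mul_le_mul_right _ ho
        have h5 : 0 < τ x := by
          rcases Nat.eq_zero_or_pos (τ x) with h0 | h0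
          · rw [h0] at hc; omega
          · exact h0
        nlinarith
    refine ⟨hτq, ?_⟩
    rw [hτq] at h1
    rw [← h1] at hge
    exact Nat.le_of_mul_le_mul_right hge (by omega)
  have x0 : Nonempty P := by
    by_contra hc
    rw [not_nonempty_iff] at hc
    rw [Nat.card_of_isEmpty] at hP
    omega
  obtain ⟨x0⟩ := x0
  have hmaster := core_master q d Z hZ T hW (fun x => Nat.card (Q x)) hT
  -- sizes given transitivity
  have hsz : (∀ x y : P, x ∈ orbit M y) →
      ∃ (Ω : Type) (_ : Fintype Ω) (_ : DecidableEq Ω) (a : Ω → ℕ) (S : Finset Ω),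
      S.card + 1 = Nat.card (Quotient (orbitRel M Y)) ∧ (∀ ω, d * a ω ∣ h) ∧
      (∑ ω ∈ S, a ω) + q = q ^ 2 := by
    intro htr
    have : Nat.card (orbit M (ι x0)) = q + 1 := by
      have e : orbit M (ι x0) = Set.range ι := by
        ext y
        constructor
        · rintro ⟨g, rfl⟩
          exact ⟨g • x0, hιe g x0⟩
        · rintro ⟨x, rfl⟩
          obtain ⟨g, rfl⟩ := htr x x0
          exact ⟨g, (hιe g x0).symm⟩
      rw [e, Nat.card_range_of_injective hι, hP]
    obtain ⟨Ω, i1, i2, a, S, h1, h2, h3⟩ := core_sizes (q + 1) d Z hZ hZY (ι x0) this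
    refine ⟨Ω, i1, i2, a, S, h1, h2, ?_⟩
    rw [hY] at h3; omega
  by_cases hA : ∃ y, Nat.card (Q y) = 1
  · obtain ⟨y, hy⟩ := hA
    obtain ⟨hy1, hy2⟩ := hone y hy
    by_cases hB : ∃ x, Nat.card (Q x) ≠ 1
    · -- Case II
      left
      obtain ⟨x, hx⟩ := hB
      have hnot : x ∉ orbit M y := by
        intro hxy
        apply hx
        rw [hgcd, hst x y hxy, ← hgcd, hy]
      have h1 := core_disj x y hnot
      rw [hP] at h1
      refine ⟨x, fun g => ?_⟩
      have h2 : Nat.card (orbit M x) ≤ 1 := by omega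
      have : Subsingleton (orbit M x) := (Finite.card_le_one_iff_subsingleton).1 h2
      have := Subsingleton.elim (⟨g • x, mem_orbit x g⟩ : orbit M x) ⟨x, mem_orbit_self x⟩
      exact congrArg Subtype.val this
    · -- Case I
      exfalso
      push Not at hB
      have htr : ∀ x y : P, x ∈ orbit M y := by
        intro x y
        by_contra hc
        have h1 := core_disj x y hc
        have h2 := (hone x (hB x)).2
        have h3 := (hone y (hB y)).2
        rw [hP] at h1
        omega
      have hoy : Nat.card (orbit M y) = q + 1 := by
        have : orbit M y = Set.univ := Set.eq_univ_of_forall (fun x => htr x y)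
        rw [this, ← hP]; exact Nat.card_congr (Equiv.Set.univ P)
      have hh1 : h + 1 = q ^ 2 := by
        rw [← horb y, hoy, hy, hy1, hqq, one_mul]
      simp only [hB, Finset.sum_const, Finset.card_univ, smul_eq_mul, mul_one] at hmaster
      rw [← Nat.card_eq_fintype_card, hP, ← hh] at hmaster
      have hN : Nat.card (Quotient (orbitRel M Y)) = d + 2 := by
        have h0 : 0 < h := Nat.card_pos
        have : Nat.card (Quotient (orbitRel M Y)) * h = (d + 2) * h := by
          have : d * h + d = d * q ^ 2 := by rw [← hh1]; ring
          nlinarith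
        exact Nat.eq_of_mul_eq_mul_right h0 this
      obtain ⟨Ω, i1, i2, a, S, h1, h2, h3⟩ := hsz htr
      rw [hN] at h1
      rcases hd with rfl | rfl
      · obtain ⟨ω1, ω2, hne, rfl⟩ := Finset.card_eq_two.1 (by omega : S.card = 2)
        rw [Finset.sum_pair hne] at h3
        exact num_one (by omega) hh1 (by simpa using h2 ω1) (by simpa using h2 ω2) h3
      · obtain ⟨ω1, ω2, ω3, hne1, hne2, hne3, rfl⟩ := Finset.card_eq_three.1 (by omega : S.card = 3)
        obtain ⟨g, hg⟩ := Dvd.dvd.trans (Dvd.intro _ rfl) (h2 ω1)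
        rw [Finset.sum_insert (by simp [hne1, hne2]), Finset.sum_pair hne3, ← add_assoc] at h3
        have hdd : ∀ ω, a ω ∣ g := fun ω => by
          have := h2 ω
          rw [hg] at this
          exact Nat.dvd_of_mul_dvd_mul_left (by norm_num) this
        exact num_two hq' (by omega) (hdd ω1) (hdd ω2) (hdd ω3) h3
  · -- Case III
    push Not at hA
    right
    have htr : ∀ x y : P, x ∈ orbit M y := by
      intro x y
      by_contra hc
      have h1 := (core_mod (k := k) (Q x) x (hq ▸ hQq x) (hA x) (hQ x) y).2 hc
      have h2 := (core_mod (k := k) (Q y) y (hq ▸ hQq y) (hA y) (hQ y) y).1 (mem_orbit_self y)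
      have h3 := h1.symm.trans h2
      have hp := (Fact.out : p.Prime).one_lt
      rw [Nat.ModEq, Nat.zero_mod, Nat.mod_eq_of_lt hp] at h3
      omega
    have hoy : Nat.card (orbit M x0) = q + 1 := by
      have : orbit M x0 = Set.univ := Set.eq_univ_of_forall (fun x => htr x x0)
      rw [this, ← hP]; exact Nat.card_congr (Equiv.Set.univ P)
    have hconst : ∀ x, Nat.card (Q x) = Nat.card (Q x0) := fun x => by
      rw [hgcd, hgcd, hst x x0 (htr x x0)]
    suffices Nat.card (Q x0) = q from fun x => by rw [hconst, this]
    by_contra hne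
    have hu1 := hA x0
    have hdv := hQq x0
    have hor := horb x0
    have hτ0 := hτ x0
    simp only [hconst] at hmaster
    set u := Nat.card (Q x0) with hu
    have hu0 : 0 < u := Nat.card_pos
    obtain ⟨f, hf⟩ := hdv
    have hf1 : 1 < f := by
      rcases (by omega : f = 0 ∨ f = 1 ∨ 1 < f) with rfl | rfl | h'
      · omega
      · omega
      · exact h'
    simp only [Finset.sum_const, Finset.card_univ, smul_eq_mul] at hmaster
    rw [← Nat.card_eq_fintype_card, hP, ← hh] at hmaster
    rw [hoy] at hor
    set t := τ x0 with ht
    set N := Nat.card (Quotient (orbitRel M Y)) with hN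
    have hmt : m * t = f * (q - 1) := by
      have h1 : (q + 1) * u * (m * t) = (q + 1) * u * (f * (q - 1)) := by
        calc (q + 1) * u * (m * t) = (q + 1) * (u * t) * m := by ring
          _ = q * ((q + 1) * (q - 1)) := by rw [hor, hm, hq2]
          _ = (u * f) * ((q + 1) * (q - 1)) := by rw [← hf]
          _ = _ := by ring
      exact Nat.eq_of_mul_eq_mul_left (Nat.mul_pos (by omega) hu0) h1
    have hNA : N * t = d * (f - 1) + 2 * t := by
      have h1 : (q + 1) * u * (N * t) = (q + 1) * u * (d * (f - 1) + 2 * t) := by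
        have h2 : (q + 1) * u * (N * t) = N * h := by rw [← hor]; ring
        obtain ⟨e, rfl⟩ : ∃ e, f = e + 1 := ⟨f - 1, by omega⟩
        rw [Nat.add_sub_cancel]
        have h3 : d * (q ^ 2 + q) = (q + 1) * (u * (d * e)) + d * ((q + 1) * u) := by
          calc d * (q ^ 2 + q) = d * (q + 1) * q := by ring
            _ = d * (q + 1) * (u * (e + 1)) := by rw [← hf]
            _ = _ := by ring
        rw [h2]
        have h4 : 2 * h = (q + 1) * u * (2 * t) := by rw [← hor]; ring
        rw [h3, h4] at hmaster
        have : (q + 1) * u * (d * e + 2 * t) = (q + 1) * (u * (d * e)) + (q + 1) * u * (2 * t) := by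
          ring
        omega
      exact Nat.eq_of_mul_eq_mul_left (Nat.mul_pos (by omega) hu0) h1
    have hN2 : 2 ≤ N := by
      by_contra hc
      push Not at hc
      have : N * t ≤ 1 * t := Nat.mul_le_mul_right _ (by omega)
      have : 0 < d * (f - 1) := Nat.mul_pos (by omega) (by omega)
      omega
    obtain ⟨A, hAN⟩ : ∃ A, N = A + 2 := ⟨N - 2, by omega⟩
    have hAt : A * t = d * (f - 1) := by
      rw [hAN, add_mul] at hNA
      omega
    obtain ⟨rfl, hd2, hfu⟩ := num_three_a hf (by omega) hf1 hd hτ0 hm' hmt hAt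
    obtain ⟨Ω, i1, i2, a, S, h1, h2, h3⟩ := hsz htr
    rw [hAN] at h1
    obtain ⟨ω1, ω2, hne', rfl⟩ := Finset.card_eq_two.1 (by omega : S.card = 2)
    rw [Finset.sum_pair hne'] at h3
    have hdd : ∀ ω, a ω ∣ (q + 1) * (u * (f - 1)) := fun ω => by
      have h4 := h2 ω
      have h5 : h = 2 * ((q + 1) * (u * (f - 1))) := by
        rw [← hor, show t = 2 * (f - 1) by rw [← hd2, ← hAt, one_mul]]; ring
      rw [h5, hd2] at h4
      exact Nat.dvd_of_mul_dvd_mul_left (by norm_num) h4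
    exact num_three_c hf (by omega) hf1 hq' hfu rfl (hdd ω1) (hdd ω2) h3

end core

section geom
open Matrix OnePoint MulAction

/-- Moebius action of `SL(2,F)` on the projective line over an extension. -/
noncomputable instance slAct {F E : Type*} [Field F] [Field E] [Algebra F E] [DecidableEq E] :
    MulAction (SpecialLinearGroup (Fin 2) F) (OnePoint E) :=
  MulAction.compHom _ (SpecialLinearGroup.mapGL (n := Fin 2) (R := F) E)

variable {F E : Type*} [Field F] [Field E] [Algebra F E] [DecidableEq E]

local notation "γ" => algebraMap F E

lemma sl_det (g : SpecialLinearGroup (Fin 2) F) : g 0 0 * g 1 1 - g 0 1 * g 1 0 = 1 := by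
  have := g.2
  rwa [Matrix.det_fin_two] at this

lemma sl_smul_infty (g : SpecialLinearGroup (Fin 2) F) :
    g • (∞ : OnePoint E) = if γ (g 1 0) = 0 then ∞ else ((γ (g 0 0) / γ (g 1 0) : E) : OnePoint E) :=
  OnePoint.smul_infty_eq_ite _

lemma sl_smul_coe (g : SpecialLinearGroup (Fin 2) F) (z : E) :
    g • (z : OnePoint E) = if γ (g 1 0) * z + γ (g 1 1) = 0 then ∞ else
      (((γ (g 0 0) * z + γ (g 0 1)) / (γ (g 1 0) * z + γ (g 1 1)) : E) : OnePoint E) :=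
  OnePoint.smul_some_eq_ite

lemma sl_fix_infty (g : SpecialLinearGroup (Fin 2) F) :
    g • (∞ : OnePoint E) = ∞ ↔ g 1 0 = 0 := by
  rw [sl_smul_infty]
  simp

lemma sl_fix_coe (g : SpecialLinearGroup (Fin 2) F) (z : E) :
    g • (z : OnePoint E) = z ↔
      γ (g 1 0) * z ^ 2 + (γ (g 1 1) - γ (g 0 0)) * z - γ (g 0 1) = 0 := by
  have hd : γ (g 0 0) * γ (g 1 1) - γ (g 0 1) * γ (g 1 0) = 1 := by
    rw [← map_mul, ← map_mul, ← map_sub, sl_det, map_one]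
  rw [sl_smul_coe]
  split_ifs with h
  · refine ⟨fun hg => (infty_ne_coe _ hg).elim, fun hg => ?_⟩
    exfalso
    grind
  · rw [coe_eq_coe, div_eq_iff h]
    grind

lemma sl_center (g : SpecialLinearGroup (Fin 2) F) :
    g ∈ Subgroup.center (SpecialLinearGroup (Fin 2) F) ↔
      g 1 0 = 0 ∧ g 0 1 = 0 ∧ g 0 0 = g 1 1 := by
  rw [Matrix.SpecialLinearGroup.mem_center_iff]
  constructor
  · rintro ⟨r, -, h⟩
    have e : ∀ i j, g i j = (scalar (Fin 2) r) i j := fun i j => by rw [h]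
    simp [e]
  · rintro ⟨h1, h2, h3⟩
    have := sl_det g
    rw [h1, h2, ← h3] at this
    refine ⟨g 0 0, ?_, ?_⟩
    · rw [Fintype.card_fin]; linear_combination this
    · ext i j
      fin_cases i <;> fin_cases j <;> simp [h1, h2, h3]

lemma sl_fix_center {g : SpecialLinearGroup (Fin 2) F}
    (hg : g ∈ Subgroup.center (SpecialLinearGroup (Fin 2) F)) (y : OnePoint E) : g • y = y := by
  rw [sl_center] at hg
  obtain ⟨h1, h2, h3⟩ := hg
  cases y with
  | infty => rw [sl_fix_infty, h1]
  | coe z => rw [sl_fix_coe, h1, h2, h3]; simp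

/-- parabolic fixed points -/
lemma sl_fix_par {g : SpecialLinearGroup (Fin 2) F}
    (hg : g ∉ Subgroup.center (SpecialLinearGroup (Fin 2) F))
    (ht : (g 0 0 + g 1 1) ^ 2 = 4) : ∃ y0 : OnePoint E, ∀ y, g • y = y ↔ y = y0 := by
  rw [sl_center] at hg
  have hd := sl_det g
  obtain ⟨s, hs, hs2⟩ : ∃ s : F, g 0 0 + g 1 1 = 2 * s ∧ s ^ 2 = 1 := by
    have : (g 0 0 + g 1 1 - 2) * (g 0 0 + g 1 1 + 2) = 0 := by linear_combination ht
    rcases mul_eq_zero.1 this with h | h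
    · exact ⟨1, by linear_combination h, by ring⟩
    · exact ⟨-1, by linear_combination h, by ring⟩
  have h11 : g 1 1 = 2 * s - g 0 0 := by linear_combination hs
  by_cases hc : g 1 0 = 0
  · refine ⟨∞, fun y => ?_⟩
    cases y with
    | infty => rw [sl_fix_infty, hc]; simp
    | coe z =>
      rw [sl_fix_coe, hc]
      have h0 : g 0 0 = s := by
        have : (g 0 0 - s) ^ 2 = 0 := by
          rw [hc, h11] at hd
          linear_combination -hd + hs2
        have := pow_eq_zero_iff (two_ne_zero) |>.1 this
        linear_combination this
      have h1 : g 1 1 = s := by rw [h11, h0]; ring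
      have hb : g 0 1 ≠ 0 := fun hb => hg ⟨hc, hb, by rw [h0, h1]⟩
      rw [h0, h1]
      simp [hb]
  · have hc' : γ (g 1 0) ≠ 0 := by simpa using hc
    refine ⟨((γ (g 0 0 - s) / γ (g 1 0) : E) : OnePoint E), fun y => ?_⟩
    cases y with
    | infty =>
      rw [sl_fix_infty]
      simp [hc]
    | coe z =>
      rw [sl_fix_coe, coe_eq_coe, eq_div_iff hc']
      have key : γ (g 1 0) * (γ (g 1 0) * z ^ 2 + (γ (g 1 1) - γ (g 0 0)) * z - γ (g 0 1))
          = (z * γ (g 1 0) - γ (g 0 0 - s)) ^ 2 := by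
        have hd' : γ (g 0 0) * γ (g 1 1) - γ (g 0 1) * γ (g 1 0) = 1 := by
          rw [← map_mul, ← map_mul, ← map_sub, hd, map_one]
        have hs2' : γ s ^ 2 = 1 := by rw [← map_pow, hs2, map_one]
        have h11' : γ (g 1 1) = 2 * γ s - γ (g 0 0) := by
          rw [h11, map_sub, map_mul, map_ofNat]
        rw [map_sub, h11']
        rw [h11'] at hd'
        linear_combination hd' - hs2'
      constructor
      · intro h
        rw [h, mul_zero] at key
        have := pow_eq_zero_iff (two_ne_zero) |>.1 key.symm
        linear_combination this
      · intro h
        rw [h, sub_self, zero_pow two_ne_zero] at key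
        exact (mul_eq_zero.1 key).resolve_left hc'

lemma sl_fix_nonpar (hE : ∀ a b : F, ∃ z : E, z ^ 2 + γ a * z + γ b = 0)
    {g : SpecialLinearGroup (Fin 2) F}
    (ht : (g 0 0 + g 1 1) ^ 2 ≠ 4) :
    ∃ y1 y2 : OnePoint E, y1 ≠ y2 ∧ ∀ y, g • y = y ↔ y = y1 ∨ y = y2 := by
  have hd := sl_det g
  by_cases hc : g 1 0 = 0
  · have hne : g 1 1 - g 0 0 ≠ 0 := by
      intro h
      apply ht
      have h1 : g 1 1 = g 0 0 := by linear_combination h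
      rw [h1, hc] at hd
      rw [h1]; linear_combination 4 * hd
    have hne' : γ (g 1 1) - γ (g 0 0) ≠ 0 := by
      rw [← map_sub]; exact (map_ne_zero _).2 hne
    refine ⟨∞, ((γ (g 0 1) / (γ (g 1 1) - γ (g 0 0)) : E) : OnePoint E), infty_ne_coe _, fun y => ?_⟩
    cases y with
    | infty => rw [sl_fix_infty, hc]; simp
    | coe z =>
      rw [sl_fix_coe, hc, coe_eq_coe, eq_div_iff hne']
      simp only [map_zero, zero_mul, zero_add, coe_ne_infty, false_or]
      rw [sub_eq_zero, mul_comm]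
  · have hc' : γ (g 1 0) ≠ 0 := by simpa using hc
    obtain ⟨z1, hz1⟩ := hE ((g 1 1 - g 0 0) / g 1 0) (-(g 0 1) / g 1 0)
    have hd' : γ (g 0 0) * γ (g 1 1) - γ (g 0 1) * γ (g 1 0) = 1 := by
      rw [← map_mul, ← map_mul, ← map_sub, hd, map_one]
    rw [map_div₀, map_div₀, map_sub, map_neg] at hz1
    have hz : γ (g 1 0) * z1 ^ 2 + (γ (g 1 1) - γ (g 0 0)) * z1 - γ (g 0 1) = 0 := by
      field_simp at hz1
      linear_combination hz1
    set z2 : E := (γ (g 0 0) - γ (g 1 1)) / γ (g 1 0) - z1 with hz2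
    have hz2' : γ (g 1 0) * z2 = γ (g 0 0) - γ (g 1 1) - γ (g 1 0) * z1 := by
      rw [hz2]; field_simp
    refine ⟨(z1 : OnePoint E), (z2 : OnePoint E), ?_, fun y => ?_⟩
    · intro h
      rw [coe_eq_coe] at h
      apply ht
      have h4 : (γ (g 0 0) + γ (g 1 1)) ^ 2 = 4 := by
        rw [← h] at hz2'
        have e1 : γ (g 1 1) = γ (g 0 0) - 2 * (γ (g 1 0) * z1) := by linear_combination hz2'
        rw [e1] at hd' hz ⊢
        linear_combination 4 * hd' - 4 * γ (g 1 0) * hz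
      have : γ ((g 0 0 + g 1 1) ^ 2) = γ 4 := by
        rw [map_pow, map_add, h4, map_ofNat]
      exact (algebraMap F E).injective this
    · cases y with
      | infty =>
        rw [sl_fix_infty]
        simp [hc]
      | coe z =>
        rw [sl_fix_coe, coe_eq_coe, coe_eq_coe]
        have key : γ (g 1 0) * z ^ 2 + (γ (g 1 1) - γ (g 0 0)) * z - γ (g 0 1)
            = γ (g 1 0) * ((z - z1) * (z - z2)) := by
          linear_combination hz + (z - z1) * hz2'
        rw [key]
        simp [hc, sub_eq_zero]

lemma card_onepoint (K : Type*) [Finite K] : Nat.card (OnePoint K) = Nat.card K + 1 := by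
  exact Finite.card_option

instance finite_onepoint (K : Type*) [Finite K] : Finite (OnePoint K) :=
  inferInstanceAs (Finite (Option K))

/-- combined fixed point count -/
lemma sl_W [Finite F] [Finite E] [DecidableEq F] (hE : ∀ a b : F, ∃ z : E, z ^ 2 + γ a * z + γ b = 0)
    (hEq : Nat.card E = Nat.card F ^ 2) (g : SpecialLinearGroup (Fin 2) F) :
    Nat.card {y : OnePoint E // g • y = y} +
      (if (g 0 0 + g 1 1) ^ 2 = 4 then Nat.card {x : OnePoint F // g • x = x} else 0)
      = (by classical exact if g ∈ Subgroup.center (SpecialLinearGroup (Fin 2) F)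
          then Nat.card F ^ 2 + Nat.card F + 2 else 2) := by
  by_cases hg : g ∈ Subgroup.center (SpecialLinearGroup (Fin 2) F)
  · have ht : (g 0 0 + g 1 1) ^ 2 = 4 := by
      have hd := sl_det g
      rw [sl_center] at hg
      obtain ⟨h1, h2, h3⟩ := hg
      rw [h1, ← h3] at hd
      rw [← h3]; linear_combination 4 * hd
    rw [if_pos ht, if_pos hg]
    rw [Nat.card_congr (Equiv.subtypeUnivEquiv (sl_fix_center hg)),
      Nat.card_congr (Equiv.subtypeUnivEquiv (sl_fix_center hg)), card_onepoint, card_onepoint, hEq]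
    ring
  · rw [if_neg hg]
    split_ifs with ht
    · obtain ⟨y0, h0⟩ := sl_fix_par (E := E) hg ht
      obtain ⟨x0, h1⟩ := sl_fix_par (E := F) hg ht
      simp_rw [h0, h1]
      simp
    · obtain ⟨y1, y2, hne, h0⟩ := sl_fix_nonpar hE ht
      simp_rw [h0]
      have := Set.ncard_pair hne
      rw [← Nat.card_coe_set_eq] at this
      exact this

lemma quad_root (F : Type*) [Field F] [Finite F] (p : ℕ) [Fact p.Prime] [CharP F p] (a b : F) :
    ∃ z : FiniteField.Extension F p 2, z ^ 2 + algebraMap F _ a * z + algebraMap F _ b = 0 := by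
  classical
  open Polynomial in
  let f : F[X] := X ^ 2 + C a * X + C b
  have hf : f = C 1 * X ^ 2 + C a * X + C b := by simp [f]
  have hdeg : f.natDegree = 2 := by rw [hf]; exact Polynomial.natDegree_quadratic one_ne_zero
  have hmon : f.Monic := by
    rw [Polynomial.Monic, hf]; exact Polynomial.leadingCoeff_quadratic one_ne_zero
  by_cases hr : f.roots = 0
  · have hirr : Irreducible f :=
      (hmon.irreducible_iff_roots_eq_zero_of_degree_le_three (by omega) (by omega)).2 hr
    have hdvd : f ∣ Polynomial.X ^ (Nat.card F) ^ 2 - Polynomial.X := by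
      refine (Irreducible.natDegree_dvd_iff_dvd_X_pow_card_pow_sub_X hirr).1 ?_
      rw [hdeg]
    have hsp := Polynomial.IsSplittingField.splits (FiniteField.Extension F p 2)
      (Polynomial.X ^ (Nat.card F) ^ 2 - Polynomial.X : Polynomial F)
    have hne : (Polynomial.X ^ (Nat.card F) ^ 2 - Polynomial.X : Polynomial F) ≠ 0 := by
      apply FiniteField.X_pow_card_sub_X_ne_zero
      have : 1 < Nat.card F := Finite.one_lt_card
      nlinarith
    have hs := Polynomial.Splits.of_dvd hsp (by rwa [Polynomial.map_ne_zero_iff (algebraMap F _).injective])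
      (Polynomial.map_dvd (algebraMap F _) hdvd)
    obtain ⟨z, hz⟩ := Polynomial.Splits.exists_eval_eq_zero hs (by
      rw [Polynomial.degree_map]
      intro h
      have h' : f.natDegree = 0 := Polynomial.natDegree_eq_of_degree_eq_some h
      rw [hdeg] at h'
      exact two_ne_zero h')
    refine ⟨z, ?_⟩
    simpa [f] using hz
  · obtain ⟨z, hz⟩ := Multiset.exists_mem_of_ne_zero hr
    have hz := (Polynomial.mem_roots'.1 hz).2
    refine ⟨algebraMap F _ z, ?_⟩
    have : z ^ 2 + a * z + b = 0 := by simpa [f, Polynomial.IsRoot] using hz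
    rw [← map_pow, ← map_mul, ← map_add, ← map_add, this, map_zero]

end geom

section locl
open Matrix OnePoint MulAction

variable {F : Type*} [Field F]

local notation "SL2" => Matrix.SpecialLinearGroup (Fin 2) F

/-- explicit matrix -/
def mk2 (a b c e : F) (h : a * e - b * c = 1) : SL2 :=
  ⟨!![a, b; c, e], by rw [Matrix.det_fin_two_of, h]⟩

lemma mk2_00 (a b c e : F) (h) : mk2 a b c e h 0 0 = a := rfl
lemma mk2_01 (a b c e : F) (h) : mk2 a b c e h 0 1 = b := rfl
lemma mk2_10 (a b c e : F) (h) : mk2 a b c e h 1 0 = c := rfl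
lemma mk2_11 (a b c e : F) (h) : mk2 a b c e h 1 1 = e := rfl

lemma sl_ext {g h : SL2} (h0 : g 0 0 = h 0 0) (h1 : g 0 1 = h 0 1) (h2 : g 1 0 = h 1 0)
    (h3 : g 1 1 = h 1 1) : g = h := by
  ext i j
  fin_cases i <;> fin_cases j <;> assumption

lemma sl_mul (g h : SL2) (i j : Fin 2) : (g * h) i j = g i 0 * h 0 j + g i 1 * h 1 j := by
  rw [Matrix.SpecialLinearGroup.coe_mul, Matrix.mul_apply, Fin.sum_univ_two]

lemma sl_one_00 : (1 : SL2) 0 0 = 1 := rfl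
lemma sl_one_01 : (1 : SL2) 0 1 = 0 := rfl
lemma sl_one_10 : (1 : SL2) 1 0 = 0 := rfl
lemma sl_one_11 : (1 : SL2) 1 1 = 1 := rfl

lemma sl_inv_00 (g : SL2) : g⁻¹ 0 0 = g 1 1 := by
  simp [Matrix.SpecialLinearGroup.coe_inv, Matrix.adjugate_fin_two]
lemma sl_inv_01 (g : SL2) : g⁻¹ 0 1 = - g 0 1 := by
  simp [Matrix.SpecialLinearGroup.coe_inv, Matrix.adjugate_fin_two]
lemma sl_inv_10 (g : SL2) : g⁻¹ 1 0 = - g 1 0 := by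
  simp [Matrix.SpecialLinearGroup.coe_inv, Matrix.adjugate_fin_two]
lemma sl_inv_11 (g : SL2) : g⁻¹ 1 1 = g 0 0 := by
  simp [Matrix.SpecialLinearGroup.coe_inv, Matrix.adjugate_fin_two]

lemma sl_tr_conj (k g : SL2) :
    (k⁻¹ * g * k) 0 0 + (k⁻¹ * g * k) 1 1 = g 0 0 + g 1 1 := by
  simp only [sl_mul, sl_inv_00, sl_inv_01, sl_inv_10, sl_inv_11]
  have := sl_det k
  linear_combination (g 0 0 + g 1 1) * this

/-- upper unipotents -/
def Usub (F : Type*) [Field F] : Subgroup (Matrix.SpecialLinearGroup (Fin 2) F) where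
  carrier := {g | g 1 0 = 0 ∧ g 0 0 = 1 ∧ g 1 1 = 1}
  one_mem' := ⟨rfl, rfl, rfl⟩
  mul_mem' := by
    rintro a b ⟨h1, h2, h3⟩ ⟨h4, h5, h6⟩
    refine ⟨?_, ?_, ?_⟩ <;> rw [sl_mul] <;> simp [h1, h2, h3, h4, h5, h6]
  inv_mem' := by
    rintro a ⟨h1, h2, h3⟩
    exact ⟨by rw [sl_inv_10, h1, neg_zero], by rw [sl_inv_00, h3], by rw [sl_inv_11, h2]⟩

/-- upper triangular matrices -/
def Bsub (F : Type*) [Field F] : Subgroup (Matrix.SpecialLinearGroup (Fin 2) F) where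
  carrier := {g | g 1 0 = 0}
  one_mem' := rfl
  mul_mem' := by
    intro a b h1 h4
    change _ = _ at h1 h4
    change _ = _
    rw [sl_mul, h1, h4]; simp
  inv_mem' := by
    intro a h1
    change _ = _ at h1
    change _ = _
    rw [sl_inv_10, h1, neg_zero]

lemma mem_Bsub (g : SL2) : g ∈ Bsub F ↔ g 1 0 = 0 := Iff.rfl

lemma mem_Usub (g : SL2) : g ∈ Usub F ↔ g 1 0 = 0 ∧ g 0 0 = 1 ∧ g 1 1 = 1 := Iff.rfl

lemma mem_Usub_iff (g : SL2) : g ∈ Usub F ↔ g 1 0 = 0 ∧ g 0 0 + g 1 1 = 2 := by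
  constructor
  · rintro ⟨h1, h2, h3⟩
    exact ⟨h1, by rw [h2, h3]; norm_num⟩
  · rintro ⟨h1, h2⟩
    have hd := sl_det g
    have e : g 1 1 = 2 - g 0 0 := by linear_combination h2
    rw [h1, e] at hd
    have : (g 0 0 - 1) ^ 2 = 0 := by linear_combination -hd
    have := pow_eq_zero_iff (two_ne_zero) |>.1 this
    have h3 : g 0 0 = 1 := by linear_combination this
    exact ⟨h1, h3, by rw [e, h3]; ring⟩

/-- the diagonal character -/
noncomputable def chi (F : Type*) [Field F] : Bsub F →* Fˣ :=
  MonoidHom.toHomUnits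
    { toFun := fun g => (g : Matrix.SpecialLinearGroup (Fin 2) F) 0 0
      map_one' := rfl
      map_mul' := by
        rintro ⟨a, ha⟩ ⟨b, hb⟩
        rw [mem_Bsub] at ha hb
        simp only [MulMemClass.mk_mul_mk]
        rw [sl_mul, hb]; ring }

lemma chi_val (g : Bsub F) : (chi F g : F) = (g : SL2) 0 0 := rfl

lemma chi_one_iff (g : Bsub F) : chi F g = 1 ↔ (g : SL2) ∈ Usub F := by
  rw [← Units.val_inj, chi_val, mem_Usub]
  have hd := sl_det (g : SL2)
  have h0 : (g : SL2) 1 0 = 0 := g.2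
  constructor
  · intro h
    refine ⟨h0, h, ?_⟩
    rw [h0, h] at hd
    simpa using hd
  · exact fun h => h.2.1

lemma card_Usub [Finite F] : Nat.card (Usub F) = Nat.card F := by
  refine Nat.card_congr
    { toFun := fun g => (g : SL2) 0 1
      invFun := fun t => ⟨mk2 1 t 0 1 (by ring), rfl, rfl, rfl⟩
      left_inv := ?_
      right_inv := fun t => rfl }
  rintro ⟨g, h1, h2, h3⟩
  apply Subtype.ext
  exact sl_ext h2.symm rfl h1.symm h3.symm

lemma card_Bsub [Finite F] : Nat.card (Bsub F) = Nat.card F * (Nat.card F - 1) := by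
  rw [← Nat.card_units, ← Nat.card_prod]
  refine Nat.card_congr
    { toFun := fun g => ((g : SL2) 0 1, chi F g)
      invFun := fun t => ⟨mk2 t.2 t.1 0 (t.2⁻¹ : Fˣ) (by simp), rfl⟩
      left_inv := ?_
      right_inv := fun t => ?_ }
  · rintro ⟨g, h1⟩
    apply Subtype.ext
    rw [mem_Bsub] at h1
    refine sl_ext rfl rfl h1.symm ?_
    rw [mk2_11]
    have hd := sl_det g
    rw [h1, mul_zero, sub_zero] at hd
    rw [← map_inv, chi_val]
    simp only [InvMemClass.coe_inv]
    rw [sl_inv_00]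
  · refine Prod.ext rfl (Units.ext rfl)

lemma loc {M : Type*} [Group M] [Finite M] [Finite F] (φ : M →* SL2)
    (hφ : Function.Injective φ)
    (hZ : ∀ z ∈ Subgroup.center SL2, ∃ g, φ g = z) :
    Nat.card ((Usub F).comap φ) ∣ Nat.card F ∧
    (∃ τ, τ ∣ Nat.card F - 1 ∧
      Nat.card ((Bsub F).comap φ) = Nat.card ((Usub F).comap φ) * τ) ∧
    Nat.card {g : M // φ g 1 0 = 0 ∧ (φ g 0 0 + φ g 1 1) ^ 2 = 4} =
      Nat.card (Subgroup.center SL2) * Nat.card ((Usub F).comap φ) ∧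
    (Nat.card ((Usub F).comap φ) = Nat.card F → ∀ v ∈ Usub F, ∃ g, φ g = v) := by
  have hmap : Nat.card (((Usub F).comap φ).map φ) = Nat.card ((Usub F).comap φ) :=
    Subgroup.card_map_of_injective hφ
  have hle : ((Usub F).comap φ).map φ ≤ Usub F := Subgroup.map_comap_le _ _
  refine ⟨?_, ?_, ?_, ?_⟩
  · rw [← card_Usub (F := F), ← hmap]
    exact Subgroup.card_dvd_of_le hle
  · let S := (Bsub F).comap φ
    let ψ : S →* Fˣ := (chi F).comp (φ.subgroupComap (Bsub F))
    refine ⟨Nat.card ψ.range, ?_, ?_⟩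
    · rw [← Nat.card_units]; exact Subgroup.card_subgroup_dvd_card _
    · have h1 := Subgroup.card_mul_index ψ.ker
      rw [Subgroup.index_ker] at h1
      rw [← h1]
      congr 1
      refine Nat.card_congr
        { toFun := fun g => ⟨g.1.1, (chi_one_iff _).1 g.2⟩
          invFun := fun g => ⟨⟨g.1, g.2.1⟩, (chi_one_iff _).2 g.2⟩
          left_inv := fun g => rfl
          right_inv := fun g => rfl }
  · rw [← Nat.card_prod]
    symm
    choose! s hs using hZ
    apply Nat.card_eq_of_bijective
      (fun x : Subgroup.center SL2 × ((Usub F).comap φ) =>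
        (⟨s x.1 * x.2, by
          obtain ⟨⟨z, hz⟩, ⟨g, hg⟩⟩ := x
          have hd := sl_det z
          obtain ⟨g1, g2, g3⟩ := hg
          simp only [map_mul, hs z hz, sl_mul]
          rw [sl_center] at hz
          obtain ⟨z1, z2, z3⟩ := hz
          rw [z1, ← z3] at hd
          rw [z1, z2, ← z3]
          rw [g1, g2, g3]
          refine ⟨by ring, by linear_combination 4 * hd⟩⟩ :
          {g : M // φ g 1 0 = 0 ∧ (φ g 0 0 + φ g 1 1) ^ 2 = 4}))
    constructor
    · rintro ⟨⟨z, hz⟩, ⟨g, hg⟩⟩ ⟨⟨z', hz'⟩, ⟨g', hg'⟩⟩ h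
      have h1 : s z * g = s z' * g' := congrArg Subtype.val h
      have h2 : z * φ g = z' * φ g' := by
        rw [← hs z hz, ← hs z' hz', ← map_mul, ← map_mul, h1]
      have hzz : z = z' := by
        have e := congrArg (fun A : SL2 => A 0 0) h2
        simp only [sl_mul] at e
        obtain ⟨g1, g2, g3⟩ := hg
        obtain ⟨g1', g2', g3'⟩ := hg'
        rw [sl_center] at hz hz'
        rw [g1, g2, g1', g2'] at e
        simp only [mul_one, mul_zero, add_zero] at e
        exact sl_ext e (hz.2.1.trans hz'.2.1.symm) (hz.1.trans hz'.1.symm)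
          (hz.2.2.symm.trans (e.trans hz'.2.2))
      subst hzz
      have hgg : g = g' := mul_left_cancel h1
      subst hgg
      rfl
    · rintro ⟨g, hg1, hg2⟩
      have hd := sl_det (φ g)
      set a := φ g 0 0 with ha
      set e := φ g 1 1 with he
      have hae : a = e := by
        have : (a - e) ^ 2 = 0 := by
          rw [hg1] at hd
          linear_combination hg2 - 4 * hd
        have := pow_eq_zero_iff (two_ne_zero) |>.1 this
        linear_combination this
      have haa : a * a = 1 := by
        rw [hg1, ← hae] at hd
        linear_combination hd
      let z : SL2 := mk2 a 0 0 a (by linear_combination haa)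
      have hz : z ∈ Subgroup.center SL2 := by
        rw [sl_center]; exact ⟨rfl, rfl, rfl⟩
      refine ⟨(⟨z, hz⟩, ⟨(s z)⁻¹ * g, ?_⟩), ?_⟩
      · rw [Subgroup.mem_comap, map_mul, map_inv, hs z hz, mem_Usub]
        simp only [sl_mul, sl_inv_00, sl_inv_01, sl_inv_10, sl_inv_11]
        simp only [z, mk2_00, mk2_01, mk2_10, mk2_11, hg1, ← ha, ← he, ← hae]
        refine ⟨by ring, by linear_combination haa, by linear_combination haa⟩
      · apply Subtype.ext
        simp
  · intro h v hv
    have : ((Usub F).comap φ).map φ = Usub F := by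
      apply Subgroup.eq_of_le_of_card_ge hle
      rw [hmap, h, card_Usub]
    rw [← this] at hv
    obtain ⟨g, -, hg⟩ := hv
    exact ⟨g, hg⟩

lemma card_center_le [Finite F] :
    Nat.card (Subgroup.center SL2) = 1 ∨ Nat.card (Subgroup.center SL2) = 2 := by
  have h0 : 0 < Nat.card (Subgroup.center SL2) := Nat.card_pos
  have h1 : Nat.card (Subgroup.center SL2) ≤ 2 := by
    have h2 : ({1, -1} : Set F).ncard ≤ 2 :=
      (Set.ncard_insert_le _ _).trans (by rw [Set.ncard_singleton])
    refine le_trans ?_ h2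
    rw [← Nat.card_coe_set_eq]
    refine Nat.card_le_card_of_injective
      (fun z : Subgroup.center SL2 => (⟨(z : SL2) 0 0, ?_⟩ : ({1, -1} : Set F))) ?_
    · have hz := (sl_center _).1 z.2
      have hd := sl_det (z : SL2)
      rw [hz.1, ← hz.2.2] at hd
      have : ((z : SL2) 0 0 - 1) * ((z : SL2) 0 0 + 1) = 0 := by linear_combination hd
      rcases mul_eq_zero.1 this with h | h
      · left; linear_combination h
      · right; simp only [Set.mem_singleton_iff]; linear_combination h
    · rintro ⟨z, hz⟩ ⟨z', hz'⟩ h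
      have e : z 0 0 = z' 0 0 := congrArg Subtype.val h
      apply Subtype.ext
      rw [sl_center] at hz hz'
      exact sl_ext e (hz.2.1.trans hz'.2.1.symm) (hz.1.trans hz'.1.symm)
          (hz.2.2.symm.trans (e.trans hz'.2.2))
  omega

lemma sl_gen (M : Subgroup SL2) (hU : ∀ t, mk2 1 t 0 1 (by ring) ∈ M)
    (hL : ∀ t, mk2 1 0 t 1 (by ring) ∈ M) : M = ⊤ := by
  have key : ∀ g : SL2, g 1 0 ≠ 0 → g ∈ M := by
    intro g hc
    have hd := sl_det g
    have e : g = mk2 1 ((g 0 0 - 1) / g 1 0) 0 1 (by ring) * mk2 1 0 (g 1 0) 1 (by ring) *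
        mk2 1 ((g 1 1 - 1) / g 1 0) 0 1 (by ring) := by
      apply sl_ext <;> simp only [sl_mul, mk2_00, mk2_01, mk2_10, mk2_11] <;> field_simp
      · ring
      · linear_combination -hd
      · ring
      · ring
    rw [e]
    exact M.mul_mem (M.mul_mem (hU _) (hL _)) (hU _)
  rw [eq_top_iff]
  intro g _
  by_cases hc : g 1 0 = 0
  · have hd := sl_det g
    have h11 : g 1 1 ≠ 0 := by
      intro h; rw [hc, h] at hd; simp at hd
    have h1 : g * mk2 1 0 1 1 (by ring) ∈ M := by
      apply key
      rw [sl_mul, mk2_00, mk2_10, hc]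
      simpa using h11
    exact (M.mul_mem_cancel_right (hL 1)).1 h1
  · exact key g hc

variable [DecidableEq F]

lemma sl_trans0 (x y : OnePoint F) (hxy : x ≠ y) :
    ∃ g : SL2, g • (∞ : OnePoint F) = x ∧ g • ((0 : F) : OnePoint F) = y := by
  cases x with
  | infty =>
    cases y with
    | infty => exact absurd rfl hxy
    | coe b =>
      refine ⟨mk2 1 b 0 1 (by ring), ?_, ?_⟩
      · rw [sl_fix_infty, mk2_10]
      · rw [sl_smul_coe]
        simp [mk2_00, mk2_01, mk2_10, mk2_11]
  | coe a =>
    cases y with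
    | infty =>
      refine ⟨mk2 a (-1) 1 0 (by ring), ?_, ?_⟩
      · rw [sl_smul_infty]
        simp [mk2_00, mk2_01, mk2_10, mk2_11]
      · rw [sl_smul_coe]
        simp [mk2_00, mk2_01, mk2_10, mk2_11]
    | coe b =>
      have hab : a - b ≠ 0 := by
        intro h; apply hxy; rw [sub_eq_zero.1 h]
      refine ⟨mk2 a (b * (a - b)⁻¹) 1 (a - b)⁻¹ (by field_simp), ?_, ?_⟩
      · rw [sl_smul_infty]
        simp [mk2_00, mk2_01, mk2_10, mk2_11]
      · rw [sl_smul_coe]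
        simp [mk2_00, mk2_01, mk2_10, mk2_11, hab]

lemma sl_two_trans (a b c e : OnePoint F) (hab : a ≠ b) (hce : c ≠ e) :
    ∃ g : SL2, g • a = c ∧ g • b = e := by
  obtain ⟨g, h1, h2⟩ := sl_trans0 a b hab
  obtain ⟨g', h3, h4⟩ := sl_trans0 c e hce
  refine ⟨g' * g⁻¹, ?_, ?_⟩
  · rw [mul_smul, ← h1, inv_smul_smul, h3]
  · rw [mul_smul, ← h2, inv_smul_smul, h4]

lemma sl_trans (x : OnePoint F) : ∃ g : SL2, g • (∞ : OnePoint F) = x := by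
  by_cases h : x = ∞
  · exact ⟨1, by rw [one_smul, h]⟩
  · obtain ⟨g, h1, -⟩ := sl_trans0 x ∞ h
    exact ⟨g, h1⟩

lemma card_SL2 [Finite F] : Nat.card SL2 = Nat.card F * (Nat.card F ^ 2 - 1) ∧
    ∀ x : OnePoint F, Nat.card (stabilizer SL2 x) * (Nat.card F + 1) = Nat.card SL2 := by
  have horb : ∀ x : OnePoint F, Nat.card (stabilizer SL2 x) * (Nat.card F + 1) = Nat.card SL2 := by
    intro x
    have : orbit SL2 x = Set.univ := by
      apply Set.eq_univ_of_forall
      intro y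
      obtain ⟨g, rfl⟩ := sl_trans x
      obtain ⟨g', rfl⟩ := sl_trans y
      exact ⟨g' * g⁻¹, by simp [mul_smul]⟩
    rw [← core_orbit (M := SL2) x, this, mul_comm, ← card_onepoint]
    congr 1
    exact (Nat.card_congr (Equiv.Set.univ _)).symm
  refine ⟨?_, horb⟩
  rw [← horb ∞]
  have : stabilizer SL2 (∞ : OnePoint F) = Bsub F := by
    ext g; rw [mem_stabilizer_iff, sl_fix_infty, mem_Bsub]
  rw [this, card_Bsub]
  obtain ⟨t, ht⟩ : ∃ t, Nat.card F = t + 1 := ⟨Nat.card F - 1, by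
    have : 0 < Nat.card F := Nat.card_pos
    omega⟩
  rw [ht, show (t + 1) ^ 2 - 1 = t * (t + 2) by
    rw [show (t + 1) ^ 2 = t * (t + 2) + 1 by ring]; simp]
  simp only [Nat.add_sub_cancel]
  ring

end locl

section subthm
open Matrix OnePoint MulAction

lemma onepoint_map_smul {F E : Type*} [Field F] [Field E] [Algebra F E] [DecidableEq E]
    [DecidableEq F] (g : Matrix.SpecialLinearGroup (Fin 2) F) (x : OnePoint F) :
    OnePoint.map (algebraMap F E) (g • x) = g • (OnePoint.map (algebraMap F E) x) := by
  cases x with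
  | infty =>
    rw [OnePoint.map_infty, sl_smul_infty, sl_smul_infty]
    simp [apply_ite]
  | coe c =>
    rw [OnePoint.map_some, sl_smul_coe, sl_smul_coe]
    simp [apply_ite, ← map_mul, ← map_add]

theorem sub_thm {F : Type*} [Field F] [Finite F] [DecidableEq F] (p k : ℕ) [Fact p.Prime]
    [CharP F p] (hF : Nat.card F = p ^ k) (hq' : 13 ≤ Nat.card F ∨ Nat.card F = 8)
    (M : Subgroup (Matrix.SpecialLinearGroup (Fin 2) F))
    (hZM : Subgroup.center (Matrix.SpecialLinearGroup (Fin 2) F) ≤ M) (hM : M ≠ ⊤)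
    (hidx : M.index ≤ Nat.card F + 1) :
    ∃ x : OnePoint F, M = stabilizer (Matrix.SpecialLinearGroup (Fin 2) F) x := by
  classical
  let E := FiniteField.Extension F p 2
  have hEc : Nat.card E = Nat.card F ^ 2 := FiniteField.natCard_extension F p 2
  have : Finite E := Nat.finite_of_card_ne_zero (by
    rw [hEc]; exact pow_ne_zero _ Nat.card_pos.ne')
  have hE := quad_root F p
  let Z := (Subgroup.center (Matrix.SpecialLinearGroup (Fin 2) F)).subgroupOf M
  have hZc : Nat.card Z = Nat.card (Subgroup.center (Matrix.SpecialLinearGroup (Fin 2) F)) :=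
    Nat.card_congr (Subgroup.subgroupOfEquivOfLe hZM).toEquiv
  choose κ hκ using (sl_trans (F := F))
  let φ : OnePoint F → (M →* Matrix.SpecialLinearGroup (Fin 2) F) :=
    fun x => (MulAut.conj (κ x)⁻¹).toMonoidHom.comp M.subtype
  have hφv : ∀ x g, φ x g = (κ x)⁻¹ * g * κ x := by
    intro x g; simp [φ, MulAut.conj_apply]
  have hφi : ∀ x, Function.Injective (φ x) := by
    intro x g h hgh
    rw [hφv, hφv] at hgh
    exact Subtype.ext (mul_left_cancel (mul_right_cancel hgh))
  have hloc := fun x => loc (φ x) (hφi x) (fun z hz => ⟨⟨z, hZM hz⟩, by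
    rw [hφv, mul_assoc, (Subgroup.mem_center_iff.1 hz (κ x)).symm, inv_mul_cancel_left]⟩)
  choose h1 h2 h3 h4 using hloc
  choose τ hτ1 hτ2 using h2
  have hfixx : ∀ x (g : M), g • x = x ↔ φ x g 1 0 = 0 := by
    intro x g
    rw [← sl_fix_infty (E := F), hφv, mul_smul, mul_smul, hκ, inv_smul_eq_iff, hκ]
    rfl
  have htr : ∀ x (g : M), φ x g 0 0 + φ x g 1 1
      = (g : Matrix.SpecialLinearGroup (Fin 2) F) 0 0 + (g : Matrix.SpecialLinearGroup (Fin 2) F) 1 1 := by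
    intro x g
    rw [hφv]; exact sl_tr_conj _ _
  obtain ⟨hG, hGx⟩ := card_SL2 (F := F)
  have hMi := Subgroup.card_mul_index M
  have hcore := core (M := M) (P := OnePoint F) (Y := OnePoint E) p k (Nat.card F) _ M.index hF hq'
    (OnePoint.map (algebraMap F E)) (Option.map_injective (algebraMap F E).injective)
    (fun g x => onepoint_map_smul _ _) (card_onepoint F) (by rw [card_onepoint, hEc]) Z hZc
    card_center_le (fun z hz y => sl_fix_center (E := E) (g := (z : Matrix.SpecialLinearGroup (Fin 2) F)) hz y)
    (fun g => ((g : Matrix.SpecialLinearGroup (Fin 2) F) 0 0 +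
      (g : Matrix.SpecialLinearGroup (Fin 2) F) 1 1) ^ 2 = 4)
    (fun g => by
      have := sl_W (E := E) hE hEc (g : Matrix.SpecialLinearGroup (Fin 2) F)
      by_cases hgT : ((g : Matrix.SpecialLinearGroup (Fin 2) F) 0 0 +
        (g : Matrix.SpecialLinearGroup (Fin 2) F) 1 1) ^ 2 = 4 <;>
      by_cases hgZ : (g : Matrix.SpecialLinearGroup (Fin 2) F) ∈
        Subgroup.center (Matrix.SpecialLinearGroup (Fin 2) F)
      · rw [if_pos hgT, if_pos hgZ] at this
        rw [if_pos hgT, if_pos (show g ∈ Z from hgZ)]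
        exact this
      · rw [if_pos hgT, if_neg hgZ] at this
        rw [if_pos hgT, if_neg (show ¬ g ∈ Z from hgZ)]
        exact this
      · rw [if_neg hgT, if_pos hgZ] at this
        rw [if_neg hgT, if_pos (show g ∈ Z from hgZ)]
        exact this
      · rw [if_neg hgT, if_neg hgZ] at this
        rw [if_neg hgT, if_neg (show ¬ g ∈ Z from hgZ)]
        exact this)
    (fun x => (Usub F).comap (φ x)) τ
    (by
      intro x g hg hg1 y
      have hgU := hg
      rw [Subgroup.mem_comap, mem_Usub_iff, htr] at hg
      have hnc : (g : Matrix.SpecialLinearGroup (Fin 2) F) ∉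
          Subgroup.center (Matrix.SpecialLinearGroup (Fin 2) F) := by
        intro hc
        apply hg1
        apply hφi x
        have e : φ x g = g := by
          rw [hφv, mul_assoc, (Subgroup.mem_center_iff.1 hc (κ x)).symm, inv_mul_cancel_left]
        rw [Subgroup.mem_comap, e, mem_Usub] at hgU
        rw [e, map_one]
        rw [sl_center] at hc
        exact sl_ext hgU.2.1 hc.2.1 hgU.1 hgU.2.2
      obtain ⟨y0, hy0⟩ := sl_fix_par (E := F) hnc (by rw [hg.2]; norm_num)
      have hx : g • x = x := (hfixx x g).2 hg.1
      have hx0 := (hy0 x).1 hx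
      rw [hx0]
      exact hy0 y)
    h1 hτ1
    (by
      intro x
      rw [← hτ2 x]
      have : stabilizer M x = (Bsub F).comap (φ x) := by
        ext g
        rw [mem_stabilizer_iff, hfixx, Subgroup.mem_comap, mem_Bsub]
      rw [this])
    (by
      intro x
      rw [← h3 x]
      refine Nat.card_congr (Equiv.subtypeEquivRight (fun g => ?_))
      rw [hfixx, htr])
    (by rw [hMi, hG]) hidx
  rcases hcore with ⟨x, hx⟩ | hall
  · refine ⟨x, Subgroup.eq_of_le_of_card_ge (fun g hg => hx ⟨g, hg⟩) ?_⟩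
    have h5 := hGx x
    rw [← hMi] at h5
    by_contra hc
    push Not at hc
    have h6 : Nat.card M * M.index ≤ Nat.card M * (Nat.card F + 1) := Nat.mul_le_mul_left _ hidx
    have h7 := Nat.mul_lt_mul_of_pos_right hc (Nat.succ_pos (Nat.card F))
    simp only [Nat.succ_eq_add_one] at h7
    omega
  · exfalso
    apply hM
    have key : ∀ (x : OnePoint F) (v : Matrix.SpecialLinearGroup (Fin 2) F), v • x = x →
        v 0 0 + v 1 1 = 2 → v ∈ M := by
      intro x v hv ht
      have : (κ x)⁻¹ * v * κ x ∈ Usub F := by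
        rw [mem_Usub_iff, sl_tr_conj, ← sl_fix_infty (E := F), mul_smul, mul_smul, hκ,
          inv_smul_eq_iff, hκ]
        exact ⟨hv, ht⟩
      obtain ⟨g, hg⟩ := h4 x (hall x) _ this
      rw [hφv] at hg
      have := mul_left_cancel (mul_right_cancel hg)
      rw [← this]; exact g.2
    apply sl_gen
    · intro t
      apply key ∞
      · rw [sl_fix_infty, mk2_10]
      · rw [mk2_00, mk2_11]; norm_num
    · intro t
      apply key ((0 : F) : OnePoint F)
      · rw [sl_fix_coe, mk2_00, mk2_01, mk2_10, mk2_11]; simp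
      · rw [mk2_00, mk2_11]; norm_num

end subthm

section final
open Matrix OnePoint MulAction

lemma act_equiv {F : Type*} [Field F] [Finite F] [DecidableEq F] (p k : ℕ) [Fact p.Prime]
    [CharP F p] (hF : Nat.card F = p ^ k) (hq' : 13 ≤ Nat.card F ∨ Nat.card F = 8)
    {X : Type*} [Finite X] (hX : Nat.card X = Nat.card F + 1)
    (ρ : Matrix.SpecialLinearGroup (Fin 2) F →* Equiv.Perm X)
    (hZ : ∀ z ∈ Subgroup.center (Matrix.SpecialLinearGroup (Fin 2) F), ρ z = 1)
    (hρ : ρ ≠ 1) :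
    ∃ e : OnePoint F ≃ X, ∀ g y, e (g • y) = ρ g (e y) := by
  classical
  obtain ⟨g0, x, hgx⟩ : ∃ g x, ρ g x ≠ x := by
    by_contra hc
    push Not at hc
    exact hρ (MonoidHom.ext fun g => Equiv.ext fun x => hc g x)
  let M : Subgroup (Matrix.SpecialLinearGroup (Fin 2) F) :=
    (stabilizer (Equiv.Perm X) x).comap ρ
  have hMm : ∀ g, g ∈ M ↔ ρ g x = x := fun g => Iff.rfl
  have hidx : M.index ≤ Nat.card F + 1 := by
    letI : MulAction (Matrix.SpecialLinearGroup (Fin 2) F) X := MulAction.compHom X ρ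
    have h : M = stabilizer (Matrix.SpecialLinearGroup (Fin 2) F) x := rfl
    rw [h, MulAction.index_stabilizer, ← hX]
    exact Set.ncard_le_card _
  obtain ⟨y0, hy0⟩ := sub_thm p k hF hq' M
    (fun z hz => by rw [hMm, hZ z hz]; rfl)
    (fun h => hgx ((hMm g0).1 (h ▸ Subgroup.mem_top _))) hidx
  have hM' : ∀ g : Matrix.SpecialLinearGroup (Fin 2) F, g • y0 = y0 ↔ ρ g x = x := fun g => by
    rw [← hMm, hy0, mem_stabilizer_iff]
  have ht : ∀ y : OnePoint F, ∃ g : Matrix.SpecialLinearGroup (Fin 2) F, g • y0 = y := by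
    intro y
    obtain ⟨a, ha⟩ := sl_trans y0
    obtain ⟨b, hb⟩ := sl_trans y
    exact ⟨b * a⁻¹, by rw [mul_smul, inv_smul_eq_iff.2 ha.symm, hb]⟩
  choose κ hκ using ht
  have key : ∀ a b : Matrix.SpecialLinearGroup (Fin 2) F,
      a • y0 = b • y0 ↔ ρ a x = ρ b x := by
    intro a b
    rw [eq_comm, ← inv_smul_eq_iff, ← mul_smul, hM', map_mul, map_inv, Equiv.Perm.mul_apply,
      Equiv.Perm.inv_eq_iff_eq, eq_comm]
  have hinj : Function.Injective (fun y => ρ (κ y) x) := by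
    intro y y' h
    have := (key _ _).2 h
    rwa [hκ, hκ] at this
  have := Fintype.ofFinite (OnePoint F)
  have := Fintype.ofFinite X
  have hbij : Function.Bijective (fun y => ρ (κ y) x) := by
    rw [Fintype.bijective_iff_injective_and_card]
    refine ⟨hinj, ?_⟩
    rw [← Nat.card_eq_fintype_card, ← Nat.card_eq_fintype_card, hX, card_onepoint]
  refine ⟨Equiv.ofBijective _ hbij, fun g y => ?_⟩
  show ρ (κ (g • y)) x = ρ g (ρ (κ y) x)
  rw [← Equiv.Perm.mul_apply, ← map_mul, ← key, hκ, mul_smul, hκ]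

lemma hom_dich {G K : Type*} [Group G] [IsSimpleGroup G] [Group K] (ψ : G →* K) :
    ψ = 1 ∨ Function.Injective ψ := by
  rcases (inferInstance : ψ.ker.Normal).eq_bot_or_eq_top with h | h
  · exact Or.inr ((MonoidHom.ker_eq_bot_iff ψ).1 h)
  · exact Or.inl (MonoidHom.ext fun g => by
      have : g ∈ ψ.ker := h ▸ Subgroup.mem_top g
      exact this)

lemma psl_hom_equiv {F : Type*} [Field F] [Finite F] [DecidableEq F] (p k : ℕ) [Fact p.Prime]
    [CharP F p] (hF : Nat.card F = p ^ k) (hq' : 13 ≤ Nat.card F ∨ Nat.card F = 8)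
    {X : Type*} [Fintype X] [DecidableEq X] (hX : Nat.card X = Nat.card F + 1)
    (f : Matrix.ProjectiveSpecialLinearGroup (Fin 2) F →* alternatingGroup X) (hf : f ≠ 1) :
    ∃ e : OnePoint F ≃ X, ∀ (g : Matrix.SpecialLinearGroup (Fin 2) F) y,
      e (g • y) = (f (QuotientGroup.mk g) : Equiv.Perm X) (e y) := by
  refine act_equiv p k hF hq' hX ((alternatingGroup X).subtype.comp (f.comp
    (QuotientGroup.mk' (Subgroup.center (Matrix.SpecialLinearGroup (Fin 2) F))))) ?_ ?_
  · intro z hz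
    have : QuotientGroup.mk' (Subgroup.center (Matrix.SpecialLinearGroup (Fin 2) F)) z = 1 :=
      (QuotientGroup.eq_one_iff z).2 hz
    simp only [MonoidHom.comp_apply, this, map_one]
  · intro h
    apply hf
    refine MonoidHom.ext fun g => ?_
    obtain ⟨g, rfl⟩ := QuotientGroup.mk_surjective g
    exact Subtype.ext (DFunLike.congr_fun h g)

theorem main_loc {F : Type*} [Field F] [Finite F] [DecidableEq F] (p k : ℕ) [Fact p.Prime]
    [CharP F p] (hF : Nat.card F = p ^ k) (hq' : 13 ≤ Nat.card F ∨ Nat.card F = 8)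
    (q : ℕ) (hq : q = Nat.card F)
    (f : Matrix.ProjectiveSpecialLinearGroup (Fin 2) F →* alternatingGroup (Fin (q + 1)))
    (hf : Function.Injective f) : IsLocalizationHom f := by
  have hX : Nat.card (Fin (q + 1)) = Nat.card F + 1 := by simp [hq]
  have : IsSimpleGroup (alternatingGroup (Fin (q + 1))) :=
    alternatingGroup.isSimpleGroup (by rw [hX]; omega)
  have hf1 : f ≠ 1 := by
    intro h
    have h1 : (QuotientGroup.mk (mk2 1 1 0 1 (by ring)) :
        Matrix.ProjectiveSpecialLinearGroup (Fin 2) F) = 1 := by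
      apply hf
      rw [h]; rfl
    have h2 := (QuotientGroup.eq_one_iff _).1 h1
    rw [sl_center, mk2_01] at h2
    exact one_ne_zero h2.2.1
  obtain ⟨e, he⟩ := psl_hom_equiv p k hF hq' hX f hf1
  have hnt : ∀ ψ : alternatingGroup (Fin (q + 1)) →* alternatingGroup (Fin (q + 1)),
      ψ.comp f = 1 → ψ = 1 := by
    intro ψ h
    refine (hom_dich ψ).resolve_right (fun hi => hf1 ?_)
    refine MonoidHom.ext fun g => ?_
    apply hi
    rw [MonoidHom.one_apply, map_one]
    exact DFunLike.congr_fun h g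
  constructor
  · intro ψ₁ ψ₂ h
    simp only at h
    by_cases h1 : ψ₁.comp f = 1
    · rw [hnt ψ₁ h1, hnt ψ₂ (h ▸ h1)]
    · have hn1 : ψ₁ ≠ 1 := fun h' => h1 (by rw [h']; rfl)
      have hn2 : ψ₂ ≠ 1 := fun h' => h1 (by rw [h, h']; rfl)
      have i1 := Finite.injective_iff_bijective.1 ((hom_dich ψ₁).resolve_left hn1)
      have i2 := Finite.injective_iff_bijective.1 ((hom_dich ψ₂).resolve_left hn2)
      let θ := (MulEquiv.ofBijective ψ₁ i1).trans (MulEquiv.ofBijective ψ₂ i2).symm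
      have hθ : ∀ g, ψ₂ (θ g) = ψ₁ g := fun g =>
        (MulEquiv.ofBijective ψ₂ i2).apply_symm_apply (ψ₁ g)
      have := auto_eq_id (n := q + 1) (by omega) θ f.range ?_ ?_
      · refine MonoidHom.ext fun g => ?_
        rw [← hθ, this]
      · intro a b c d hab hcd
        obtain ⟨g, hg1, hg2⟩ := sl_two_trans (e.symm a) (e.symm b) (e.symm c) (e.symm d)
          (fun h => hab (e.symm.injective h)) (fun h => hcd (e.symm.injective h))
        refine ⟨_, ⟨QuotientGroup.mk g, rfl⟩, ?_, ?_⟩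
        · have := he g (e.symm a)
          rw [hg1, e.apply_symm_apply, e.apply_symm_apply] at this
          exact this.symm
        · have := he g (e.symm b)
          rw [hg2, e.apply_symm_apply, e.apply_symm_apply] at this
          exact this.symm
      · rintro _ ⟨g, rfl⟩
        apply i2.1
        rw [hθ]
        exact DFunLike.congr_fun h g
  · intro f'
    by_cases h1 : f' = 1
    · exact ⟨1, by rw [h1]; rfl⟩
    · obtain ⟨e', he'⟩ := psl_hom_equiv p k hF hq' hX f' h1
      let σ : Equiv.Perm (Fin (q + 1)) := e.symm.trans e'
      refine ⟨(MulAut.conjNormal σ).toMonoidHom, ?_⟩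
      refine MonoidHom.ext fun g => ?_
      obtain ⟨g, rfl⟩ := QuotientGroup.mk_surjective g
      apply Subtype.ext
      apply Equiv.ext
      intro x
      have h2 : ((MulAut.conjNormal σ).toMonoidHom.comp f (QuotientGroup.mk g) :
          Equiv.Perm (Fin (q + 1))) = σ * f (QuotientGroup.mk g) * σ⁻¹ :=
        MulAut.conjNormal_apply σ (f (QuotientGroup.mk g))
      show ((MulAut.conjNormal σ).toMonoidHom.comp f (QuotientGroup.mk g) :
          Equiv.Perm (Fin (q + 1))) x = _
      rw [h2]
      show e' (e.symm ((f (QuotientGroup.mk g) : Equiv.Perm (Fin (q + 1))) (e (e'.symm x)))) = _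
      rw [← he, e.symm_apply_apply, he', e'.apply_symm_apply]

end final

/-- For a prime power `q = p ^ k` with `q ≥ 13` or `q = 8` (i.e. `q ≥ 4`
and `q ∉ {4, 5, 7, 9, 11}`), every injective group homomorphism from
`PSL(2, 𝔽_q)` into the alternating group `A_{q+1}` is a localization. -/
theorem statement9 (p k : ℕ) [Fact p.Prime] (hk : 1 ≤ k)
    (q : ℕ) (hq : q = p ^ k) (hq' : 13 ≤ q ∨ q = 8)
    (f : Matrix.ProjectiveSpecialLinearGroup (Fin 2) (GaloisField p k) →*
      alternatingGroup (Fin (q + 1)))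
    (hf : Function.Injective f) :
    IsLocalizationHom f := by
  classical
  have hc : Nat.card (GaloisField p k) = p ^ k := GaloisField.card p k (by omega)
  exact main_loc p k hc (by rw [hc, ← hq]; exact hq') q (by rw [hc, hq]) f hf
end

section
/- Let p be a prime, k ≥ 1, and q = p^k with q ≥ 4. Then any two subgroups of index q + 1 in PSL(2, F_q) (the quotient of SL(2, F_q) by its center, where F_q is the field with q elements) are conjugate. -/
set_option linter.unusedSimpArgs false

open Matrix in
/-- upper unipotent -/
def uu {F : Type*} [Field F] (x : F) : SpecialLinearGroup (Fin 2) F :=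
  ⟨!![1, x; 0, 1], by simp [Matrix.det_fin_two]⟩

open Matrix in
/-- lower unipotent -/
def ll {F : Type*} [Field F] (x : F) : SpecialLinearGroup (Fin 2) F :=
  ⟨!![1, 0; x, 1], by simp [Matrix.det_fin_two]⟩

open Matrix in
/-- Weyl element -/
def ww {F : Type*} [Field F] : SpecialLinearGroup (Fin 2) F :=
  ⟨!![0, -1; 1, 0], by simp [Matrix.det_fin_two]⟩

open Matrix in
/-- diagonal -/
def dd {F : Type*} [Field F] (a : Fˣ) : SpecialLinearGroup (Fin 2) F :=
  ⟨!![(a : F), 0; 0, ((a⁻¹ : Fˣ) : F)], by simp [Matrix.det_fin_two]⟩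

open Matrix in
lemma uu_val {F : Type*} [Field F] (x : F) :
    (uu x : Matrix (Fin 2) (Fin 2) F) = !![1, x; 0, 1] := rfl

open Matrix in
lemma ll_val {F : Type*} [Field F] (x : F) :
    (ll x : Matrix (Fin 2) (Fin 2) F) = !![1, 0; x, 1] := rfl

open Matrix in
lemma ww_val {F : Type*} [Field F] :
    ((ww : SpecialLinearGroup (Fin 2) F) : Matrix (Fin 2) (Fin 2) F) = !![0, -1; 1, 0] := rfl

open Matrix in
lemma dd_val {F : Type*} [Field F] (a : Fˣ) :
    (dd a : Matrix (Fin 2) (Fin 2) F) = !![(a : F), 0; 0, ((a⁻¹ : Fˣ) : F)] := rfl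

open Matrix in
/-- unipotent hom -/
def uhom (F : Type*) [Field F] : Multiplicative F →* SpecialLinearGroup (Fin 2) F where
  toFun x := uu x.toAdd
  map_one' := by
    ext i j; fin_cases i <;> fin_cases j <;> simp [uu_val]
  map_mul' x y := by
    ext i j; fin_cases i <;> fin_cases j <;> simp [uu_val, Matrix.mul_apply, Fin.sum_univ_two, add_comm]

open Matrix in
/-- Borel -/
def bb (F : Type*) [Field F] : Subgroup (SpecialLinearGroup (Fin 2) F) where
  carrier := {g | g.1 1 0 = 0}
  one_mem' := by simp
  mul_mem' {a b} ha hb := by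
    simp only [Set.mem_ofPred_eq] at *
    simp [Matrix.mul_apply, Fin.sum_univ_two, ha, hb]
  inv_mem' {a} ha := by
    simp only [Set.mem_ofPred_eq] at *
    simp [Matrix.SpecialLinearGroup.coe_inv, Matrix.adjugate_fin_two, ha]

open Matrix in
lemma mem_bb {F : Type*} [Field F] (g : SpecialLinearGroup (Fin 2) F) :
    g ∈ bb F ↔ g.1 1 0 = 0 := Iff.rfl

open Matrix in
lemma index_bb {F : Type*} [Field F] [Finite F] : Nat.card F + 1 ≤ (bb F).index := by
  have : Finite (SpecialLinearGroup (Fin 2) F) := inferInstance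
  let f : Option F → SpecialLinearGroup (Fin 2) F ⧸ bb F := fun o =>
    match o with
    | none => QuotientGroup.mk ww
    | some x => QuotientGroup.mk (ll x)
  have hf : Function.Injective f := by
    rintro (_ | x) (_ | y) h
    · rfl
    · have := QuotientGroup.eq.1 h
      rw [mem_bb] at this
      simp [ww_val, ll_val, Matrix.SpecialLinearGroup.coe_inv, Matrix.adjugate_fin_two,
        Matrix.mul_apply, Fin.sum_univ_two] at this
    · have := QuotientGroup.eq.1 h
      rw [mem_bb] at this
      simp [ww_val, ll_val, Matrix.SpecialLinearGroup.coe_inv, Matrix.adjugate_fin_two,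
        Matrix.mul_apply, Fin.sum_univ_two] at this
    · have := QuotientGroup.eq.1 h
      rw [mem_bb] at this
      simp [ll_val, Matrix.SpecialLinearGroup.coe_inv, Matrix.adjugate_fin_two,
        Matrix.mul_apply, Fin.sum_univ_two] at this
      congr 1
      linear_combination -this
  have := Nat.card_le_card_of_injective f hf
  rwa [Finite.card_option] at this

open Matrix in
lemma le_bb {F : Type*} [Field F] [Finite F] (K : Subgroup (SpecialLinearGroup (Fin 2) F))
    (hU : ∀ x : F, uu x ∈ K) (hK : K.index = Nat.card F + 1) : K ≤ bb F := by
  intro k hk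
  by_contra hc
  rw [mem_bb] at hc
  have key : ∀ h : SpecialLinearGroup (Fin 2) F, ∃ m ∈ K, ∃ a, h = m * dd a := by
    intro h
    have hdet := h.2
    have kdet := k.2
    rw [Matrix.det_fin_two] at hdet kdet
    by_cases h0 : h.1 1 0 = 0
    · have hne : h.1 0 0 ≠ 0 := by
        intro h1; simp [h0, h1] at hdet
      refine ⟨uu (h.1 0 1 * h.1 0 0), hU _, Units.mk0 _ hne, ?_⟩
      have h11 : h.1 1 1 = (h.1 0 0)⁻¹ := by
        rw [h0] at hdet; field_simp; linear_combination hdet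
      ext i j; fin_cases i <;> fin_cases j <;>
        simp [uu_val, dd_val, Matrix.mul_apply, Fin.sum_univ_two, h0, h11, hne]
    · have ha : h.1 1 0 / k.1 1 0 ≠ 0 := div_ne_zero h0 hc
      set a : Fˣ := Units.mk0 _ ha with hadef
      set x : F := (h.1 1 1 * (a : F) - k.1 1 1) / k.1 1 0 with hx
      set n := k * uu x * dd a with hn
      have n10 : n.1 1 0 = h.1 1 0 := by
        simp [hn, uu_val, dd_val, Matrix.mul_apply, Fin.sum_univ_two, hadef]
        field_simp
      have n11 : n.1 1 1 = h.1 1 1 := by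
        simp [hn, uu_val, dd_val, Matrix.mul_apply, Fin.sum_univ_two, hadef, hx]
        field_simp
        ring
      have ndet := n.2
      rw [Matrix.det_fin_two, n10, n11] at ndet
      refine ⟨uu ((h.1 0 0 - n.1 0 0) / h.1 1 0) * (k * uu x),
        K.mul_mem (hU _) (K.mul_mem hk (hU _)), a, ?_⟩
      rw [mul_assoc, ← hn]
      ext i j
      fin_cases i <;> fin_cases j
      · simp [uu_val, Matrix.mul_apply, Fin.sum_univ_two, n10]
        field_simp
        ring
      · simp [uu_val, Matrix.mul_apply, Fin.sum_univ_two, n11]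
        field_simp
        linear_combination ndet - hdet
      · simp [uu_val, Matrix.mul_apply, Fin.sum_univ_two, n10]
      · simp [uu_val, Matrix.mul_apply, Fin.sum_univ_two, n11]
  let f : Fˣ → SpecialLinearGroup (Fin 2) F ⧸ K := fun a => QuotientGroup.mk (dd a)⁻¹
  have hf : Function.Surjective f := by
    intro y
    obtain ⟨g, rfl⟩ := QuotientGroup.mk_surjective y
    obtain ⟨m, hm, a, h⟩ := key g⁻¹
    refine ⟨a, QuotientGroup.eq.2 ?_⟩
    have : g = (dd a)⁻¹ * m⁻¹ := by rw [← inv_inv g, h]; group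
    rw [this]
    simpa using hm
  have h1 := Nat.card_le_card_of_surjective f hf
  have h2 : Nat.card Fˣ ≤ Nat.card F := Nat.card_le_card_of_injective _ Units.val_injective
  rw [Subgroup.index] at hK
  omega

open Matrix in
lemma conj_bb {F : Type*} [Field F] [Finite F] (p k : ℕ) [Fact p.Prime] (hk : 1 ≤ k)
    (hF : Nat.card F = p ^ k) (K : Subgroup (SpecialLinearGroup (Fin 2) F))
    (hK : K.index = Nat.card F + 1) :
    ∃ g : SpecialLinearGroup (Fin 2) F, ∀ x, x ∈ K ↔ g⁻¹ * x * g ∈ bb F := by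
  have hU : IsPGroup p (uhom F).range := by
    have : IsPGroup p (Multiplicative F) := IsPGroup.of_card (n := k) hF
    exact this.of_surjective (uhom F).rangeRestrict (uhom F).rangeRestrict_surjective
  have hp : ¬ p ∣ Nat.card (SpecialLinearGroup (Fin 2) F ⧸ K) := by
    rw [← Subgroup.index, hK, hF]
    intro h
    have := (Nat.dvd_add_right (dvd_pow_self p (by omega : k ≠ 0))).1 h
    exact (Fact.out : p.Prime).one_lt.ne' (Nat.dvd_one.1 this)
  obtain ⟨y, hy⟩ := hU.nonempty_fixed_point_of_prime_not_dvd_card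
    (SpecialLinearGroup (Fin 2) F ⧸ K) hp
  obtain ⟨g, rfl⟩ := QuotientGroup.mk_surjective y
  have hg : ∀ x : F, g⁻¹ * uu x * g ∈ K := by
    intro x
    have h1 := hy ⟨uu x, ⟨Multiplicative.ofAdd x, rfl⟩⟩
    have h2 := QuotientGroup.eq.1 h1.symm
    simpa [mul_assoc, Subgroup.smul_def] using h2
  set K' := K.comap (MulAut.conj g⁻¹).toMonoidHom with hK'
  have memK' : ∀ x, x ∈ K' ↔ g⁻¹ * x * g ∈ K := by
    intro x; simp [hK', Subgroup.mem_comap]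
  have hi : K'.index = Nat.card F + 1 := by
    rw [← hK]
    exact K.index_comap_of_surjective (MulAut.conj g⁻¹).surjective
  have hle := le_bb K' (fun x => (memK' _).2 (hg x)) hi
  have hmul := Subgroup.relIndex_mul_index hle
  have hB := index_bb (F := F)
  have hr : K'.relIndex (bb F) = 1 := by
    rw [hi] at hmul
    have h0 : K'.relIndex (bb F) ≠ 0 := by intro h; rw [h] at hmul; omega
    by_contra h1
    have : 2 ≤ K'.relIndex (bb F) := by omega
    nlinarith
  have heq : K' = bb F := le_antisymm hle (Subgroup.relIndex_eq_one.1 hr)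
  refine ⟨g⁻¹, fun x => ?_⟩
  rw [← heq, memK']
  simp [mul_assoc]

/-- For a prime power `q = p ^ k ≥ 4`, any two subgroups of index
`q + 1` in `PSL(2, 𝔽_q)` are conjugate. -/
theorem statement10 (p k : ℕ) [Fact p.Prime] (hk : 1 ≤ k)
    (q : ℕ) (hq : q = p ^ k) (hq4 : 4 ≤ q)
    (K L : Subgroup (Matrix.ProjectiveSpecialLinearGroup (Fin 2) (GaloisField p k)))
    (hK : K.index = q + 1) (hL : L.index = q + 1) :
    ∃ g, L = K.map (MulAut.conj g).toMonoidHom := by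
  have hF : Nat.card (GaloisField p k) = p ^ k := GaloisField.card p k (by omega)
  have hFin : Finite (GaloisField p k) := inferInstance
  let π := QuotientGroup.mk' (Subgroup.center
    (Matrix.SpecialLinearGroup (Fin 2) (GaloisField p k)))
  have hπ : Function.Surjective π := QuotientGroup.mk'_surjective _
  obtain ⟨a, ha⟩ := conj_bb p k hk hF (K.comap π)
    (by rw [Subgroup.index_comap_of_surjective K hπ, hF, ← hq]; exact hK)
  obtain ⟨b, hb⟩ := conj_bb p k hk hF (L.comap π)
    (by rw [Subgroup.index_comap_of_surjective L hπ, hF, ← hq]; exact hL)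
  refine ⟨π (b * a⁻¹), ?_⟩
  ext y
  obtain ⟨x, rfl⟩ := hπ y
  have h1 := hb x
  have h2 := ha ((b * a⁻¹)⁻¹ * x * (b * a⁻¹))
  rw [show a⁻¹ * ((b * a⁻¹)⁻¹ * x * (b * a⁻¹)) * a = b⁻¹ * x * b by group, ← h1] at h2
  rw [Subgroup.mem_comap, Subgroup.mem_comap, map_mul, map_mul, map_inv] at h2
  rw [← h2, Subgroup.mem_map]
  constructor
  · intro h
    exact ⟨_, h, by simp [MulAut.conj_apply, mul_assoc]⟩
  · rintro ⟨z, hz, h⟩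
    rw [← h]
    simpa [MulAut.conj_apply, mul_assoc] using hz
end
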